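/- Let k be a field, e ≥ 3 an integer, and Q the localization of the polynomial ring k[X₁, …, X_e] at the maximal ideal (X₁, …, X_e). For every pair of integers m ≥ 3 and n ≥ 1 such that the format (1, m, m+n−1, n) is not Dynkin, i.e. such that 2(m+n−1) ≤ (m−2)(n+1), there exists a grade 3 perfect ideal I in Q of resolution format (1, m, m+n−1, n) that is not licci. -/

import Mathlib

/-- An ideal `I` in a commutative Noetherian local ring `Q` has **resolution format**
`(1, m, m+n-1, n)` if the minimal free resolution of `Q/I` over `Q` is
`0 → Q^n → Q^{m+n-1} → Q^m → Q`, i.e. there is an exact complex of free modules of the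
indicated ranks augmented by `Q → Q/I → 0`, which is minimal in the sense that each
differential maps into `𝔫` times the target (`𝔫` the maximal ideal).  Equivalently, the
`i`-th entry of the format is the Betti number `dim_k Tor_i^Q(Q/I, k)`. -/
def HasResolutionFormat {Q : Type*} [CommRing Q] [IsLocalRing Q]
    (I : Ideal Q) (m n : ℕ) : Prop :=
  ∃ (d1 : (Fin m → Q) →ₗ[Q] Q)
    (d2 : (Fin (m + n - 1) → Q) →ₗ[Q] (Fin m → Q))
    (d3 : (Fin n → Q) →ₗ[Q] (Fin (m + n - 1) → Q)),
    LinearMap.range d1 = I ∧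
    LinearMap.range d2 = LinearMap.ker d1 ∧
    LinearMap.range d3 = LinearMap.ker d2 ∧
    LinearMap.ker d3 = ⊥ ∧
    I ≤ IsLocalRing.maximalIdeal Q ∧
    LinearMap.range d2 ≤ (IsLocalRing.maximalIdeal Q) • (⊤ : Submodule Q (Fin m → Q)) ∧
    LinearMap.range d3 ≤ (IsLocalRing.maximalIdeal Q) • (⊤ : Submodule Q (Fin (m + n - 1) → Q))

/-- `I` is a grade `3` perfect ideal of resolution format `(1, m, m+n-1, n)`:
`I` contains a `Q`-regular sequence of length `3`, one has `m ≥ 3` and `n ≥ 1`, and the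
minimal free resolution of `Q/I` has the format `(1, m, m+n-1, n)` (in particular `Q/I`
has projective dimension `3` as a `Q`-module, since `n ≥ 1`). -/
def IsGrade3PerfectOfFormat {Q : Type*} [CommRing Q] [IsLocalRing Q]
    (I : Ideal Q) (m n : ℕ) : Prop :=
  (∃ x y z : Q, x ∈ I ∧ y ∈ I ∧ z ∈ I ∧ RingTheory.Sequence.IsRegular Q [x, y, z]) ∧
  3 ≤ m ∧ 1 ≤ n ∧ HasResolutionFormat I m n

/-- `J` is **directly linked** to `I` if there is a `Q`-regular sequence `x₁, x₂, x₃` of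
elements of `I` with `J = (x₁, x₂, x₃) : I`. -/
def DirectlyLinked {Q : Type*} [CommRing Q] (I J : Ideal Q) : Prop :=
  ∃ x y z : Q, x ∈ I ∧ y ∈ I ∧ z ∈ I ∧ RingTheory.Sequence.IsRegular Q [x, y, z] ∧
    J = Submodule.colon (Ideal.span {x, y, z}) I

/-- `J` is **linked** to `I` if there is a finite chain of ideals
`I = J₀, J₁, …, J_r = J` in which `J_{i+1}` is directly linked to `J_i` for every `i`. -/
def Linked {Q : Type*} [CommRing Q] (I J : Ideal Q) : Prop :=
  Relation.ReflTransGen (fun A B => DirectlyLinked A B) I J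

/-- `I` is **licci** if it is linked to an ideal generated by a `Q`-regular sequence of
length `3`, i.e. `I` is in the linkage class of a complete intersection ideal. -/
def Licci {Q : Type*} [CommRing Q] (I : Ideal Q) : Prop :=
  ∃ C : Ideal Q, Linked I C ∧
    ∃ x y z : Q, RingTheory.Sequence.IsRegular Q [x, y, z] ∧ C = Ideal.span {x, y, z}

/-!
After localizing at the prime `(x, y, z)`, every licci ideal `I` satisfies
`length Hom(I, Q ⧸ I) = 3 * length (Q ⧸ I)`: this holds for complete intersections, and it passes
across a link `J = α : I`, because `Q ⧸ α` is Gorenstein and therefore the first-order deformations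
of the flag `α ≤ I` correspond to those of `α ≤ J`. The ideal `(x, y, z)²` of format `(1, 6, 8, 3)`
and an ideal generated by five cubics, of format `(1, 5, 9, 5)`, violate the equality: their
syzygies have entries in `𝔪 = (x, y, z)` and `𝔪²`, which leaves room for too many homomorphisms
into `𝔪 ⧸ I` and `𝔪² ⧸ I`.

Write a format as `(1, p + 3, p + n + 2, n)`. For `p, n ≥ 1` it fails to be Dynkin exactly when
`(p - 1) * (n - 1) ≥ 4`, that is, when it dominates one of `(p, n) = (3, 3), (2, 5), (5, 2)`.
A direct link through three minimal generators exchanges `p` and `n`, and a basic double link,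
which is a composite of two links, raises `n` by one. Both can be iterated as long as the resolution
retains enough minimal generators whose Koszul relations are not minimal syzygies.
-/

section RegularTriple

open IsLocalRing RingTheory.Sequence

variable {Q : Type*} [CommRing Q] {a b c d : Q}

/-- The sequence `a, b, c` is weakly `Q`-regular, phrased with elements so that syzygies of
`a, b, c` can be manipulated by linear arithmetic. -/
structure RegularTriple (a b c : Q) : Prop where
  eq_zero_of_mul_eq_zero : ∀ r, a * r = 0 → r = 0
  exists_eq_mul : ∀ r s, b * r = a * s → ∃ t, r = a * t
  exists_eq_add : ∀ r s t, c * r = a * s + b * t → ∃ u v, r = a * u + b * v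

theorem regularTriple_iff_isWeaklyRegular :
    RegularTriple a b c ↔ IsWeaklyRegular Q [a, b, c] := by
  have ofList_pair : Ideal.ofList [a, b] = Ideal.span {a, b} := by simp [Ideal.span_insert]
  have mem_pair : ∀ r, r ∈ Ideal.ofList [a, b] ↔ ∃ u v, r = a * u + b * v := fun r => by
    simp only [ofList_pair, Ideal.mem_span_pair, mul_comm, eq_comm]
  constructor
  · rintro ⟨ha, hb, hc⟩
    refine ⟨fun i hi => ?_⟩
    rw [isSMulRegular_quotient_iff_mem_of_smul_mem]
    intro r hr
    simp only [List.length_cons, List.length_nil] at hi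
    interval_cases i
    · simpa using ha r (by simpa using hr)
    · simp only [List.take_succ_cons, List.take_zero, Ideal.ofList_singleton, smul_eq_mul,
        Ideal.mul_top, List.getElem_cons_succ, List.getElem_cons_zero,
        Ideal.mem_span_singleton] at hr ⊢
      obtain ⟨s, hs⟩ := hr
      exact hb r s hs
    · simp only [List.take_succ_cons, List.take_zero, smul_eq_mul, Ideal.mul_top,
        List.getElem_cons_succ, List.getElem_cons_zero, mem_pair] at hr ⊢
      obtain ⟨s, t, hst⟩ := hr
      exact hc r s t hst
  · rintro ⟨h⟩
    have ha := h 0 (by simp)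
    have hb := h 1 (by simp)
    have hc := h 2 (by simp)
    rw [isSMulRegular_quotient_iff_mem_of_smul_mem] at ha hb hc
    simp only [List.take_succ_cons, List.take_zero, Ideal.ofList_singleton, Ideal.ofList_nil,
      smul_eq_mul, Ideal.mul_top, List.getElem_cons_succ, List.getElem_cons_zero,
      Ideal.mem_span_singleton, mem_pair, Ideal.mem_bot] at ha hb hc
    exact ⟨ha, fun r s hrs => hb r ⟨s, hrs⟩, fun r s t hrst => hc r ⟨s, t, hrst⟩⟩

namespace RegularTriple

theorem eq_of_mul_eq_mul (h : RegularTriple a b c) {r s : Q} (hrs : a * r = a * s) : r = s :=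
  sub_eq_zero.1 (h.eq_zero_of_mul_eq_zero _ (by rw [mul_sub, hrs, sub_self]))

theorem exists_koszul_of_pair_syzygy (h : RegularTriple a b c) {u v : Q}
    (huv : a * u + b * v = 0) : ∃ t, u = -b * t ∧ v = a * t := by
  obtain ⟨t, rfl⟩ := h.exists_eq_mul v (-u) (by linear_combination huv)
  exact ⟨t, h.eq_of_mul_eq_mul (by linear_combination huv), rfl⟩

theorem exists_koszul_of_syzygy (h : RegularTriple a b c) {u v w : Q}
    (huvw : a * u + b * v + c * w = 0) :
    ∃ p q r, u = b * p + c * q ∧ v = -a * p + c * r ∧ w = -a * q - b * r := by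
  obtain ⟨q, r, hw⟩ := h.exists_eq_add w (-u) (-v) (by linear_combination huvw)
  obtain ⟨p, hp⟩ := h.exists_eq_mul (v + c * r) (-(u + c * q))
    (by rw [hw] at huvw; linear_combination huvw)
  refine ⟨-p, -q, -r, h.eq_of_mul_eq_mul ?_, by linear_combination hp, by linear_combination hw⟩
  rw [hw] at huvw
  linear_combination huvw - b * hp

theorem exists_koszul_of_secondSyzygy (h : RegularTriple a b c) {p q r : Q}
    (hpr : -a * p + c * r = 0) (hqr : -a * q - b * r = 0) :
    ∃ t, p = c * t ∧ q = -b * t ∧ r = a * t := by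
  obtain ⟨t, rfl⟩ := h.exists_eq_mul r (-q) (by linear_combination -hqr)
  exact ⟨t, h.eq_of_mul_eq_mul (by linear_combination -hpr),
    h.eq_of_mul_eq_mul (by linear_combination -hqr), rfl⟩

section Free

variable {G : Type*} [AddCommGroup G] [Module Q G] [Module.Free Q G] [Module.Finite Q G]

theorem exists_eq_smul (h : RegularTriple a b c) {v w : G} (hvw : b • v = a • w) :
    ∃ t : G, v = a • t := by
  let e := (Module.Free.chooseBasis Q G).equivFun
  have hvw' : b • e v = a • e w := by rw [← map_smul, hvw, map_smul]
  choose t ht using fun i => h.exists_eq_mul (e v i) (e w i) (congrFun hvw' i)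
  exact ⟨e.symm t, e.injective (funext fun i => by simpa using ht i)⟩

theorem eq_of_smul_eq_smul (h : RegularTriple a b c) {v w : G} (hvw : a • v = a • w) : v = w := by
  let e := (Module.Free.chooseBasis Q G).equivFun
  have hvw' : a • e v = a • e w := by rw [← map_smul, hvw, map_smul]
  exact e.injective (funext fun i => h.eq_of_mul_eq_mul (congrFun hvw' i))

theorem exists_koszul_of_smul_syzygy (h : RegularTriple a b c) {u v w : G}
    (huvw : a • u + b • v + c • w = 0) :
    ∃ p q r : G, u = b • p + c • q ∧ v = -a • p + c • r ∧ w = -a • q - b • r := by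
  let e := (Module.Free.chooseBasis Q G).equivFun
  have huvw' : a • e u + b • e v + c • e w = 0 := by
    simp only [← map_smul, ← map_add, huvw, map_zero]
  choose p q r hu hv hw using fun i =>
    h.exists_koszul_of_syzygy (u := e u i) (v := e v i) (w := e w i) (congrFun huvw' i)
  refine ⟨e.symm p, e.symm q, e.symm r, e.injective ?_, e.injective ?_, e.injective ?_⟩
  · exact funext fun i => by simpa using hu i
  · exact funext fun i => by simpa using hv i
  · exact funext fun i => by simpa using hw i

end Free

theorem mul_last (h : RegularTriple a b c) (h' : RegularTriple a b d) :
    RegularTriple a b (c * d) where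
  eq_zero_of_mul_eq_zero := h.eq_zero_of_mul_eq_zero
  exists_eq_mul := h.exists_eq_mul
  exists_eq_add r s t hrst := by
    obtain ⟨u, v, huv⟩ := h.exists_eq_add (d * r) s t (by linear_combination hrst)
    exact h'.exists_eq_add r u v huv

theorem pow_last (h : RegularTriple a b c) {n : ℕ} (hn : 1 ≤ n) : RegularTriple a b (c ^ n) := by
  induction n, hn using Nat.le_induction with
  | base => simpa using h
  | succ n _ ih => exact pow_succ c n ▸ ih.mul_last h

theorem add_mul_left (h : RegularTriple a b c) (s t : Q) :
    RegularTriple a (b + a * s) (c + a * t) where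
  eq_zero_of_mul_eq_zero := h.eq_zero_of_mul_eq_zero
  exists_eq_mul r s' hr := h.exists_eq_mul r (s' - s * r) (by linear_combination hr)
  exists_eq_add r s' t' hr := by
    obtain ⟨u, v, rfl⟩ := h.exists_eq_add r (s' + s * t' - t * r) t' (by linear_combination hr)
    exact ⟨u - s * v, v, by ring⟩

end RegularTriple

section IsLocalRing

variable [IsLocalRing Q]

theorem regularTriple_iff_isRegular (ha : a ∈ maximalIdeal Q) (hb : b ∈ maximalIdeal Q)
    (hc : c ∈ maximalIdeal Q) : RegularTriple a b c ↔ IsRegular Q [a, b, c] := by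
  rw [regularTriple_iff_isWeaklyRegular, isRegular_iff_isWeaklyRegular_of_subset_maximalIdeal]
  simpa using ⟨ha, hb, hc⟩

theorem mem_maximalIdeal_of_isRegular {rs : List Q} (h : IsRegular Q rs) {x : Q} (hx : x ∈ rs) :
    x ∈ maximalIdeal Q := by
  by_contra hu
  have htop : Ideal.ofList rs = ⊤ :=
    Ideal.eq_top_of_isUnit_mem _ (Ideal.subset_span hx) (by simpa using hu)
  exact h.top_ne_smul (by simp [htop])

namespace RegularTriple

variable [IsNoetherianRing Q]

theorem rotate (h : RegularTriple a b c) (ha : a ∈ maximalIdeal Q) (hb : b ∈ maximalIdeal Q)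
    (hc : c ∈ maximalIdeal Q) : RegularTriple b c a :=
  regularTriple_iff_isWeaklyRegular.2 <| (isRegular_of_perm
    ((regularTriple_iff_isRegular ha hb hc).1 h)
    (List.perm_append_comm (l₁ := [a]) (l₂ := [b, c]))).toIsWeaklyRegular

theorem pow (h : RegularTriple a b c) (ha : a ∈ maximalIdeal Q) (hb : b ∈ maximalIdeal Q)
    (hc : c ∈ maximalIdeal Q) {i j l : ℕ} (hi : 1 ≤ i) (hj : 1 ≤ j) (hl : 1 ≤ l) :
    RegularTriple (a ^ i) (b ^ j) (c ^ l) := by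
  have hai := Ideal.pow_mem_of_mem _ ha i hi
  have hbj := Ideal.pow_mem_of_mem _ hb j hj
  have hcl := Ideal.pow_mem_of_mem _ hc l hl
  exact ((((h.pow_last hl).rotate ha hb hcl).pow_last hi).rotate hb hcl hai
    |>.pow_last hj).rotate hcl hai hbj

theorem sq_add_mul (h : RegularTriple a b c) (ha : a ∈ maximalIdeal Q) (hb : b ∈ maximalIdeal Q)
    (hc : c ∈ maximalIdeal Q) (s t : Q) :
    RegularTriple (a ^ 2 + c * s) (b ^ 2 + c * t) c := by
  have hpow : RegularTriple c (a ^ 2) (b ^ 2) := by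
    simpa using ((h.rotate ha hb hc).rotate hb hc ha).pow hc ha hb le_rfl one_le_two one_le_two
  exact (hpow.add_mul_left s t).rotate hc
    (add_mem (Ideal.pow_mem_of_mem _ ha _ two_pos) (Ideal.mul_mem_right _ _ hc))
    (add_mem (Ideal.pow_mem_of_mem _ hb _ two_pos) (Ideal.mul_mem_right _ _ hc))

end RegularTriple

end IsLocalRing

end RegularTriple

section DualExact

variable {Q : Type*} [CommRing Q]

theorem exists_lift_of_forall_mem_range {P M N : Type*} [AddCommGroup P] [Module Q P]
    [AddCommGroup M] [Module Q M] [AddCommGroup N] [Module Q N] [Module.Projective Q P]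
    (f : P →ₗ[Q] N) (g : M →ₗ[Q] N) (hfg : ∀ p, f p ∈ LinearMap.range g) :
    ∃ l : P →ₗ[Q] M, ∀ p, g (l p) = f p := by
  obtain ⟨l, hl⟩ := Module.projective_lifting_property g.rangeRestrict
    (f.codRestrict _ hfg) g.surjective_rangeRestrict
  exact ⟨l, fun p => congrArg Subtype.val (LinearMap.congr_fun hl p)⟩

variable {G₀ G₁ G₂ G₃ : Type*} [AddCommGroup G₀] [Module Q G₀] [AddCommGroup G₁] [Module Q G₁]
  [AddCommGroup G₂] [Module Q G₂] [AddCommGroup G₃] [Module Q G₃]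
  {d₁ : G₁ →ₗ[Q] G₀} {d₂ : G₂ →ₗ[Q] G₁} {d₃ : G₃ →ₗ[Q] G₂} {x y z : Q}

theorem injective_dualMap_of_smul_mem_range (hx₀ : ∀ r, x * r = 0 → r = 0)
    (hx : ∀ g : G₀, x • g ∈ LinearMap.range d₁) : Function.Injective d₁.dualMap := by
  rw [injective_iff_map_eq_zero]
  intro σ hσ
  ext g
  obtain ⟨v, hv⟩ := hx g
  apply hx₀
  rw [← smul_eq_mul, ← map_smul, ← hv]
  exact LinearMap.congr_fun hσ v

variable [Module.Projective Q G₀] [Module.Projective Q G₁]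

theorem exists_partial_homotopy (h₁ : Function.Exact d₂ d₁)
    (hx : ∀ g : G₀, x • g ∈ LinearMap.range d₁) :
    ∃ (s₀ : G₀ →ₗ[Q] G₁) (s₁ : G₁ →ₗ[Q] G₂),
      (∀ g, d₁ (s₀ g) = x • g) ∧ ∀ g, d₂ (s₁ g) = x • g - s₀ (d₁ g) := by
  obtain ⟨s₀, hs₀⟩ := exists_lift_of_forall_mem_range (x • LinearMap.id) d₁ hx
  obtain ⟨s₁, hs₁⟩ := exists_lift_of_forall_mem_range (x • LinearMap.id - s₀ ∘ₗ d₁) d₂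
    fun g => (h₁ _).1 (by simp [hs₀])
  exact ⟨s₀, s₁, hs₀, hs₁⟩

theorem exists_homotopy [Module.Projective Q G₂] (h₁ : Function.Exact d₂ d₁)
    (h₂ : Function.Exact d₃ d₂) (h₃ : Function.Injective d₃)
    (hx : ∀ g : G₀, x • g ∈ LinearMap.range d₁) :
    ∃ (s₁ : G₁ →ₗ[Q] G₂) (s₂ : G₂ →ₗ[Q] G₃),
      (∀ g, d₃ (s₂ g) = x • g - s₁ (d₂ g)) ∧ ∀ g, s₂ (d₃ g) = x • g := by
  obtain ⟨s₀, s₁, -, hs₁⟩ := exists_partial_homotopy h₁ hx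
  obtain ⟨s₂, hs₂⟩ := exists_lift_of_forall_mem_range (x • LinearMap.id - s₁ ∘ₗ d₂) d₃
    fun g => (h₂ _).1 (by simp [hs₁, h₁.apply_apply_eq_zero])
  exact ⟨s₁, s₂, hs₂, fun g => h₃ (by simp [hs₂, h₂.apply_apply_eq_zero])⟩

theorem exact_dualMap₁ (h₁ : Function.Exact d₂ d₁) (hreg : RegularTriple x y z)
    (hx : ∀ g : G₀, x • g ∈ LinearMap.range d₁) (hy : ∀ g : G₀, y • g ∈ LinearMap.range d₁) :
    Function.Exact d₁.dualMap d₂.dualMap := by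
  refine fun η => ⟨fun hη => ?_, ?_⟩
  · obtain ⟨s₀, s₁, -, hs₁⟩ := exists_partial_homotopy h₁ hx
    have eta_s₀ : ∀ v, η (s₀ (d₁ v)) = x * η v := fun v => by
      have hηd : η (d₂ (s₁ v)) = 0 := LinearMap.congr_fun hη _
      rw [hs₁, map_sub, map_smul, smul_eq_mul, sub_eq_zero] at hηd
      exact hηd.symm
    obtain ⟨ρ, hρ⟩ := exists_lift_of_forall_mem_range (η ∘ₗ s₀) (LinearMap.mulLeft Q x) fun g => by
      obtain ⟨v, hv⟩ := hy g
      obtain ⟨t, ht⟩ := hreg.exists_eq_mul (η (s₀ g)) (η v) (by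
        rw [← eta_s₀, hv, map_smul, map_smul, smul_eq_mul])
      exact ⟨t, ht.symm⟩
    exact ⟨ρ, LinearMap.ext fun v => hreg.eq_of_mul_eq_mul ((hρ (d₁ v)).trans (eta_s₀ v))⟩
  · rintro ⟨ρ, rfl⟩
    ext v
    simp [h₁.apply_apply_eq_zero]

-- Exactness of the dual complex reduced modulo `x`.
theorem exists_eq_comp_add_mul_of_dvd_comp (h₁ : Function.Exact d₂ d₁)
    (hreg : RegularTriple x y z) (hy : ∀ g : G₀, y • g ∈ LinearMap.range d₁)
    (hz : ∀ g : G₀, z • g ∈ LinearMap.range d₁) (η : G₁ →ₗ[Q] Q) (hη : ∀ v, x ∣ η (d₂ v)) :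
    ∃ ρ : G₀ →ₗ[Q] Q, ∀ v, ∃ t, η v = ρ (d₁ v) + x * t := by
  obtain ⟨s₀, s₁, -, hs₁⟩ := exists_partial_homotopy h₁ hy
  have eta_s₀ : ∀ v, ∃ t, η (s₀ (d₁ v)) = y * η v + x * t := fun v => by
    obtain ⟨t, ht⟩ := hη (s₁ v)
    rw [hs₁, map_sub, map_smul, smul_eq_mul] at ht
    exact ⟨-t, by linear_combination -ht⟩
  obtain ⟨τ, hτ⟩ := exists_lift_of_forall_mem_range (η ∘ₗ s₀)
    ((LinearMap.mulLeft Q x).coprod (LinearMap.mulLeft Q y)) fun g => by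
      obtain ⟨v, hv⟩ := hz g
      obtain ⟨t, ht⟩ := eta_s₀ v
      obtain ⟨p, q, hpq⟩ := hreg.exists_eq_add (η (s₀ g)) t (η v) (by
        rw [hv, map_smul, map_smul, smul_eq_mul] at ht
        rw [ht, add_comm])
      exact ⟨(p, q), hpq.symm⟩
  refine ⟨LinearMap.snd Q Q Q ∘ₗ τ, fun v => ?_⟩
  obtain ⟨t, ht⟩ := eta_s₀ v
  have hτv : x * (τ (d₁ v)).1 + y * (τ (d₁ v)).2 = y * η v + x * t := (hτ (d₁ v)).trans ht
  obtain ⟨s, hs⟩ := hreg.exists_eq_mul (η v - (τ (d₁ v)).2) ((τ (d₁ v)).1 - t)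
    (by linear_combination -hτv)
  exact ⟨s, by simpa using eq_add_of_sub_eq' hs⟩

theorem exact_dualMap₂ [Module.Projective Q G₂] (h₁ : Function.Exact d₂ d₁)
    (h₂ : Function.Exact d₃ d₂) (h₃ : Function.Injective d₃) (hreg : RegularTriple x y z)
    (hx : ∀ g : G₀, x • g ∈ LinearMap.range d₁) (hy : ∀ g : G₀, y • g ∈ LinearMap.range d₁)
    (hz : ∀ g : G₀, z • g ∈ LinearMap.range d₁) :
    Function.Exact d₂.dualMap d₃.dualMap := by
  refine fun η => ⟨fun hη => ?_, ?_⟩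
  · obtain ⟨s₁, s₂, hs₂, -⟩ := exists_homotopy h₁ h₂ h₃ hx
    have eta_s₁ : ∀ v, η (s₁ (d₂ v)) = x * η v := fun v => by
      have hηd : η (d₃ (s₂ v)) = 0 := LinearMap.congr_fun hη _
      rw [hs₂, map_sub, map_smul, smul_eq_mul, sub_eq_zero] at hηd
      exact hηd.symm
    obtain ⟨ρ, hρ⟩ := exists_eq_comp_add_mul_of_dvd_comp h₁ hreg hy hz (η ∘ₗ s₁)
      fun v => ⟨_, eta_s₁ v⟩
    obtain ⟨τ, hτ⟩ := exists_lift_of_forall_mem_range (η ∘ₗ s₁ - ρ ∘ₗ d₁) (LinearMap.mulLeft Q x)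
      fun p => by
        obtain ⟨t, ht⟩ := hρ p
        exact ⟨t, (sub_eq_of_eq_add' ht).symm⟩
    refine ⟨τ, LinearMap.ext fun v => hreg.eq_of_mul_eq_mul ((hτ (d₂ v)).trans ?_)⟩
    simp [eta_s₁, h₁.apply_apply_eq_zero]
  · rintro ⟨ρ, rfl⟩
    ext v
    simp [h₂.apply_apply_eq_zero]

end DualExact

section MinimalResolution

open IsLocalRing Module

section SmulTop

variable {Q : Type*} [CommRing Q] {J : Ideal Q} {G H : Type*} [AddCommGroup G] [Module Q G]
  [AddCommGroup H] [Module Q H]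

theorem map_mem_smul_top (f : G →ₗ[Q] H) {v : G} (hv : v ∈ J • (⊤ : Submodule Q G)) :
    f v ∈ J • (⊤ : Submodule Q H) :=
  Submodule.smul_mono le_rfl le_top (Submodule.map_smul'' J ⊤ f ▸ Submodule.mem_map_of_mem hv)

theorem prodMk_mem_smul_top {v : G} {w : H} (hv : v ∈ J • (⊤ : Submodule Q G))
    (hw : w ∈ J • (⊤ : Submodule Q H)) : (v, w) ∈ J • (⊤ : Submodule Q (G × H)) := by
  simpa using add_mem (map_mem_smul_top (LinearMap.inl Q G H) hv)
    (map_mem_smul_top (LinearMap.inr Q G H) hw)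

theorem mem_smul_top_self {r : Q} : r ∈ J • (⊤ : Submodule Q Q) ↔ r ∈ J := by
  rw [smul_eq_mul, Ideal.mul_top]

theorem dual_mem_smul_top [Module.Free Q G] [Module.Finite Q G] (φ : Dual Q G)
    (hφ : ∀ v, φ v ∈ J) : φ ∈ J • (⊤ : Submodule Q (Dual Q G)) := by
  rw [← (Free.chooseBasis Q G).sum_dual_apply_smul_coord φ]
  exact sum_mem fun i _ => Submodule.smul_mem_smul (hφ _) Submodule.mem_top

end SmulTop

section Colon

variable {Q : Type*} [CommRing Q] {I : Ideal Q} {a b c r : Q}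

theorem mem_span_triple_iff :
    r ∈ Ideal.span {a, b, c} ↔ ∃ s t u, r = a * s + b * t + c * u := by
  simp only [Ideal.span, Submodule.mem_span_triple, smul_eq_mul, mul_comm, eq_comm]

theorem mem_colon_span_triple : r ∈ Submodule.colon (Ideal.span {a, b, c}) I ↔
    ∀ s ∈ I, ∃ t u v, r * s = a * t + b * u + c * v := by
  simp only [Submodule.mem_colon, smul_eq_mul, mem_span_triple_iff, SetLike.mem_coe]

theorem span_triple_le_colon :
    Ideal.span {a, b, c} ≤ Submodule.colon (Ideal.span {a, b, c}) I :=
  fun _ hr => Submodule.mem_colon.2 fun _ _ => Ideal.mul_mem_right _ _ hr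

theorem first_mem_colon : a ∈ Submodule.colon (Ideal.span {a, b, c}) I :=
  span_triple_le_colon (Ideal.subset_span (by simp))

theorem second_mem_colon : b ∈ Submodule.colon (Ideal.span {a, b, c}) I :=
  span_triple_le_colon (Ideal.subset_span (by simp))

theorem third_mem_colon : c ∈ Submodule.colon (Ideal.span {a, b, c}) I :=
  span_triple_le_colon (Ideal.subset_span (by simp))

end Colon

universe u

variable {Q : Type u} [CommRing Q] [IsLocalRing Q]

/-- A minimal resolution `0 → G₃ → G₂ → G₁ → Q` of `Q ⧸ I`; the modules `Gᵢ` are meant to be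
finite free, and minimality says that every differential is zero modulo the maximal ideal. -/
structure MinimalResolution (I : Ideal Q) (G₁ G₂ G₃ : Type u) [AddCommGroup G₁] [Module Q G₁]
    [AddCommGroup G₂] [Module Q G₂] [AddCommGroup G₃] [Module Q G₃] where
  d₁ : G₁ →ₗ[Q] Q
  d₂ : G₂ →ₗ[Q] G₁
  d₃ : G₃ →ₗ[Q] G₂
  range_d₁ : LinearMap.range d₁ = I
  exact₁ : Function.Exact d₂ d₁
  exact₂ : Function.Exact d₃ d₂
  injective_d₃ : Function.Injective d₃
  le_maximalIdeal : I ≤ maximalIdeal Q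
  d₂_mem : ∀ w, d₂ w ∈ maximalIdeal Q • (⊤ : Submodule Q G₁)
  d₃_mem : ∀ w, d₃ w ∈ maximalIdeal Q • (⊤ : Submodule Q G₂)

namespace MinimalResolution

variable {I : Ideal Q} {G₁ G₂ G₃ : Type u} [AddCommGroup G₁] [Module Q G₁]
  [AddCommGroup G₂] [Module Q G₂] [AddCommGroup G₃] [Module Q G₃]
  (R : MinimalResolution I G₁ G₂ G₃)

theorem d₁_d₂ (w : G₂) : R.d₁ (R.d₂ w) = 0 := R.exact₁.apply_apply_eq_zero w

theorem d₂_d₃ (w : G₃) : R.d₂ (R.d₃ w) = 0 := R.exact₂.apply_apply_eq_zero w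

theorem exists_d₂_eq {v : G₁} (hv : R.d₁ v = 0) : ∃ w, R.d₂ w = v := (R.exact₁ v).1 hv

theorem exists_d₃_eq {v : G₂} (hv : R.d₂ v = 0) : ∃ w, R.d₃ w = v := (R.exact₂ v).1 hv

theorem mem_iff {r : Q} : r ∈ I ↔ ∃ v, R.d₁ v = r :=
  (SetLike.ext_iff.1 R.range_d₁ r).symm

theorem d₁_mem (v : G₁) : R.d₁ v ∈ I := R.mem_iff.2 ⟨v, rfl⟩

theorem d₁_mem_maximalIdeal (v : G₁) : R.d₁ v ∈ maximalIdeal Q := R.le_maximalIdeal (R.d₁_mem v)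

theorem smul_mem_range_d₁ {x : Q} (hx : x ∈ I) (g : Q) : x • g ∈ LinearMap.range R.d₁ :=
  R.mem_iff.1 (I.mul_mem_right g hx)

/-- `κ` lifts the Koszul relation between the generators `d₁ v` and `d₁ w`. -/
def IsKoszulLift (v w : G₁) (κ : G₂) : Prop := R.d₂ κ = R.d₁ w • v - R.d₁ v • w

theorem exists_isKoszulLift (v w : G₁) : ∃ κ, R.IsKoszulLift v w κ :=
  R.exists_d₂_eq (by simp [mul_comm])

/-- The Koszul relation between `d₁ v` and `d₁ w` has a lift in `𝔪 G₂`, that is, it is not a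
minimal syzygy. -/
def HasMinimalKoszulLift (v w : G₁) : Prop :=
  ∃ κ ∈ maximalIdeal Q • (⊤ : Submodule Q G₂), R.IsKoszulLift v w κ

section Reflexivity

variable {R} {x y z : G₁} {κxy κyz κzx : G₂}

theorem exists_d₃_eq_koszul (hxy : R.IsKoszulLift x y κxy) (hyz : R.IsKoszulLift y z κyz)
    (hzx : R.IsKoszulLift z x κzx) :
    ∃ w, R.d₃ w = R.d₁ x • κyz + R.d₁ y • κzx + R.d₁ z • κxy := by
  rw [IsKoszulLift] at hxy hyz hzx
  refine R.exists_d₃_eq ?_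
  simp only [map_add, map_smul, hxy, hyz, hzx]
  module

theorem dual_apply_mem_colon [Projective Q G₁] [Projective Q G₂] {a b c : Q} {w : G₃}
    (hw : R.d₃ w = a • κyz + b • κzx + c • κxy) (φ : Dual Q G₃) :
    φ w ∈ Submodule.colon (Ideal.span {a, b, c}) I := by
  rw [mem_colon_span_triple]
  intro s hs
  obtain ⟨-, s₂, -, hs₂⟩ :=
    exists_homotopy R.exact₁ R.exact₂ R.injective_d₃ (R.smul_mem_range_d₁ hs)
  have hφ := congrArg φ (hs₂ w)
  simp only [hw, map_add, map_smul, smul_eq_mul] at hφ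
  exact ⟨φ (s₂ κyz), φ (s₂ κzx), φ (s₂ κxy), by linear_combination -hφ⟩

variable [Module.Free Q G₁] [Module.Finite Q G₁] [Module.Free Q G₂] [Module.Finite Q G₂]

theorem mem_of_smul_koszul_eq (hr : RegularTriple (R.d₁ x) (R.d₁ y) (R.d₁ z))
    (hxy : R.IsKoszulLift x y κxy) {r : Q} {t u v : G₃}
    (h : r • (R.d₁ x • κyz + R.d₁ y • κzx + R.d₁ z • κxy) =
      R.d₃ (R.d₁ x • t + R.d₁ y • u + R.d₁ z • v)) : r ∈ I := by
  simp only [map_add, map_smul] at h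
  rw [IsKoszulLift] at hxy
  obtain ⟨-, q, s, -, -, hqs⟩ := hr.exists_koszul_of_smul_syzygy
    (u := r • κyz - R.d₃ t) (v := r • κzx - R.d₃ u) (w := r • κxy - R.d₃ v)
    (by linear_combination (norm := module) h)
  have hd₂ := congrArg R.d₂ hqs
  simp only [map_sub, map_smul, R.d₂_d₃, hxy, sub_zero] at hd₂
  obtain ⟨g, hg⟩ := hr.exists_eq_smul (v := r • x + R.d₂ s) (w := r • y - R.d₂ q)
    (by linear_combination (norm := module) hd₂)
  have hd₁ := congrArg R.d₁ hg
  simp only [map_add, map_smul, R.d₁_d₂, add_zero, smul_eq_mul] at hd₁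
  exact R.mem_iff.2 ⟨g, hr.eq_of_mul_eq_mul (by linear_combination -hd₁)⟩

theorem colon_colon_le [Module.Free Q G₃] [Module.Finite Q G₃]
    (hr : RegularTriple (R.d₁ x) (R.d₁ y) (R.d₁ z)) :
    Submodule.colon (Ideal.span {R.d₁ x, R.d₁ y, R.d₁ z})
      (Submodule.colon (Ideal.span {R.d₁ x, R.d₁ y, R.d₁ z}) I : Ideal Q) ≤ I := by
  intro r hrI
  obtain ⟨κxy, hxy⟩ := R.exists_isKoszulLift x y
  obtain ⟨κyz, hyz⟩ := R.exists_isKoszulLift y z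
  obtain ⟨κzx, hzx⟩ := R.exists_isKoszulLift z x
  obtain ⟨w, hw⟩ := exists_d₃_eq_koszul hxy hyz hzx
  let b := Free.chooseBasis Q G₃
  choose t u v htuv using fun i =>
    mem_colon_span_triple.1 hrI _ (dual_apply_mem_colon hw (b.coord i))
  refine mem_of_smul_koszul_eq hr hxy (κyz := κyz) (κzx := κzx) (t := b.equivFun.symm t)
    (u := b.equivFun.symm u) (v := b.equivFun.symm v) ?_
  rw [← hw, ← map_smul]
  congr 1
  refine b.equivFun.injective (funext fun i => ?_)
  simp only [map_smul, map_add, LinearEquiv.apply_symm_apply]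
  exact htuv i

end Reflexivity

section Congr

variable {H₁ H₂ H₃ : Type u} [AddCommGroup H₁] [Module Q H₁] [AddCommGroup H₂] [Module Q H₂]
  [AddCommGroup H₃] [Module Q H₃]

/-- Transport of a resolution along changes of bases. -/
def congr (e₁ : G₁ ≃ₗ[Q] H₁) (e₂ : G₂ ≃ₗ[Q] H₂) (e₃ : G₃ ≃ₗ[Q] H₃) :
    MinimalResolution I H₁ H₂ H₃ where
  d₁ := R.d₁ ∘ₗ e₁.symm
  d₂ := e₁ ∘ₗ R.d₂ ∘ₗ e₂.symm
  d₃ := e₂ ∘ₗ R.d₃ ∘ₗ e₃.symm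
  range_d₁ := by rw [LinearMap.range_comp_of_range_eq_top _ e₁.symm.range, R.range_d₁]
  exact₁ := R.exact₁.of_ladder_linearEquiv_of_exact (e₁ := e₂) (e₂ := e₁)
    (e₃ := .refl Q Q) (by ext; simp) (by ext; simp)
  exact₂ := R.exact₂.of_ladder_linearEquiv_of_exact (e₁ := e₃) (e₂ := e₂) (e₃ := e₁)
    (by ext; simp) (by ext; simp)
  injective_d₃ := by simpa using R.injective_d₃
  le_maximalIdeal := R.le_maximalIdeal
  d₂_mem _ := map_mem_smul_top e₁.toLinearMap (R.d₂_mem _)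
  d₃_mem _ := map_mem_smul_top e₂.toLinearMap (R.d₃_mem _)

theorem congr_d₁_apply (e₁ : G₁ ≃ₗ[Q] H₁) (e₂ : G₂ ≃ₗ[Q] H₂) (e₃ : G₃ ≃ₗ[Q] H₃) (v : H₁) :
    (R.congr e₁ e₂ e₃).d₁ v = R.d₁ (e₁.symm v) := rfl

variable {R} {e₁ : G₁ ≃ₗ[Q] H₁} {e₂ : G₂ ≃ₗ[Q] H₂} {e₃ : G₃ ≃ₗ[Q] H₃}

theorem HasMinimalKoszulLift.congr {v w : H₁}
    (h : R.HasMinimalKoszulLift (e₁.symm v) (e₁.symm w)) :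
    (R.congr e₁ e₂ e₃).HasMinimalKoszulLift v w := by
  obtain ⟨κ, hκ, hlift⟩ := h
  rw [IsKoszulLift] at hlift
  exact ⟨e₂ κ, map_mem_smul_top e₂.toLinearMap hκ, by
    simp [IsKoszulLift, MinimalResolution.congr, hlift]⟩

end Congr

end MinimalResolution

end MinimalResolution

section DoubleLink

open IsLocalRing Module

/-- The basic double link `h I + (a, b)` of `I`. -/
def basicDoubleLink {Q : Type*} [CommRing Q] (I : Ideal Q) (a b h : Q) : Ideal Q :=
  Ideal.span {h} * I ⊔ Ideal.span {a, b}

theorem mem_basicDoubleLink {Q : Type*} [CommRing Q] {I : Ideal Q} {a b h r : Q} :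
    r ∈ basicDoubleLink I a b h ↔ ∃ s ∈ I, ∃ t u, r = h * s + a * t + b * u := by
  simp only [basicDoubleLink, Submodule.mem_sup, Ideal.mem_span_singleton_mul,
    Ideal.mem_span_pair]
  constructor
  · rintro ⟨_, ⟨s, hs, rfl⟩, _, ⟨t, u, rfl⟩, rfl⟩
    exact ⟨s, hs, t, u, by ring⟩
  · rintro ⟨s, hs, t, u, rfl⟩
    exact ⟨h * s, ⟨s, hs, rfl⟩, a * t + b * u, ⟨t, u, by ring⟩, by ring⟩

universe u

variable {Q : Type u} [CommRing Q] [IsLocalRing Q] {I : Ideal Q}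

namespace MinimalResolution

section Linked

variable {G₁ G₂ G₃ : Type u} [AddCommGroup G₁] [Module Q G₁] [AddCommGroup G₂] [Module Q G₂]
  [AddCommGroup G₃] [Module Q G₃]

theorem directlyLinked_colon (R : MinimalResolution I G₁ G₂ G₃) {x y z : G₁}
    (hr : RegularTriple (R.d₁ x) (R.d₁ y) (R.d₁ z)) :
    DirectlyLinked I (Submodule.colon (Ideal.span {R.d₁ x, R.d₁ y, R.d₁ z}) I) :=
  ⟨_, _, _, R.d₁_mem x, R.d₁_mem y, R.d₁_mem z, (regularTriple_iff_isRegular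
    (R.d₁_mem_maximalIdeal x) (R.d₁_mem_maximalIdeal y) (R.d₁_mem_maximalIdeal z)).1 hr, rfl⟩

variable [Module.Free Q G₁] [Module.Finite Q G₁] [Module.Free Q G₂] [Module.Finite Q G₂]
  [Module.Free Q G₃] [Module.Finite Q G₃]

theorem colon_colon_eq_basicDoubleLink (R : MinimalResolution I G₁ G₂ G₃) {x y z : G₁} {h : Q}
    (hr : RegularTriple (R.d₁ x) (R.d₁ y) h)
    (hrz : RegularTriple (R.d₁ x) (R.d₁ y) (R.d₁ z)) :
    Submodule.colon (Ideal.span {R.d₁ x, R.d₁ y, h * R.d₁ z})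
      (Submodule.colon (Ideal.span {R.d₁ x, R.d₁ y, R.d₁ z}) I : Ideal Q) =
      basicDoubleLink I (R.d₁ x) (R.d₁ y) h := by
  ext r
  rw [mem_colon_span_triple, mem_basicDoubleLink]
  constructor
  · intro hrJ
    obtain ⟨p, q, d, hz⟩ := hrJ (R.d₁ z) third_mem_colon
    obtain ⟨u, v, huv⟩ := hrz.exists_eq_add (r - h * d) p q (by linear_combination hz)
    refine ⟨d, colon_colon_le hrz (mem_colon_span_triple.2 fun s hs => ?_), u, v,
      by linear_combination huv⟩
    obtain ⟨p', q', d', hs'⟩ := hrJ s hs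
    obtain ⟨u', v', huv'⟩ := hr.exists_eq_add (d * s - R.d₁ z * d') (p' - u * s) (q' - v * s)
      (by linear_combination hs' - s * huv)
    exact ⟨u', v', d', by linear_combination huv'⟩
  · rintro ⟨s, hs, t, u, rfl⟩ g hg
    obtain ⟨p, q, d, hgs⟩ := mem_colon_span_triple.1 hg s hs
    exact ⟨h * p + t * g, h * q + u * g, d, by linear_combination h * hgs⟩

theorem linked_basicDoubleLink (R : MinimalResolution I G₁ G₂ G₃) {x y z : G₁} {h : Q}
    (hh : h ∈ maximalIdeal Q) (hr : RegularTriple (R.d₁ x) (R.d₁ y) h)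
    (hrz : RegularTriple (R.d₁ x) (R.d₁ y) (R.d₁ z)) :
    Linked I (basicDoubleLink I (R.d₁ x) (R.d₁ y) h) := by
  refine (Relation.ReflTransGen.single (R.directlyLinked_colon hrz)).tail
    ⟨R.d₁ x, R.d₁ y, h * R.d₁ z, first_mem_colon, second_mem_colon,
      Ideal.mul_mem_left _ _ third_mem_colon, ?_, (R.colon_colon_eq_basicDoubleLink hr hrz).symm⟩
  exact (regularTriple_iff_isRegular (R.d₁_mem_maximalIdeal x) (R.d₁_mem_maximalIdeal y)
    (Ideal.mul_mem_right _ _ hh)).1 (hr.mul_last hrz)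

end Linked

section Resolution

variable {N G₂ G₃ : Type u} [AddCommGroup N] [Module Q N] [AddCommGroup G₂] [Module Q G₂]
  [AddCommGroup G₃] [Module Q G₃] (R : MinimalResolution I (Q × Q × N) G₂ G₃) (h : Q)

theorem d₁_prod_apply (r s : Q) (v : N) :
    R.d₁ (r, s, v) = R.d₁ (1, 0, 0) * r + R.d₁ (0, 1, 0) * s + R.d₁ (0, 0, v) := by
  have hsplit : ((r, s, v) : Q × Q × N) = r • (1, 0, 0) + s • (0, 1, 0) + (0, 0, v) := by simp
  rw [hsplit, map_add, map_add, map_smul, map_smul, smul_eq_mul, smul_eq_mul]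
  ring

/-- The first differential `(r, s, v) ↦ a r + b s + h d₁ v` of `R.doubleLink`. -/
def doubleLinkD₁ : Q × Q × N →ₗ[Q] Q :=
  R.d₁ ∘ₗ LinearMap.id.prodMap (LinearMap.id.prodMap (h • LinearMap.id))

/-- The second differential of `R.doubleLink`: that of `R` with its first two coordinates
multiplied by `h`, and the Koszul relation `(b, -a, 0)` as an additional column. -/
def doubleLinkD₂ : G₂ × Q →ₗ[Q] Q × Q × N :=
  LinearMap.coprod
    ((h • LinearMap.id).prodMap ((h • LinearMap.id).prodMap LinearMap.id) ∘ₗ R.d₂)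
    (LinearMap.toSpanSingleton Q _ (R.d₁ (0, 1, 0), -R.d₁ (1, 0, 0), 0))

/-- The third differential `(v, r) ↦ (d₃ v + r κ, -h r)` of `R.doubleLink`. -/
def doubleLinkD₃ (κ : G₂) : G₃ × Q →ₗ[Q] G₂ × Q :=
  (R.d₃.coprod (LinearMap.toSpanSingleton Q _ κ)).prod (-h • LinearMap.snd Q G₃ Q)

@[simp]
theorem doubleLinkD₁_apply (r s : Q) (v : N) : R.doubleLinkD₁ h (r, s, v) =
    R.d₁ (1, 0, 0) * r + R.d₁ (0, 1, 0) * s + h * R.d₁ (0, 0, v) := by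
  have hv : ((0, 0, h • v) : Q × Q × N) = h • (0, 0, v) := by simp
  rw [← smul_eq_mul h, ← map_smul, ← hv, ← R.d₁_prod_apply]
  rfl

@[simp]
theorem doubleLinkD₂_apply (w : G₂) (t : Q) : R.doubleLinkD₂ h (w, t) =
    (h * (R.d₂ w).1 + t * R.d₁ (0, 1, 0), h * (R.d₂ w).2.1 - t * R.d₁ (1, 0, 0),
      (R.d₂ w).2.2) := by
  simp [doubleLinkD₂, sub_eq_add_neg]

@[simp]
theorem doubleLinkD₃_apply (κ : G₂) (v : G₃) (r : Q) :
    R.doubleLinkD₃ h κ (v, r) = (R.d₃ v + r • κ, -h * r) := by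
  simp [doubleLinkD₃]

variable {R h} {κ : G₂}

theorem range_doubleLinkD₁ : LinearMap.range (R.doubleLinkD₁ h) =
    basicDoubleLink I (R.d₁ (1, 0, 0)) (R.d₁ (0, 1, 0)) h := by
  ext r
  rw [mem_basicDoubleLink, LinearMap.mem_range]
  constructor
  · rintro ⟨⟨r, s, v⟩, rfl⟩
    exact ⟨_, R.d₁_mem (0, 0, v), r, s, by rw [doubleLinkD₁_apply]; ring⟩
  · rintro ⟨s, hs, t, u, rfl⟩
    obtain ⟨⟨p, q, v⟩, rfl⟩ := R.mem_iff.1 hs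
    exact ⟨(t + h * p, u + h * q, v), by rw [doubleLinkD₁_apply, R.d₁_prod_apply p q v]; ring⟩

theorem exact_doubleLinkD₂_doubleLinkD₁
    (hr : RegularTriple (R.d₁ (1, 0, 0)) (R.d₁ (0, 1, 0)) h) :
    Function.Exact (R.doubleLinkD₂ h) (R.doubleLinkD₁ h) := by
  rintro ⟨r, s, v⟩
  constructor
  · intro hrsv
    rw [doubleLinkD₁_apply] at hrsv
    obtain ⟨p, q, hpq⟩ := hr.exists_eq_add (R.d₁ (0, 0, v)) (-r) (-s) (by linear_combination hrsv)
    obtain ⟨w, hw⟩ := R.exists_d₂_eq (v := (-p, -q, v)) (by rw [R.d₁_prod_apply, hpq]; ring)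
    obtain ⟨t, hrt, hst⟩ := hr.exists_koszul_of_pair_syzygy (u := r + h * p) (v := s + h * q)
      (by linear_combination hrsv - h * hpq)
    refine ⟨(w, -t), ?_⟩
    simp only [doubleLinkD₂_apply, hw, Prod.mk.injEq, and_true]
    exact ⟨by linear_combination -hrt, by linear_combination -hst⟩
  · rintro ⟨⟨w, t⟩, hw⟩
    have hd := R.d₁_d₂ w
    rw [← Prod.mk.eta (p := R.d₂ w), ← Prod.mk.eta (p := (R.d₂ w).2), R.d₁_prod_apply] at hd
    rw [← hw, doubleLinkD₂_apply, doubleLinkD₁_apply]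
    linear_combination h * hd

theorem exact_doubleLinkD₃_doubleLinkD₂
    (hr : RegularTriple (R.d₁ (1, 0, 0)) (R.d₁ (0, 1, 0)) h)
    (hκ : R.IsKoszulLift (1, 0, 0) (0, 1, 0) κ) :
    Function.Exact (R.doubleLinkD₃ h κ) (R.doubleLinkD₂ h) := by
  have hκ' : R.d₂ κ = (R.d₁ (0, 1, 0), -R.d₁ (1, 0, 0), 0) :=
    hκ.trans (by simp)
  rintro ⟨w, t⟩
  constructor
  · intro hwt
    simp only [doubleLinkD₂_apply, Prod.mk_eq_zero] at hwt
    obtain ⟨-, h₂, h₃⟩ := hwt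
    have hd := R.d₁_d₂ w
    rw [← Prod.mk.eta (p := R.d₂ w), ← Prod.mk.eta (p := (R.d₂ w).2), h₃, R.d₁_prod_apply,
      ← Prod.zero_eq_mk, ← Prod.zero_eq_mk, map_zero, add_zero] at hd
    obtain ⟨ρ, hρ₁, hρ₂⟩ := hr.exists_koszul_of_pair_syzygy hd
    obtain ⟨v, hv⟩ := R.exists_d₃_eq (v := w + ρ • κ) (by
      ext <;> simp [hκ', hρ₁, hρ₂, h₃, mul_comm])
    have ht : h * ρ = t := hr.eq_of_mul_eq_mul (by linear_combination h₂ - h * hρ₂)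
    exact ⟨(v, -ρ), by simp [hv, ht]⟩
  · rintro ⟨⟨v, r⟩, hv⟩
    simp [← hv, hκ', R.d₂_d₃, mul_assoc]

theorem injective_doubleLinkD₃ (hh : ∀ r, h * r = 0 → r = 0) :
    Function.Injective (R.doubleLinkD₃ h κ) := by
  rw [injective_iff_map_eq_zero]
  rintro ⟨v, r⟩ hvr
  simp only [doubleLinkD₃_apply, Prod.mk_eq_zero] at hvr
  obtain rfl : r = 0 := hh r (by linear_combination -hvr.2)
  have hv : R.d₃ v = R.d₃ 0 := by simpa using hvr.1
  rw [R.injective_d₃ hv, Prod.mk_zero_zero]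

variable (R)

/-- The minimal resolution of the basic double link `h I + (d₁ e₁, d₁ e₂)`, where `e₁, e₂` are the
first two standard basis vectors. -/
def doubleLink (hh : h ∈ maximalIdeal Q) (hh₀ : ∀ r, h * r = 0 → r = 0)
    (hr : RegularTriple (R.d₁ (1, 0, 0)) (R.d₁ (0, 1, 0)) h)
    (hκ : R.IsKoszulLift (1, 0, 0) (0, 1, 0) κ)
    (hκm : κ ∈ maximalIdeal Q • (⊤ : Submodule Q G₂)) :
    MinimalResolution (basicDoubleLink I (R.d₁ (1, 0, 0)) (R.d₁ (0, 1, 0)) h)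
      (Q × Q × N) (G₂ × Q) (G₃ × Q) where
  d₁ := R.doubleLinkD₁ h
  d₂ := R.doubleLinkD₂ h
  d₃ := R.doubleLinkD₃ h κ
  range_d₁ := range_doubleLinkD₁
  exact₁ := exact_doubleLinkD₂_doubleLinkD₁ hr
  exact₂ := exact_doubleLinkD₃_doubleLinkD₂ hr hκ
  injective_d₃ := injective_doubleLinkD₃ hh₀
  le_maximalIdeal r hrI := by
    obtain ⟨s, -, t, u, rfl⟩ := mem_basicDoubleLink.1 hrI
    exact add_mem (add_mem (Ideal.mul_mem_right _ _ hh)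
      (Ideal.mul_mem_right _ _ (R.d₁_mem_maximalIdeal _)))
      (Ideal.mul_mem_right _ _ (R.d₁_mem_maximalIdeal _))
  d₂_mem := fun (w, t) => by
    rw [doubleLinkD₂_apply]
    have ha := R.d₁_mem_maximalIdeal (1, 0, 0)
    have hb := R.d₁_mem_maximalIdeal (0, 1, 0)
    exact prodMk_mem_smul_top
      (mem_smul_top_self.2 (add_mem (Ideal.mul_mem_right _ _ hh) (Ideal.mul_mem_left _ _ hb)))
      (prodMk_mem_smul_top
        (mem_smul_top_self.2 (sub_mem (Ideal.mul_mem_right _ _ hh) (Ideal.mul_mem_left _ _ ha)))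
        (map_mem_smul_top (LinearMap.snd Q Q N ∘ₗ LinearMap.snd Q Q (Q × N)) (R.d₂_mem w)))
  d₃_mem := fun (v, r) => by
    rw [doubleLinkD₃_apply]
    exact prodMk_mem_smul_top (add_mem (R.d₃_mem v) (Submodule.smul_mem _ _ hκm))
      (mem_smul_top_self.2 (Ideal.mul_mem_right _ _ (neg_mem hh)))

end Resolution

end MinimalResolution

end DoubleLink

section Adapted

open IsLocalRing Module

section ShearSwap

variable {Q M : Type*} [CommRing Q] [AddCommGroup M] [Module Q M]

/-- The change of basis that makes `h g₄ + a²` and `h g₅ + b²` the first two generators of the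
basic double link `h I + (a, b)`, where `g₄` and `g₅` are the fourth and fifth generators of `I`. -/
def shearSwap (a b : Q) : (Q × Q × Q × Q × Q × M) ≃ₗ[Q] (Q × Q × Q × Q × Q × M) where
  toFun := fun (x, y, t, r, s, v) => (r, s, t, x - a * r, y - b * s, v)
  invFun := fun (r, s, t, x, y, v) => (x + a * r, y + b * s, t, r, s, v)
  map_add' := fun (x, y, t, r, s, v) (x', y', t', r', s', v') => by
    ext <;> simp <;> ring
  map_smul' := fun c (x, y, t, r, s, v) => by
    ext <;> simp <;> ring
  left_inv := fun (x, y, t, r, s, v) => by simp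
  right_inv := fun (x, y, t, r, s, v) => by simp

theorem shearSwap_symm_first (a b : Q) :
    (shearSwap a b).symm ((1, 0, 0, 0) : Q × Q × Q × Q × Q × M) = (a, 0, 0, 1, 0, 0) := by
  change ((0 + a * 1, 0 + b * 0, 0, 1, 0, 0) : Q × Q × Q × Q × Q × M) = _
  simp

theorem shearSwap_symm_second (a b : Q) :
    (shearSwap a b).symm ((0, 1, 0, 0) : Q × Q × Q × Q × Q × M) = (0, b, 0, 0, 1, 0) := by
  change ((0 + a * 0, 0 + b * 1, 0, 0, 1, 0) : Q × Q × Q × Q × Q × M) = _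
  simp

theorem shearSwap_symm_third (a b : Q) :
    (shearSwap a b).symm ((0, 0, 1, 0) : Q × Q × Q × Q × Q × M) = (0, 0, 1, 0) := by
  change ((0 + a * 0, 0 + b * 0, 1, 0, 0, 0) : Q × Q × Q × Q × Q × M) = _
  simp

end ShearSwap

universe u

variable {Q : Type u} [CommRing Q] [IsLocalRing Q] {I : Ideal Q}
  {M G₂ G₃ : Type u} [AddCommGroup M] [Module Q M] [AddCommGroup G₂] [Module Q G₂]
  [AddCommGroup G₃] [Module Q G₃]

namespace MinimalResolution

/-- The condition on a resolution that makes it possible to link `I` repeatedly while keeping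
control of the minimal resolutions: the first two generators of `I` form a regular triple with
`h`, the third one is a power of `h`, and none of the Koszul relations among these three
generators is a minimal syzygy. -/
structure IsAdapted (R : MinimalResolution I (Q × Q × Q × M) G₂ G₃) (h : Q) : Prop where
  mem_maximalIdeal : h ∈ maximalIdeal Q
  regularTriple : RegularTriple (R.d₁ (1, 0, 0, 0)) (R.d₁ (0, 1, 0, 0)) h
  exists_eq_pow : ∃ N, 1 ≤ N ∧ R.d₁ (0, 0, 1, 0) = h ^ N
  lift₁₂ : R.HasMinimalKoszulLift (1, 0, 0, 0) (0, 1, 0, 0)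
  lift₁₃ : R.HasMinimalKoszulLift (1, 0, 0, 0) (0, 0, 1, 0)
  lift₂₃ : R.HasMinimalKoszulLift (0, 1, 0, 0) (0, 0, 1, 0)

theorem IsAdapted.regularTriple_d₁ {R : MinimalResolution I (Q × Q × Q × M) G₂ G₃} {h : Q}
    (hR : R.IsAdapted h) :
    RegularTriple (R.d₁ (1, 0, 0, 0)) (R.d₁ (0, 1, 0, 0)) (R.d₁ (0, 0, 1, 0)) := by
  obtain ⟨N, hN, hpow⟩ := hR.exists_eq_pow
  exact hpow ▸ hR.regularTriple.pow_last hN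

end MinimalResolution

open MinimalResolution

/-- `I` is the ideal of an adapted minimal resolution of format `(1, p + 3, p + n + 2, n)`. -/
def HasAdaptedResolution (I : Ideal Q) (p n : ℕ) : Prop :=
  ∃ (R : MinimalResolution I (Q × Q × Q × (Fin p → Q)) (Fin (p + n + 2) → Q) (Fin n → Q)) (h : Q),
    R.IsAdapted h

theorem MinimalResolution.IsAdapted.congr {M' G₂' G₃' : Type u} [AddCommGroup M'] [Module Q M']
    [AddCommGroup G₂'] [Module Q G₂'] [AddCommGroup G₃'] [Module Q G₃']
    {R : MinimalResolution I (Q × Q × Q × M) G₂ G₃} {h : Q} (hR : R.IsAdapted h)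
    (e : M ≃ₗ[Q] M') (e₂ : G₂ ≃ₗ[Q] G₂') (e₃ : G₃ ≃ₗ[Q] G₃') :
    (R.congr ((LinearEquiv.refl Q Q).prodCongr ((LinearEquiv.refl Q Q).prodCongr
      ((LinearEquiv.refl Q Q).prodCongr e))) e₂ e₃).IsAdapted h := by
  set e₁ := (LinearEquiv.refl Q Q).prodCongr
    ((LinearEquiv.refl Q Q).prodCongr ((LinearEquiv.refl Q Q).prodCongr e))
  have he₁ : ∀ r s t : Q, e₁.symm (r, s, t, 0) = (r, s, t, 0) := by simp [e₁]
  have hd₁ : ∀ r s t : Q, (R.congr e₁ e₂ e₃).d₁ (r, s, t, 0) = R.d₁ (r, s, t, 0) :=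
    fun r s t => congrArg R.d₁ (he₁ r s t)
  refine ⟨hR.mem_maximalIdeal, ?_, ?_, ?_, ?_, ?_⟩
  · simpa only [hd₁] using hR.regularTriple
  · simpa only [hd₁] using hR.exists_eq_pow
  · exact .congr (by simpa only [he₁] using hR.lift₁₂)
  · exact .congr (by simpa only [he₁] using hR.lift₁₃)
  · exact .congr (by simpa only [he₁] using hR.lift₂₃)

theorem MinimalResolution.IsAdapted.hasAdaptedResolution
    [Module.Free Q M] [Module.Finite Q M] [Module.Free Q G₂] [Module.Finite Q G₂]
    [Module.Free Q G₃] [Module.Finite Q G₃] {R : MinimalResolution I (Q × Q × Q × M) G₂ G₃} {h : Q}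
    (hR : R.IsAdapted h) {p n : ℕ} (hp : finrank Q M = p) (hpn : finrank Q G₂ = p + n + 2)
    (hn : finrank Q G₃ = n) : HasAdaptedResolution I p n :=
  ⟨_, h, hR.congr (.ofFinrankEq _ _ (by simpa using hp)) (.ofFinrankEq _ _ (by simpa using hpn))
    (.ofFinrankEq _ _ (by simpa using hn))⟩

section DoubleLink

variable [IsNoetherianRing Q] {R : MinimalResolution I (Q × Q × Q × Q × Q × M) G₂ G₃} {h : Q}

namespace MinimalResolution

theorem IsAdapted.eq_zero_of_mul_eq_zero (hR : R.IsAdapted h) (r : Q) (hr : h * r = 0) : r = 0 :=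
  ((hR.regularTriple.rotate (R.d₁_mem_maximalIdeal _) (R.d₁_mem_maximalIdeal _)
    hR.mem_maximalIdeal).rotate (R.d₁_mem_maximalIdeal _) hR.mem_maximalIdeal
    (R.d₁_mem_maximalIdeal _)).eq_zero_of_mul_eq_zero r hr

/-- The minimal resolution of the basic double link of `I` with respect to its first two
generators and `h`. -/
noncomputable def IsAdapted.doubleLink (hR : R.IsAdapted h) :
    MinimalResolution (basicDoubleLink I (R.d₁ (1, 0, 0)) (R.d₁ (0, 1, 0)) h)
      (Q × Q × Q × Q × Q × M) (G₂ × Q) (G₃ × Q) :=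
  R.doubleLink hR.mem_maximalIdeal hR.eq_zero_of_mul_eq_zero hR.regularTriple
    hR.lift₁₂.choose_spec.2 hR.lift₁₂.choose_spec.1

theorem IsAdapted.doubleLink_d₁ (hR : R.IsAdapted h) : hR.doubleLink.d₁ = R.doubleLinkD₁ h := rfl

theorem IsAdapted.doubleLink_d₂ (hR : R.IsAdapted h) : hR.doubleLink.d₂ = R.doubleLinkD₂ h := rfl

theorem IsAdapted.doubleLink_lift₁₂ (hR : R.IsAdapted h) : hR.doubleLink.HasMinimalKoszulLift
    (R.d₁ (1, 0, 0), 0, 0, 1, 0, 0) (0, R.d₁ (0, 1, 0), 0, 0, 1, 0) := by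
  have ha := R.d₁_mem_maximalIdeal (1, 0, 0)
  have hb := R.d₁_mem_maximalIdeal (0, 1, 0)
  obtain ⟨κ₄₅, h₄₅⟩ := R.exists_isKoszulLift (0, 0, 0, 1, 0, 0) (0, 0, 0, 0, 1, 0)
  obtain ⟨κ₄₂, h₄₂⟩ := R.exists_isKoszulLift (0, 0, 0, 1, 0, 0) (0, 1, 0)
  obtain ⟨κ₁₅, h₁₅⟩ := R.exists_isKoszulLift (1, 0, 0) (0, 0, 0, 0, 1, 0)
  rw [IsKoszulLift] at h₄₅ h₄₂ h₁₅
  refine ⟨(h • κ₄₅ + R.d₁ (0, 1, 0) • κ₄₂ + R.d₁ (1, 0, 0) • κ₁₅,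
    R.d₁ (1, 0, 0) * R.d₁ (0, 1, 0)), ?_, ?_⟩
  · exact prodMk_mem_smul_top
      (add_mem (add_mem (Submodule.smul_mem_smul hR.mem_maximalIdeal trivial)
        (Submodule.smul_mem_smul hb trivial)) (Submodule.smul_mem_smul ha trivial))
      (mem_smul_top_self.2 (Ideal.mul_mem_right _ _ ha))
  · rw [IsKoszulLift, hR.doubleLink_d₁, hR.doubleLink_d₂, doubleLinkD₂_apply]
    simp only [map_add, map_smul, h₄₅, h₄₂, h₁₅, doubleLinkD₁_apply]
    ext <;> simp <;> ring

theorem IsAdapted.doubleLink_lift₁₃ (hR : R.IsAdapted h) : hR.doubleLink.HasMinimalKoszulLift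
    (R.d₁ (1, 0, 0), 0, 0, 1, 0, 0) (0, 0, 1, 0) := by
  obtain ⟨κ₄₃, h₄₃⟩ := R.exists_isKoszulLift (0, 0, 0, 1, 0, 0) (0, 0, 1, 0)
  obtain ⟨κ₁₃, h₁₃⟩ := R.exists_isKoszulLift (1, 0, 0) (0, 0, 1, 0)
  rw [IsKoszulLift] at h₄₃ h₁₃
  refine ⟨(h • κ₄₃ + R.d₁ (1, 0, 0) • κ₁₃, 0), prodMk_mem_smul_top
    (add_mem (Submodule.smul_mem_smul hR.mem_maximalIdeal trivial)
      (Submodule.smul_mem_smul (R.d₁_mem_maximalIdeal _) trivial)) (zero_mem _), ?_⟩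
  rw [IsKoszulLift, hR.doubleLink_d₁, hR.doubleLink_d₂, doubleLinkD₂_apply]
  simp only [map_add, map_smul, h₄₃, h₁₃, doubleLinkD₁_apply]
  ext <;> simp
  ring

theorem IsAdapted.doubleLink_lift₂₃ (hR : R.IsAdapted h) : hR.doubleLink.HasMinimalKoszulLift
    (0, R.d₁ (0, 1, 0), 0, 0, 1, 0) (0, 0, 1, 0) := by
  obtain ⟨κ₅₃, h₅₃⟩ := R.exists_isKoszulLift (0, 0, 0, 0, 1, 0) (0, 0, 1, 0)
  obtain ⟨κ₂₃, h₂₃⟩ := R.exists_isKoszulLift (0, 1, 0) (0, 0, 1, 0)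
  rw [IsKoszulLift] at h₅₃ h₂₃
  refine ⟨(h • κ₅₃ + R.d₁ (0, 1, 0) • κ₂₃, 0), prodMk_mem_smul_top
    (add_mem (Submodule.smul_mem_smul hR.mem_maximalIdeal trivial)
      (Submodule.smul_mem_smul (R.d₁_mem_maximalIdeal _) trivial)) (zero_mem _), ?_⟩
  rw [IsKoszulLift, hR.doubleLink_d₁, hR.doubleLink_d₂, doubleLinkD₂_apply]
  simp only [map_add, map_smul, h₅₃, h₂₃, doubleLinkD₁_apply]
  ext <;> simp
  ring

theorem IsAdapted.isAdapted_doubleLink (hR : R.IsAdapted h) :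
    (hR.doubleLink.congr (shearSwap (R.d₁ (1, 0, 0)) (R.d₁ (0, 1, 0)))
      (.refl Q _) (.refl Q _)).IsAdapted h where
  mem_maximalIdeal := hR.mem_maximalIdeal
  regularTriple := by
    convert hR.regularTriple.sq_add_mul (R.d₁_mem_maximalIdeal _) (R.d₁_mem_maximalIdeal _)
      hR.mem_maximalIdeal (R.d₁ (0, 0, 0, 1, 0, 0)) (R.d₁ (0, 0, 0, 0, 1, 0)) using 1
    · simp only [congr_d₁_apply, shearSwap_symm_first, doubleLink_d₁, doubleLinkD₁_apply, mul_zero,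
        add_zero, sq]
      rfl
    · simp only [congr_d₁_apply, shearSwap_symm_second, doubleLink_d₁, doubleLinkD₁_apply, mul_zero,
        zero_add, sq]
      rfl
  exists_eq_pow := by
    obtain ⟨N, -, hpow⟩ := hR.exists_eq_pow
    refine ⟨N + 1, N.succ_pos, ?_⟩
    simp [congr_d₁_apply, shearSwap_symm_third, doubleLink_d₁, pow_succ', ← hpow]
  lift₁₂ := .congr (by simpa only [shearSwap_symm_first, shearSwap_symm_second]
    using hR.doubleLink_lift₁₂)
  lift₁₃ := .congr (by simpa only [shearSwap_symm_first, shearSwap_symm_third]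
    using hR.doubleLink_lift₁₃)
  lift₂₃ := .congr (by simpa only [shearSwap_symm_second, shearSwap_symm_third]
    using hR.doubleLink_lift₂₃)

end MinimalResolution

theorem HasAdaptedResolution.exists_linked_succ {p n : ℕ} (hI : HasAdaptedResolution I p n)
    (hp : 2 ≤ p) : ∃ I', HasAdaptedResolution I' p (n + 1) ∧ Linked I I' := by
  obtain ⟨R, h, hR⟩ := hI
  let e : (Fin p → Q) ≃ₗ[Q] Q × Q × (Fin (p - 2) → Q) :=
    .ofFinrankEq _ _ (by simp; omega)
  obtain ⟨R', h', hR'⟩ : ∃ (R' : MinimalResolution I (Q × Q × Q × Q × Q × (Fin (p - 2) → Q))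
      (Fin (p + n + 2) → Q) (Fin n → Q)) (h' : Q), R'.IsAdapted h' := by
    exact ⟨_, _, hR.congr e (.refl Q _) (.refl Q _)⟩
  exact ⟨_, hR'.isAdapted_doubleLink.hasAdaptedResolution (by simp; omega) (by simp; omega)
    (by simp), R'.linked_basicDoubleLink hR'.mem_maximalIdeal hR'.regularTriple
    hR'.regularTriple_d₁⟩

end DoubleLink

end Adapted

section MappingCone

open IsLocalRing Module

section DualProd

variable {Q G : Type*} [CommRing Q] [AddCommGroup G] [Module Q G]

/-- The first coordinate of a functional on `Q × G` is its value at `(1, 0)`. -/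
def dualProdEquiv (Q G : Type*) [CommRing Q] [AddCommGroup G] [Module Q G] :
    Dual Q (Q × G) ≃ₗ[Q] Q × Dual Q G :=
  (dualProdDualEquivDual Q Q G).symm ≪≫ₗ
    (LinearMap.ringLmapEquivSelf Q Q Q).prodCongr (.refl Q _)

/-- The first three coordinates of a functional on `Q × Q × Q × G` are its values at the first
three standard basis vectors. -/
def dualProd₃Equiv (Q G : Type*) [CommRing Q] [AddCommGroup G] [Module Q G] :
    Dual Q (Q × Q × Q × G) ≃ₗ[Q] Q × Q × Q × Dual Q G :=
  dualProdEquiv Q (Q × Q × G) ≪≫ₗ (LinearEquiv.refl Q Q).prodCongr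
    (dualProdEquiv Q (Q × G) ≪≫ₗ (LinearEquiv.refl Q Q).prodCongr (dualProdEquiv Q G))

theorem dualProd₃Equiv_symm_apply (r s t : Q) (φ : Dual Q G) (x y z : Q) (v : G) :
    (dualProd₃Equiv Q G).symm (r, s, t, φ) (x, y, z, v) = r * x + s * y + t * z + φ v := by
  simp [dualProd₃Equiv, dualProdEquiv, dualProdDualEquivDual, mul_comm, add_assoc]

end DualProd

universe u

variable {Q : Type u} [CommRing Q] [IsLocalRing Q] {I : Ideal Q}
  {M G₂ G₃ : Type u} [AddCommGroup M] [Module Q M] [AddCommGroup G₂] [Module Q G₂]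
  [AddCommGroup G₃] [Module Q G₃]

namespace MinimalResolution

/-- A comparison map, zero modulo the maximal ideal in degree two, from the Koszul complex on the
first three generators of `I` to a resolution of `Q ⧸ I`: it is the inclusion in degree one, the
`κᵢⱼ` are its values in degree two, and `top` is its value in degree three. -/
structure KoszulComparison (R : MinimalResolution I (Q × Q × Q × M) G₂ G₃) where
  κ₂₃ : G₂
  κ₃₁ : G₂
  κ₁₂ : G₂
  top : G₃
  lift₂₃ : R.IsKoszulLift (0, 1, 0, 0) (0, 0, 1, 0) κ₂₃
  lift₃₁ : R.IsKoszulLift (0, 0, 1, 0) (1, 0, 0, 0) κ₃₁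
  lift₁₂ : R.IsKoszulLift (1, 0, 0, 0) (0, 1, 0, 0) κ₁₂
  d₃_top : R.d₃ top =
    R.d₁ (1, 0, 0, 0) • κ₂₃ + R.d₁ (0, 1, 0, 0) • κ₃₁ + R.d₁ (0, 0, 1, 0) • κ₁₂
  κ₂₃_mem : κ₂₃ ∈ maximalIdeal Q • (⊤ : Submodule Q G₂)
  κ₃₁_mem : κ₃₁ ∈ maximalIdeal Q • (⊤ : Submodule Q G₂)
  κ₁₂_mem : κ₁₂ ∈ maximalIdeal Q • (⊤ : Submodule Q G₂)

theorem IsAdapted.nonempty_koszulComparison {R : MinimalResolution I (Q × Q × Q × M) G₂ G₃} {h : Q}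
    (hR : R.IsAdapted h) : Nonempty R.KoszulComparison := by
  obtain ⟨κ₁₂, hκ₁₂, lift₁₂⟩ := hR.lift₁₂
  obtain ⟨κ₁₃, hκ₁₃, lift₁₃⟩ := hR.lift₁₃
  obtain ⟨κ₂₃, hκ₂₃, lift₂₃⟩ := hR.lift₂₃
  have lift₃₁ : R.IsKoszulLift (0, 0, 1, 0) (1, 0, 0, 0) (-κ₁₃) := by
    rw [IsKoszulLift] at lift₁₃ ⊢
    rw [map_neg, lift₁₃, neg_sub]
  obtain ⟨w, hw⟩ := exists_d₃_eq_koszul lift₁₂ lift₂₃ lift₃₁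
  exact ⟨⟨κ₂₃, -κ₁₃, κ₁₂, w, lift₂₃, lift₃₁, lift₁₂, hw, hκ₂₃, neg_mem hκ₁₃, hκ₁₂⟩⟩

variable (R : MinimalResolution I (Q × Q × Q × M) G₂ G₃)

theorem d₁_prod₃_apply (r s t : Q) (v : M) :
    R.d₁ (r, s, t, v) = R.d₁ (1, 0, 0, 0) * r + R.d₁ (0, 1, 0, 0) * s + R.d₁ (0, 0, 1, 0) * t +
      R.d₁ (0, 0, 0, v) := by
  have hsplit : ((r, s, t, v) : Q × Q × Q × M) =
      r • (1, 0, 0, 0) + s • (0, 1, 0, 0) + t • (0, 0, 1, 0) + (0, 0, 0, v) := by simp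
  rw [hsplit]
  simp only [map_add, map_smul, smul_eq_mul]
  ring

/-- The last differential of the mapping cone of a Koszul comparison: the component of `d₂` along
the generators outside of the first three. -/
def coneD₁ : G₂ →ₗ[Q] M :=
  LinearMap.snd Q Q M ∘ₗ LinearMap.snd Q Q (Q × M) ∘ₗ LinearMap.snd Q Q (Q × Q × M) ∘ₗ R.d₂

theorem coneD₁_apply (u : G₂) : R.coneD₁ u = (R.d₂ u).2.2.2 := rfl

theorem smul_mem_range_coneD₁ {c : Q} (hc : c ∈ Submodule.colon
      (Ideal.span {R.d₁ (1, 0, 0, 0), R.d₁ (0, 1, 0, 0), R.d₁ (0, 0, 1, 0)}) I) (v : M) :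
    c • v ∈ LinearMap.range R.coneD₁ := by
  obtain ⟨x, y, z, hxyz⟩ := mem_colon_span_triple.1 hc _ (R.d₁_mem (0, 0, 0, v))
  have hcv : ((0, 0, 0, c • v) : Q × Q × Q × M) = c • (0, 0, 0, v) := by simp
  obtain ⟨u, hu⟩ := R.exists_d₂_eq (v := (-x, -y, -z, c • v)) (by
    rw [R.d₁_prod₃_apply, hcv, map_smul, smul_eq_mul]
    linear_combination hxyz)
  exact ⟨u, by rw [coneD₁_apply, hu]⟩

theorem colon_le_maximalIdeal [Module.Free Q M] [Nontrivial M] : Submodule.colon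
      (Ideal.span {R.d₁ (1, 0, 0, 0), R.d₁ (0, 1, 0, 0), R.d₁ (0, 0, 1, 0)}) I ≤
    maximalIdeal Q := by
  intro c hc
  let b := Free.chooseBasis Q M
  obtain ⟨i⟩ : Nonempty (Free.ChooseBasisIndex Q M) := b.index_nonempty
  obtain ⟨u, hu⟩ := R.smul_mem_range_coneD₁ hc (b i)
  have hmem := map_mem_smul_top (b.coord i ∘ₗ LinearMap.snd Q Q M ∘ₗ LinearMap.snd Q Q (Q × M) ∘ₗ
    LinearMap.snd Q Q (Q × Q × M)) (R.d₂_mem u)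
  have hcoord : b.coord i (R.coneD₁ u) = c := by rw [hu]; simp
  exact mem_smul_top_self.1 (hcoord ▸ hmem)

namespace KoszulComparison

variable {R} (K : R.KoszulComparison)

theorem d₂_κ₂₃ : R.d₂ K.κ₂₃ = (0, R.d₁ (0, 0, 1, 0), -R.d₁ (0, 1, 0, 0), 0) :=
  K.lift₂₃.trans (by simp)

theorem d₂_κ₃₁ : R.d₂ K.κ₃₁ = (-R.d₁ (0, 0, 1, 0), 0, R.d₁ (1, 0, 0, 0), 0) :=
  K.lift₃₁.trans (by simp)

theorem d₂_κ₁₂ : R.d₂ K.κ₁₂ = (R.d₁ (0, 1, 0, 0), -R.d₁ (1, 0, 0, 0), 0, 0) :=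
  K.lift₁₂.trans (by simp [Prod.zero_eq_mk])

/-- The middle differential of the mapping cone of a Koszul comparison. -/
def coneD₂ : Q × Q × Q × G₃ →ₗ[Q] G₂ :=
  (LinearMap.toSpanSingleton Q G₂ K.κ₂₃).coprod <|
    (LinearMap.toSpanSingleton Q G₂ K.κ₃₁).coprod <|
      (LinearMap.toSpanSingleton Q G₂ K.κ₁₂).coprod (-R.d₃)

/-- The first differential of the mapping cone of a Koszul comparison. -/
def coneD₃ : Q →ₗ[Q] Q × Q × Q × G₃ :=
  LinearMap.toSpanSingleton Q _
    (R.d₁ (1, 0, 0, 0), R.d₁ (0, 1, 0, 0), R.d₁ (0, 0, 1, 0), K.top)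

theorem coneD₂_apply (r s t : Q) (v : G₃) :
    K.coneD₂ (r, s, t, v) = r • K.κ₂₃ + s • K.κ₃₁ + t • K.κ₁₂ - R.d₃ v := by
  simp [coneD₂]
  abel

theorem coneD₃_apply (r : Q) : K.coneD₃ r =
    (r * R.d₁ (1, 0, 0, 0), r * R.d₁ (0, 1, 0, 0), r * R.d₁ (0, 0, 1, 0), r • K.top) := by
  simp [coneD₃]

theorem d₂_coneD₂ (r s t : Q) (v : G₃) : R.d₂ (K.coneD₂ (r, s, t, v)) =
    (R.d₁ (0, 1, 0, 0) * t - R.d₁ (0, 0, 1, 0) * s,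
      R.d₁ (0, 0, 1, 0) * r - R.d₁ (1, 0, 0, 0) * t,
      R.d₁ (1, 0, 0, 0) * s - R.d₁ (0, 1, 0, 0) * r, 0) := by
  simp only [coneD₂_apply, map_sub, map_add, map_smul, d₂_κ₂₃, d₂_κ₃₁, d₂_κ₁₂, R.d₂_d₃]
  ext <;> simp <;> ring

theorem exact_coneD₂_coneD₁
    (hr : RegularTriple (R.d₁ (1, 0, 0, 0)) (R.d₁ (0, 1, 0, 0)) (R.d₁ (0, 0, 1, 0))) :
    Function.Exact K.coneD₂ R.coneD₁ := by
  intro u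
  constructor
  · intro hu
    rw [coneD₁_apply] at hu
    have hd := R.d₁_d₂ u
    rcases hd₂u : R.d₂ u with ⟨x, y, z, v⟩
    obtain rfl : v = 0 := by rw [hd₂u] at hu; exact hu
    rw [hd₂u, R.d₁_prod₃_apply x y z, ← Prod.zero_eq_mk, ← Prod.zero_eq_mk, ← Prod.zero_eq_mk,
      map_zero, add_zero] at hd
    obtain ⟨p, q, r, hp, hq, hr'⟩ := hr.exists_koszul_of_syzygy hd
    obtain ⟨v, hv⟩ := R.exists_d₃_eq (v := r • K.κ₂₃ - q • K.κ₃₁ + p • K.κ₁₂ - u) (by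
      simp only [map_sub, map_add, map_smul, d₂_κ₂₃, d₂_κ₃₁, d₂_κ₁₂, hd₂u, hp, hq, hr']
      ext <;> simp <;> ring)
    refine ⟨(r, -q, p, v), ?_⟩
    rw [coneD₂_apply, hv]
    module
  · rintro ⟨⟨r, s, t, v⟩, rfl⟩
    rw [coneD₁_apply, d₂_coneD₂]

theorem exact_coneD₃_coneD₂
    (hr : RegularTriple (R.d₁ (1, 0, 0, 0)) (R.d₁ (0, 1, 0, 0)) (R.d₁ (0, 0, 1, 0))) :
    Function.Exact K.coneD₃ K.coneD₂ := by
  rintro ⟨r, s, t, v⟩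
  constructor
  · intro hu
    have hd := K.d₂_coneD₂ r s t v
    rw [hu, map_zero, eq_comm, Prod.mk_eq_zero, Prod.mk_eq_zero, Prod.mk_eq_zero] at hd
    obtain ⟨-, h₂, h₃, -⟩ := hd
    obtain ⟨ρ, rfl, hs, rfl⟩ := hr.exists_koszul_of_secondSyzygy (p := t) (q := -s) (r := r)
      (by linear_combination h₂) (by linear_combination h₃)
    obtain rfl : s = R.d₁ (0, 1, 0, 0) * ρ := by linear_combination -hs
    have hv : R.d₃ v = R.d₃ (ρ • K.top) := by
      rw [map_smul, K.d₃_top]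
      rw [coneD₂_apply] at hu
      linear_combination (norm := module) -hu
    exact ⟨ρ, by simp [coneD₃_apply, R.injective_d₃ hv, mul_comm]⟩
  · rintro ⟨ρ, hρ⟩
    rw [← hρ, coneD₃_apply, coneD₂_apply, map_smul, K.d₃_top]
    module

theorem injective_coneD₃
    (hr : RegularTriple (R.d₁ (1, 0, 0, 0)) (R.d₁ (0, 1, 0, 0)) (R.d₁ (0, 0, 1, 0))) :
    Function.Injective K.coneD₃ := by
  rw [injective_iff_map_eq_zero]
  intro ρ hρ
  rw [coneD₃_apply, Prod.mk_eq_zero] at hρ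
  exact hr.eq_zero_of_mul_eq_zero ρ (by rw [mul_comm, hρ.1])

section Dual

variable [Module.Free Q M] [Module.Free Q G₂] [Module.Free Q G₃]

theorem range_dualMap_coneD₃
    (hr : RegularTriple (R.d₁ (1, 0, 0, 0)) (R.d₁ (0, 1, 0, 0)) (R.d₁ (0, 0, 1, 0))) :
    LinearMap.range (LinearMap.ringLmapEquivSelf Q Q Q ∘ₗ K.coneD₃.dualMap) = Submodule.colon
      (Ideal.span {R.d₁ (1, 0, 0, 0), R.d₁ (0, 1, 0, 0), R.d₁ (0, 0, 1, 0)}) I := by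
  ext c
  constructor
  · rintro ⟨φ, rfl⟩
    have hφ : φ (R.d₁ (1, 0, 0, 0), R.d₁ (0, 1, 0, 0), R.d₁ (0, 0, 1, 0), K.top) =
        R.d₁ (1, 0, 0, 0) * φ (1, 0, 0, 0) + R.d₁ (0, 1, 0, 0) * φ (0, 1, 0, 0) +
          R.d₁ (0, 0, 1, 0) * φ (0, 0, 1, 0) + φ (0, 0, 0, K.top) := by
      simp only [← smul_eq_mul, ← map_smul, ← map_add]
      simp
    have htop := dual_apply_mem_colon K.d₃_top
      (φ ∘ₗ LinearMap.inr Q Q (Q × Q × G₃) ∘ₗ LinearMap.inr Q Q (Q × G₃) ∘ₗ LinearMap.inr Q Q G₃)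
    simp only [LinearMap.coe_comp, LinearEquiv.coe_coe, Function.comp_apply,
      LinearMap.ringLmapEquivSelf_apply, LinearMap.dualMap_apply, coneD₃_apply, one_mul, one_smul,
      hφ]
    exact add_mem (add_mem (add_mem (Ideal.mul_mem_right _ _ first_mem_colon)
      (Ideal.mul_mem_right _ _ second_mem_colon)) (Ideal.mul_mem_right _ _ third_mem_colon)) htop
  · intro hc
    obtain ⟨-, s₂, -, hs₂⟩ := exists_homotopy (K.exact_coneD₂_coneD₁ hr)
      (K.exact_coneD₃_coneD₂ hr) (K.injective_coneD₃ hr) (R.smul_mem_range_coneD₁ hc)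
    exact ⟨s₂, (hs₂ 1).trans (mul_one c)⟩

variable [Module.Finite Q G₂] [Module.Finite Q G₃] [Nontrivial M]

/-- Linkage by a mapping cone: the dual of the mapping cone of a Koszul comparison resolves the
ideal directly linked to `I`. -/
def dualCone
    (hr : RegularTriple (R.d₁ (1, 0, 0, 0)) (R.d₁ (0, 1, 0, 0)) (R.d₁ (0, 0, 1, 0))) :
    MinimalResolution (Submodule.colon
      (Ideal.span {R.d₁ (1, 0, 0, 0), R.d₁ (0, 1, 0, 0), R.d₁ (0, 0, 1, 0)}) I)
      (Dual Q (Q × Q × Q × G₃)) (Dual Q G₂) (Dual Q M) where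
  d₁ := LinearMap.ringLmapEquivSelf Q Q Q ∘ₗ K.coneD₃.dualMap
  d₂ := K.coneD₂.dualMap
  d₃ := R.coneD₁.dualMap
  range_d₁ := K.range_dualMap_coneD₃ hr
  exact₁ := (exact_dualMap₂ (K.exact_coneD₂_coneD₁ hr) (K.exact_coneD₃_coneD₂ hr)
    (K.injective_coneD₃ hr) hr (R.smul_mem_range_coneD₁ first_mem_colon)
    (R.smul_mem_range_coneD₁ second_mem_colon)
    (R.smul_mem_range_coneD₁ third_mem_colon)).comp_injective
      (LinearMap.ringLmapEquivSelf Q Q Q) (LinearEquiv.injective _) (map_zero _)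
  exact₂ := exact_dualMap₁ (K.exact_coneD₂_coneD₁ hr) hr
    (R.smul_mem_range_coneD₁ first_mem_colon) (R.smul_mem_range_coneD₁ second_mem_colon)
  injective_d₃ := injective_dualMap_of_smul_mem_range hr.eq_zero_of_mul_eq_zero
    (R.smul_mem_range_coneD₁ first_mem_colon)
  le_maximalIdeal := R.colon_le_maximalIdeal
  d₂_mem ψ := dual_mem_smul_top _ fun (r, s, t, v) => by
    rw [LinearMap.dualMap_apply, coneD₂_apply]
    exact mem_smul_top_self.1 (map_mem_smul_top ψ (sub_mem (add_mem (add_mem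
      (Submodule.smul_mem _ _ K.κ₂₃_mem) (Submodule.smul_mem _ _ K.κ₃₁_mem))
      (Submodule.smul_mem _ _ K.κ₁₂_mem)) (R.d₃_mem v)))
  d₃_mem ψ := dual_mem_smul_top _ fun u => mem_smul_top_self.1
    (map_mem_smul_top (ψ ∘ₗ LinearMap.snd Q Q M ∘ₗ LinearMap.snd Q Q (Q × M) ∘ₗ
      LinearMap.snd Q Q (Q × Q × M)) (R.d₂_mem u))

variable (hr : RegularTriple (R.d₁ (1, 0, 0, 0)) (R.d₁ (0, 1, 0, 0)) (R.d₁ (0, 0, 1, 0)))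

theorem dualCone_d₁_apply (φ : Dual Q (Q × Q × Q × G₃)) : (K.dualCone hr).d₁ φ =
    φ (R.d₁ (1, 0, 0, 0), R.d₁ (0, 1, 0, 0), R.d₁ (0, 0, 1, 0), K.top) := by
  change φ (K.coneD₃ 1) = _
  simp [coneD₃_apply]

theorem hasMinimalKoszulLift_dualCone (ρ : Dual Q (Q × Q × Q × M))
    {φ ψ : Dual Q (Q × Q × Q × G₃)}
    (hρ : ∀ u, ρ (R.d₂ (K.coneD₂ u)) =
      ψ (R.d₁ (1, 0, 0, 0), R.d₁ (0, 1, 0, 0), R.d₁ (0, 0, 1, 0), K.top) * φ u -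
        φ (R.d₁ (1, 0, 0, 0), R.d₁ (0, 1, 0, 0), R.d₁ (0, 0, 1, 0), K.top) * ψ u) :
    (K.dualCone hr).HasMinimalKoszulLift φ ψ := by
  refine ⟨ρ ∘ₗ R.d₂, dual_mem_smul_top _ fun u =>
    mem_smul_top_self.1 (map_mem_smul_top ρ (R.d₂_mem u)), LinearMap.ext fun u => ?_⟩
  rw [dualCone_d₁_apply, dualCone_d₁_apply]
  exact hρ u

theorem isAdapted_dualCone :
    ((K.dualCone hr).congr (dualProd₃Equiv Q G₃) (.refl Q _) (.refl Q _)).IsAdapted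
      (R.d₁ (0, 0, 1, 0)) where
  mem_maximalIdeal := R.d₁_mem_maximalIdeal _
  regularTriple := by
    simpa [congr_d₁_apply, dualCone_d₁_apply, dualProd₃Equiv_symm_apply] using hr
  exists_eq_pow := ⟨1, le_rfl, by
    simp [congr_d₁_apply, dualCone_d₁_apply, dualProd₃Equiv_symm_apply]⟩
  lift₁₂ := .congr <| K.hasMinimalKoszulLift_dualCone hr
    (-(LinearMap.fst Q Q M ∘ₗ LinearMap.snd Q Q (Q × M) ∘ₗ LinearMap.snd Q Q (Q × Q × M)))
    fun (r, s, t, v) => by simp [d₂_coneD₂, dualProd₃Equiv_symm_apply]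
  lift₁₃ := .congr <| K.hasMinimalKoszulLift_dualCone hr
    (LinearMap.fst Q Q (Q × M) ∘ₗ LinearMap.snd Q Q (Q × Q × M))
    fun (r, s, t, v) => by simp [d₂_coneD₂, dualProd₃Equiv_symm_apply]
  lift₂₃ := .congr <| K.hasMinimalKoszulLift_dualCone hr (-LinearMap.fst Q Q (Q × Q × M))
    fun (r, s, t, v) => by simp [d₂_coneD₂, dualProd₃Equiv_symm_apply]

end Dual

end KoszulComparison

end MinimalResolution

theorem HasAdaptedResolution.exists_linked_swap {p n : ℕ} (hI : HasAdaptedResolution I p n)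
    (hp : 1 ≤ p) : ∃ I', HasAdaptedResolution I' n p ∧ Linked I I' := by
  obtain ⟨R, h, hR⟩ := hI
  obtain ⟨K⟩ := hR.nonempty_koszulComparison
  have : Nonempty (Fin p) := ⟨0, hp⟩
  exact ⟨_, (K.isAdapted_dualCone hR.regularTriple_d₁).hasAdaptedResolution
    (by simp [Dual, finrank_linearMap_self])
    (by simp [Dual, finrank_linearMap_self, add_comm]) (by simp [Dual, finrank_linearMap_self]),
    .single (R.directlyLinked_colon hR.regularTriple_d₁)⟩

end MappingCone

section NullHomotopy

open IsLocalRing Matrix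

section Acyclicity

variable {Q : Type*} [CommRing Q] {a b c : Q} {G₀ G₁ G₂ G₃ : Type*} [AddCommGroup G₀] [Module Q G₀]
  [AddCommGroup G₁] [Module Q G₁] [AddCommGroup G₂] [Module Q G₂] [AddCommGroup G₃] [Module Q G₃]
  [Module.Free Q G₂] [Module.Finite Q G₂] [Module.Free Q G₃] [Module.Finite Q G₃]
  {d₁ : G₁ →ₗ[Q] G₀} {d₂ : G₂ →ₗ[Q] G₁} {d₃ : G₃ →ₗ[Q] G₂}

theorem RegularTriple.exact_of_smul_mem_range₂ (h : RegularTriple a b c)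
    (injective_d₃ : Function.Injective d₃) (d₂_d₃ : d₂ ∘ₗ d₃ = 0)
    (ha : ∀ v, d₂ v = 0 → a • v ∈ LinearMap.range d₃)
    (hb : ∀ v, d₂ v = 0 → b • v ∈ LinearMap.range d₃) : Function.Exact d₃ d₂ := by
  refine fun v => ⟨fun hv => ?_, by rintro ⟨w, rfl⟩; exact LinearMap.congr_fun d₂_d₃ w⟩
  obtain ⟨p, hp⟩ := ha v hv
  obtain ⟨q, hq⟩ := hb v hv
  obtain ⟨w, rfl⟩ := h.exists_eq_smul (v := p) (w := q) <| injective_d₃ <| by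
    rw [map_smul, map_smul, hp, hq, smul_comm]
  exact ⟨w, h.eq_of_smul_eq_smul (by rw [← map_smul, hp])⟩

theorem RegularTriple.exact_of_smul_mem_range₁ [Module.Free Q G₁] [Module.Finite Q G₁]
    (h : RegularTriple a b c) (injective_d₃ : Function.Injective d₃)
    (exact₂ : Function.Exact d₃ d₂) (d₁_d₂ : d₁ ∘ₗ d₂ = 0)
    (ha : ∀ v, d₁ v = 0 → a • v ∈ LinearMap.range d₂)
    (hb : ∀ v, d₁ v = 0 → b • v ∈ LinearMap.range d₂)
    (hc : ∀ v, d₁ v = 0 → c • v ∈ LinearMap.range d₂) : Function.Exact d₂ d₁ := by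
  refine fun v => ⟨fun hv => ?_, by rintro ⟨w, rfl⟩; exact LinearMap.congr_fun d₁_d₂ w⟩
  obtain ⟨p, hp⟩ := ha v hv
  obtain ⟨q, hq⟩ := hb v hv
  obtain ⟨r, hr⟩ := hc v hv
  obtain ⟨pq, hpq⟩ := (exact₂ (b • p - a • q)).1 (by simp only [map_sub, map_smul, hp, hq]; module)
  obtain ⟨pr, hpr⟩ := (exact₂ (c • p - a • r)).1 (by simp only [map_sub, map_smul, hp, hr]; module)
  obtain ⟨qr, hqr⟩ := (exact₂ (c • q - b • r)).1 (by simp only [map_sub, map_smul, hq, hr]; module)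
  have hcycle : a • qr + b • -pr + c • pq = 0 := injective_d₃ <| by
    simp only [map_add, map_neg, map_smul, hpq, hpr, hqr, map_zero]; module
  obtain ⟨-, s, t, -, -, rfl⟩ := h.exists_koszul_of_smul_syzygy hcycle
  simp only [map_sub, map_smul] at hpq
  obtain ⟨w, hw⟩ := h.exists_eq_smul (v := p + d₃ t) (w := q - d₃ s) (by
    linear_combination (norm := module) -hpq)
  refine ⟨w, h.eq_of_smul_eq_smul ?_⟩
  rw [← map_smul, ← hw, map_add, exact₂.apply_apply_eq_zero, add_zero, hp]

end Acyclicity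

section Matrix

universe u

variable {Q : Type u} [CommRing Q] {m l n : ℕ}

/-- Null-homotopies `(eᵢ, H₁ k, H₂ k)`, with `i = s k`, of multiplication by the generator `g i` on
the complex `0 → Qⁿ → Qˡ → Qᵐ → Q` given by the matrices `D₃`, `D₂` and the row `g`. -/
structure NullHomotopies (g : Fin m → Q) (D₂ : Matrix (Fin m) (Fin l) Q)
    (D₃ : Matrix (Fin l) (Fin n) Q) (s : Fin 3 → Fin m) (H₁ : Fin 3 → Matrix (Fin l) (Fin m) Q)
    (H₂ : Fin 3 → Matrix (Fin n) (Fin l) Q) : Prop where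
  d₁_d₂ : ∀ w, (D₂ *ᵥ w) ⬝ᵥ g = 0
  d₂_d₃ : ∀ w, D₂ *ᵥ (D₃ *ᵥ w) = 0
  d₂_H₁ : ∀ k w, D₂ *ᵥ (H₁ k *ᵥ w) = g (s k) • w - (w ⬝ᵥ g) • Pi.single (s k) 1
  d₃_H₂ : ∀ k w, D₃ *ᵥ (H₂ k *ᵥ w) = g (s k) • w - H₁ k *ᵥ (D₂ *ᵥ w)
  H₂_d₃ : ∀ k w, H₂ k *ᵥ (D₃ *ᵥ w) = g (s k) • w

namespace NullHomotopies

variable {g : Fin m → Q} {D₂ : Matrix (Fin m) (Fin l) Q} {D₃ : Matrix (Fin l) (Fin n) Q}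
  {s : Fin 3 → Fin m} {H₁ : Fin 3 → Matrix (Fin l) (Fin m) Q}
  {H₂ : Fin 3 → Matrix (Fin n) (Fin l) Q}

theorem injective_mulVecLin (h : NullHomotopies g D₂ D₃ s H₁ H₂)
    (hr : RegularTriple (g (s 0)) (g (s 1)) (g (s 2))) : Function.Injective D₃.mulVecLin := by
  intro v w hvw
  simp only [mulVecLin_apply] at hvw
  exact hr.eq_of_smul_eq_smul (by rw [← h.H₂_d₃ 0 v, hvw, h.H₂_d₃ 0 w])

theorem smul_mem_range_mulVecLin (h : NullHomotopies g D₂ D₃ s H₁ H₂) (k : Fin 3) (v : Fin l → Q)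
    (hv : D₂.mulVecLin v = 0) : g (s k) • v ∈ LinearMap.range D₃.mulVecLin := by
  rw [mulVecLin_apply] at hv
  exact ⟨H₂ k *ᵥ v, by rw [mulVecLin_apply, h.d₃_H₂, hv, mulVec_zero, sub_zero]⟩

theorem exact_mulVecLin (h : NullHomotopies g D₂ D₃ s H₁ H₂)
    (hr : RegularTriple (g (s 0)) (g (s 1)) (g (s 2))) :
    Function.Exact D₃.mulVecLin D₂.mulVecLin :=
  hr.exact_of_smul_mem_range₂ (h.injective_mulVecLin hr) (LinearMap.ext h.d₂_d₃)
    (h.smul_mem_range_mulVecLin 0) (h.smul_mem_range_mulVecLin 1)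

theorem exact_linearCombination (h : NullHomotopies g D₂ D₃ s H₁ H₂)
    (hr : RegularTriple (g (s 0)) (g (s 1)) (g (s 2))) :
    Function.Exact D₂.mulVecLin (Fintype.linearCombination Q g) := by
  have hmem (k : Fin 3) (v : Fin m → Q) (hv : Fintype.linearCombination Q g v = 0) :
      g (s k) • v ∈ LinearMap.range D₂.mulVecLin :=
    ⟨H₁ k *ᵥ v, by
      rw [mulVecLin_apply, h.d₂_H₁, show v ⬝ᵥ g = 0 from hv, zero_smul, sub_zero]⟩
  exact hr.exact_of_smul_mem_range₁ (h.injective_mulVecLin hr) (h.exact_mulVecLin hr)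
    (LinearMap.ext h.d₁_d₂) (hmem 0) (hmem 1) (hmem 2)

end NullHomotopies

theorem mulVec_mem_smul_top {J : Ideal Q} {A : Matrix (Fin l) (Fin n) Q} (hA : ∀ i j, A i j ∈ J)
    (w : Fin n → Q) : A *ᵥ w ∈ J • (⊤ : Submodule Q (Fin l → Q)) := by
  rw [pi_eq_sum_univ' (A *ᵥ w)]
  exact sum_mem fun i _ => Submodule.smul_mem_smul
    (show ∑ j, A i j * w j ∈ J from sum_mem fun j _ => J.mul_mem_right _ (hA i j))
    Submodule.mem_top

/-- Splits off the first three coordinates. -/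
def splitThree (Q : Type*) [CommRing Q] (p : ℕ) :
    (Fin (p + 3) → Q) ≃ₗ[Q] Q × Q × Q × (Fin p → Q) where
  toFun v := (v 0, v 1, v 2, fun i => v i.succ.succ.succ)
  invFun w := Fin.cons w.1 (Fin.cons w.2.1 (Fin.cons w.2.2.1 w.2.2.2))
  map_add' _ _ := rfl
  map_smul' _ _ := rfl
  left_inv v := by
    funext i
    refine i.cases rfl fun i => i.cases rfl fun i => i.cases rfl fun i => rfl
  right_inv _ := rfl

variable [IsLocalRing Q] {p : ℕ} {g : Fin (p + 3) → Q}
  {D₂ : Matrix (Fin (p + 3)) (Fin l) Q} {D₃ : Matrix (Fin l) (Fin n) Q}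
  {H₁ : Fin 3 → Matrix (Fin l) (Fin (p + 3)) Q} {H₂ : Fin 3 → Matrix (Fin n) (Fin l) Q}

namespace NullHomotopies

/-- The minimal resolution that null-homotopies on a regular triple of generators certify. -/
def minimalResolution {g : Fin m → Q} {D₂ : Matrix (Fin m) (Fin l) Q}
    {s : Fin 3 → Fin m} {H₁ : Fin 3 → Matrix (Fin l) (Fin m) Q}
    (h : NullHomotopies g D₂ D₃ s H₁ H₂) (hr : RegularTriple (g (s 0)) (g (s 1)) (g (s 2)))
    (hg : ∀ i, g i ∈ maximalIdeal Q) (hD₂ : ∀ i j, D₂ i j ∈ maximalIdeal Q)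
    (hD₃ : ∀ i j, D₃ i j ∈ maximalIdeal Q) :
    MinimalResolution (Ideal.span (Set.range g)) (Fin m → Q) (Fin l → Q) (Fin n → Q) where
  d₁ := Fintype.linearCombination Q g
  d₂ := D₂.mulVecLin
  d₃ := D₃.mulVecLin
  range_d₁ := Fintype.range_linearCombination Q g
  exact₁ := h.exact_linearCombination hr
  exact₂ := h.exact_mulVecLin hr
  injective_d₃ := h.injective_mulVecLin hr
  le_maximalIdeal := Ideal.span_le.2 (Set.range_subset_iff.2 hg)
  d₂_mem := mulVec_mem_smul_top hD₂
  d₃_mem := mulVec_mem_smul_top hD₃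

theorem hasMinimalKoszulLift {g : Fin m → Q} {D₂ : Matrix (Fin m) (Fin l) Q}
    {s : Fin 3 → Fin m} {H₁ : Fin 3 → Matrix (Fin l) (Fin m) Q}
    (h : NullHomotopies g D₂ D₃ s H₁ H₂) (hr : RegularTriple (g (s 0)) (g (s 1)) (g (s 2)))
    (hg : ∀ i, g i ∈ maximalIdeal Q) (hD₂ : ∀ i j, D₂ i j ∈ maximalIdeal Q)
    (hD₃ : ∀ i j, D₃ i j ∈ maximalIdeal Q) (hH₁ : ∀ k i j, H₁ k i j ∈ maximalIdeal Q)
    (k : Fin 3) (j : Fin m) :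
    (h.minimalResolution hr hg hD₂ hD₃).HasMinimalKoszulLift (Pi.single (s k) 1)
      (Pi.single j 1) := by
  refine ⟨-(H₁ k *ᵥ Pi.single j 1), neg_mem (mulVec_mem_smul_top (hH₁ k) _), ?_⟩
  simp only [MinimalResolution.IsKoszulLift, minimalResolution, map_neg, mulVecLin_apply, h.d₂_H₁,
    Fintype.linearCombination_apply_single, one_smul, single_one_dotProduct]
  module

theorem hasAdaptedResolution
    (h : NullHomotopies g D₂ D₃ ![0, 1, 2] H₁ H₂) {z : Q} (hz : z ∈ maximalIdeal Q)
    (hr : RegularTriple (g 0) (g 1) z) {N : ℕ} (hN : 1 ≤ N) (hgz : g 2 = z ^ N)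
    (hl : l = p + n + 2) (hg : ∀ i, g i ∈ maximalIdeal Q) (hD₂ : ∀ i j, D₂ i j ∈ maximalIdeal Q)
    (hD₃ : ∀ i j, D₃ i j ∈ maximalIdeal Q) (hH₁ : ∀ k i j, H₁ k i j ∈ maximalIdeal Q) :
    HasAdaptedResolution (Ideal.span (Set.range g)) p n := by
  have hr' : RegularTriple (g 0) (g 1) (g 2) := hgz ▸ hr.pow_last hN
  set R := h.minimalResolution hr' hg hD₂ hD₃
  have hlift := h.hasMinimalKoszulLift hr' hg hD₂ hD₃ hH₁
  set e := splitThree Q p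
  have he₁ : e.symm (1, 0, 0, 0) = Pi.single 0 1 := e.injective (by simp; rfl)
  have he₂ : e.symm (0, 1, 0, 0) = Pi.single 1 1 := e.injective (by simp; rfl)
  have he₃ : e.symm (0, 0, 1, 0) = Pi.single 2 1 := e.injective (by simp; rfl)
  have hd₁ (i : Fin (p + 3)) : R.d₁ (Pi.single i 1) = g i :=
    (Fintype.linearCombination_apply_single ..).trans (one_smul _ _)
  have hadapted : (R.congr e (.refl Q _) (.refl Q _)).IsAdapted z := by
    refine ⟨hz, ?_, ⟨N, hN, ?_⟩, .congr ?_, .congr ?_, .congr ?_⟩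
    · simpa only [R.congr_d₁_apply, he₁, he₂, hd₁] using hr
    · simpa only [R.congr_d₁_apply, he₃, hd₁] using hgz
    · rw [he₁, he₂]; exact hlift 0 1
    · rw [he₁, he₃]; exact hlift 0 2
    · rw [he₂, he₃]; exact hlift 1 2
  exact hadapted.hasAdaptedResolution (by simp) (by simpa using hl) (by simp)

end NullHomotopies

end Matrix

end NullHomotopy

section BaseIdeals

open IsLocalRing Matrix

variable {Q : Type*} [CommRing Q] (x y z : Q)

/-- The generators of the base ideal of format `(1, 5, 9, 5)`. -/
def cubicGens : Fin 5 → Q :=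
  ![x ^ 3, y ^ 3, z ^ 3, x * y * z, x ^ 2 * y + x * z ^ 2 + y ^ 2 * z]

/-- The syzygies of `cubicGens`. -/
def cubicD₂ : Matrix (Fin 5) (Fin 9) Q :=
  !![-y * z, 0, -x * y - z ^ 2, -y ^ 2, -y * z, 0, 0, 0, 0;
     0, -x * z, 0, -x * z, 0, -x ^ 2 - y * z, -z ^ 2, 0, 0;
     0, 0, 0, 0, -x ^ 2, 0, 0, -x * z - y ^ 2, x * y;
     x ^ 2, y ^ 2, -x * y, -x * z, -y * z, -y * z, -x * y - z ^ 2, -x * z, -z ^ 2;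
     0, 0, x ^ 2, x * y, x * z, y ^ 2, y * z, z ^ 2, 0]

/-- The second syzygies of `cubicGens`. -/
def cubicD₃ : Matrix (Fin 9) (Fin 5) Q :=
  !![z, -y, -z, 0, 0;
     -x, 0, 0, -x, -z;
     -y, 0, 0, 0, 0;
     x, z, 0, 0, z;
     0, 0, z, 0, -y;
     0, 0, 0, z, 0;
     0, -x, 0, -y, 0;
     0, 0, -x, 0, 0;
     0, 0, -y, 0, -x]

/-- The first components of null-homotopies for `cubicGens x y z i`, `i = 0, 1, 2`. -/
def cubicH₁ : Fin 3 → Matrix (Fin 9) (Fin 5) Q :=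
  ![!![0, 0, 0, x, y;
       0, 0, 0, 0, 0;
       0, 0, z, 0, x;
       0, y, 0, 0, 0;
       0, 0, -x, 0, 0;
       0, -x, 0, 0, 0;
       0, 0, 0, 0, 0;
       0, 0, 0, 0, 0;
       0, 0, 0, 0, 0],
    !![0, 0, 0, 0, 0;
       0, 0, 0, y, z;
       0, 0, 0, 0, 0;
       -y, 0, 0, 0, 0;
       0, 0, 0, 0, 0;
       x, 0, 0, 0, y;
       0, 0, z, 0, 0;
       0, 0, -y, 0, 0;
       0, 0, -z, 0, 0],
    !![0, 0, 0, 0, 0;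
       0, 0, 0, 0, 0;
       -z, 0, 0, 0, 0;
       0, 0, 0, 0, 0;
       x, 0, 0, 0, 0;
       0, 0, 0, 0, 0;
       0, -z, 0, 0, 0;
       0, y, 0, 0, z;
       0, z, 0, -z, -x]]

/-- The second components of null-homotopies for `cubicGens x y z i`, `i = 0, 1, 2`. -/
def cubicH₂ : Fin 3 → Matrix (Fin 5) (Fin 9) Q :=
  ![!![0, 0, 0, x ^ 2, 0, x * y, x * z, -y * z, x * z;
       0, x * y, 0, x * y, 0, y ^ 2, -x ^ 2 + y * z, 0, 0;
       0, 0, 0, 0, 0, 0, 0, -x ^ 2, 0;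
       0, -x ^ 2, 0, -x ^ 2, 0, -x * y, -x * z, 0, 0;
       0, 0, 0, 0, 0, 0, 0, x * y, -x ^ 2],
    !![0, 0, -y ^ 2, 0, 0, 0, 0, 0, 0;
       -y ^ 2, 0, -y * z, 0, -x * z, 0, 0, -z ^ 2, y * z;
       0, 0, 0, 0, x * y, 0, 0, y * z, -y ^ 2;
       x * y, 0, x * z, 0, 0, 0, -y ^ 2, -y * z, 0;
       0, 0, 0, 0, x * z - y ^ 2, 0, 0, z ^ 2, -y * z],
    !![z ^ 2, 0, x * z, y * z, z ^ 2, 0, 0, 0, 0;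
       0, z ^ 2, 0, z ^ 2, 0, x * z, 0, 0, 0;
       0, -y * z, x * z, 0, z ^ 2, -x * y, 0, 0, 0;
       0, 0, 0, 0, 0, z ^ 2, 0, 0, 0;
       -x * z, -z ^ 2, -x ^ 2, -x * y, -x * z, -x * z, 0, 0, 0]]

/-- The generators of `(x, y, z)²`, the base ideal of format `(1, 6, 8, 3)`. -/
def squareGens : Fin 6 → Q :=
  ![x ^ 2, y ^ 2, z ^ 2, x * y, x * z, y * z]

/-- The syzygies of `squareGens`. -/
def squareD₂ : Matrix (Fin 6) (Fin 8) Q :=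
  !![-y, 0, -z, 0, 0, 0, 0, 0;
     0, -x, 0, 0, 0, 0, -z, 0;
     0, 0, 0, 0, x, 0, 0, -y;
     x, y, 0, -z, 0, -z, 0, 0;
     0, 0, x, y, -z, 0, 0, 0;
     0, 0, 0, 0, 0, x, y, z]

/-- The second syzygies of `squareGens`. -/
def squareD₃ : Matrix (Fin 8) (Fin 3) Q :=
  !![-z, 0, 0;
     0, 0, -z;
     y, 0, 0;
     -x, -z, 0;
     0, -y, 0;
     0, z, -y;
     0, 0, x;
     0, -x, 0]

/-- The first components of null-homotopies for `squareGens x y z i`, `i = 0, 1, 2`. -/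
def squareH₁ : Fin 3 → Matrix (Fin 8) (Fin 6) Q :=
  ![!![0, y, 0, x, 0, z;
       0, -x, 0, 0, 0, 0;
       0, 0, z, 0, x, 0;
       0, 0, 0, 0, 0, 0;
       0, 0, x, 0, 0, 0;
       0, 0, 0, 0, 0, x;
       0, 0, 0, 0, 0, 0;
       0, 0, 0, 0, 0, 0],
    !![-y, 0, 0, 0, 0, 0;
       x, 0, 0, y, z, 0;
       0, 0, 0, 0, 0, 0;
       0, 0, 0, 0, y, 0;
       0, 0, 0, 0, 0, 0;
       0, 0, 0, 0, 0, 0;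
       0, 0, z, 0, 0, y;
       0, 0, -y, 0, 0, 0],
    !![0, 0, 0, 0, 0, 0;
       0, 0, 0, 0, 0, 0;
       -z, 0, 0, 0, 0, 0;
       0, 0, 0, -z, 0, 0;
       -x, 0, 0, -y, -z, 0;
       0, 0, 0, 0, 0, 0;
       0, -z, 0, 0, 0, 0;
       0, y, 0, 0, 0, z]]

/-- The second components of null-homotopies for `squareGens x y z i`, `i = 0, 1, 2`. -/
def squareH₂ : Fin 3 → Matrix (Fin 3) (Fin 8) Q :=
  ![!![0, 0, 0, -x, 0, 0, 0, z;
       0, 0, 0, 0, 0, 0, 0, -x;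
       0, 0, 0, 0, 0, 0, x, 0],
    !![0, 0, y, 0, 0, 0, 0, 0;
       0, 0, 0, 0, -y, 0, 0, 0;
       0, 0, 0, 0, -z, -y, 0, 0],
    !![-z, 0, 0, 0, 0, 0, 0, 0;
       0, -y, 0, 0, 0, z, 0, 0;
       0, -z, 0, 0, 0, 0, 0, 0]]

theorem cubicD₂_mulVec_dotProduct (w) : (cubicD₂ x y z *ᵥ w) ⬝ᵥ cubicGens x y z = 0 := by
  simp [cubicGens, cubicD₂, vecHead, vecTail]
  ring

theorem cubicD₂_mulVec_cubicD₃ (w) :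
    cubicD₂ x y z *ᵥ (cubicD₃ x y z *ᵥ w) = 0 := by
  simp only [cubicD₂, cubicD₃, cons_mulVec, empty_mulVec,
    cons_dotProduct, dotProduct_of_isEmpty, vecHead, vecTail, Function.comp_apply, zero_mul,
    zero_add, add_zero]
  ext i
  fin_cases i <;> simp <;> ring

theorem cubicD₂_mulVec_cubicH₁ (k : Fin 3) (w) :
    cubicD₂ x y z *ᵥ (cubicH₁ x y z k *ᵥ w) = cubicGens x y z (![0, 1, 2] k) • w -
      (w ⬝ᵥ cubicGens x y z) • Pi.single (![0, 1, 2] k) 1 := by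
  rw [dotProduct_comm w]
  fin_cases k
  all_goals
    simp only [cubicGens, cubicD₂, cubicH₁,
      Fin.zero_eta, Fin.mk_one, Fin.reduceFinMk, Matrix.cons_val, cons_mulVec, empty_mulVec,
      cons_dotProduct, dotProduct_of_isEmpty, vecHead, vecTail, Function.comp_apply, zero_mul,
      zero_add, add_zero]
    ext i
    fin_cases i <;> simp <;> ring

theorem cubicD₃_mulVec_cubicH₂ (k : Fin 3) (w) :
    cubicD₃ x y z *ᵥ (cubicH₂ x y z k *ᵥ w) = cubicGens x y z (![0, 1, 2] k) • w -
      cubicH₁ x y z k *ᵥ (cubicD₂ x y z *ᵥ w) := by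
  fin_cases k
  all_goals
    simp only [cubicGens, cubicD₂, cubicD₃, cubicH₁, cubicH₂,
      Fin.zero_eta, Fin.mk_one, Fin.reduceFinMk, Matrix.cons_val, cons_mulVec, empty_mulVec,
      cons_dotProduct, dotProduct_of_isEmpty, vecHead, vecTail, Function.comp_apply, zero_mul,
      zero_add, add_zero]
    ext i
    fin_cases i <;> simp <;> ring

theorem cubicH₂_mulVec_cubicD₃ (k : Fin 3) (w) :
    cubicH₂ x y z k *ᵥ (cubicD₃ x y z *ᵥ w) = cubicGens x y z (![0, 1, 2] k) • w := by
  fin_cases k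
  all_goals
    simp only [cubicGens, cubicD₃, cubicH₂,
      Fin.zero_eta, Fin.mk_one, Fin.reduceFinMk, Matrix.cons_val, cons_mulVec, empty_mulVec,
      cons_dotProduct, dotProduct_of_isEmpty, vecHead, vecTail, Function.comp_apply, zero_mul,
      zero_add, add_zero]
    ext i
    fin_cases i <;> simp <;> ring

theorem nullHomotopies_cubic : NullHomotopies (cubicGens x y z) (cubicD₂ x y z) (cubicD₃ x y z)
    ![0, 1, 2] (cubicH₁ x y z) (cubicH₂ x y z) where
  d₁_d₂ := cubicD₂_mulVec_dotProduct x y z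
  d₂_d₃ := cubicD₂_mulVec_cubicD₃ x y z
  d₂_H₁ := cubicD₂_mulVec_cubicH₁ x y z
  d₃_H₂ := cubicD₃_mulVec_cubicH₂ x y z
  H₂_d₃ := cubicH₂_mulVec_cubicD₃ x y z

theorem squareD₂_mulVec_dotProduct (w) : (squareD₂ x y z *ᵥ w) ⬝ᵥ squareGens x y z = 0 := by
  simp [squareGens, squareD₂, vecHead, vecTail]
  ring

theorem squareD₂_mulVec_squareD₃ (w) :
    squareD₂ x y z *ᵥ (squareD₃ x y z *ᵥ w) = 0 := by
  simp only [squareD₂, squareD₃, cons_mulVec, empty_mulVec,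
    cons_dotProduct, dotProduct_of_isEmpty, vecHead, vecTail, Function.comp_apply, zero_mul,
    zero_add, add_zero]
  ext i
  fin_cases i <;> simp <;> ring

theorem squareD₂_mulVec_squareH₁ (k : Fin 3) (w) :
    squareD₂ x y z *ᵥ (squareH₁ x y z k *ᵥ w) = squareGens x y z (![0, 1, 2] k) • w -
      (w ⬝ᵥ squareGens x y z) • Pi.single (![0, 1, 2] k) 1 := by
  rw [dotProduct_comm w]
  fin_cases k
  all_goals
    simp only [squareGens, squareD₂, squareH₁,
      Fin.zero_eta, Fin.mk_one, Fin.reduceFinMk, Matrix.cons_val, cons_mulVec, empty_mulVec,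
      cons_dotProduct, dotProduct_of_isEmpty, vecHead, vecTail, Function.comp_apply, zero_mul,
      zero_add, add_zero]
    ext i
    fin_cases i <;> simp <;> ring

theorem squareD₃_mulVec_squareH₂ (k : Fin 3) (w) :
    squareD₃ x y z *ᵥ (squareH₂ x y z k *ᵥ w) = squareGens x y z (![0, 1, 2] k) • w -
      squareH₁ x y z k *ᵥ (squareD₂ x y z *ᵥ w) := by
  fin_cases k
  all_goals
    simp only [squareGens, squareD₂, squareD₃, squareH₁, squareH₂,
      Fin.zero_eta, Fin.mk_one, Fin.reduceFinMk, Matrix.cons_val, cons_mulVec, empty_mulVec,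
      cons_dotProduct, dotProduct_of_isEmpty, vecHead, vecTail, Function.comp_apply, zero_mul,
      zero_add, add_zero]
    ext i
    fin_cases i <;> simp <;> ring

theorem squareH₂_mulVec_squareD₃ (k : Fin 3) (w) :
    squareH₂ x y z k *ᵥ (squareD₃ x y z *ᵥ w) = squareGens x y z (![0, 1, 2] k) • w := by
  fin_cases k
  all_goals
    simp only [squareGens, squareD₃, squareH₂,
      Fin.zero_eta, Fin.mk_one, Fin.reduceFinMk, Matrix.cons_val, cons_mulVec, empty_mulVec,
      cons_dotProduct, dotProduct_of_isEmpty, vecHead, vecTail, Function.comp_apply, zero_mul,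
      zero_add, add_zero]
    ext i
    fin_cases i <;> simp <;> ring

theorem nullHomotopies_square : NullHomotopies (squareGens x y z) (squareD₂ x y z) (squareD₃ x y z)
    ![0, 1, 2] (squareH₁ x y z) (squareH₂ x y z) where
  d₁_d₂ := squareD₂_mulVec_dotProduct x y z
  d₂_d₃ := squareD₂_mulVec_squareD₃ x y z
  d₂_H₁ := squareD₂_mulVec_squareH₁ x y z
  d₃_H₂ := squareD₃_mulVec_squareH₂ x y z
  H₂_d₃ := squareH₂_mulVec_squareD₃ x y z

end BaseIdeals

section BaseIdealFormats

open IsLocalRing Matrix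

section Entries

variable {Q : Type*} [CommRing Q] {x y z : Q} {J : Ideal Q}

theorem squareGens_mem_sq (hx : x ∈ J) (hy : y ∈ J) (hz : z ∈ J) (i) :
    squareGens x y z i ∈ J ^ 2 := by
  rw [pow_two]
  fin_cases i <;> simp [squareGens, pow_two, Ideal.mul_mem_mul, hx, hy, hz]

theorem cubicD₂_mem_sq (hx : x ∈ J) (hy : y ∈ J) (hz : z ∈ J) (i j) :
    cubicD₂ x y z i j ∈ J ^ 2 := by
  have hxx := Ideal.mul_mem_mul hx hx
  have hxy := Ideal.mul_mem_mul hx hy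
  have hxz := Ideal.mul_mem_mul hx hz
  have hyy := Ideal.mul_mem_mul hy hy
  have hyz := Ideal.mul_mem_mul hy hz
  have hzz := Ideal.mul_mem_mul hz hz
  rw [pow_two]
  fin_cases i <;> fin_cases j <;> simp [cubicD₂, pow_two, sub_mem, *]

theorem cubicGens_mem_cube (hx : x ∈ J) (hy : y ∈ J) (hz : z ∈ J) (i) :
    cubicGens x y z i ∈ J ^ 3 := by
  have h₃ {a b c : Q} (ha : a ∈ J) (hb : b ∈ J) (hc : c ∈ J) : a * b * c ∈ J * J * J :=
    Ideal.mul_mem_mul (Ideal.mul_mem_mul ha hb) hc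
  have hsum : x * x * y + x * z * z + y * y * z ∈ J * J * J :=
    add_mem (add_mem (h₃ hx hx hy) (h₃ hx hz hz)) (h₃ hy hy hz)
  rw [pow_three']
  fin_cases i <;> simp [cubicGens, pow_three', pow_two, ← mul_assoc, hsum, h₃, hx, hy, hz]

theorem cubicD₃_mem (hx : x ∈ J) (hy : y ∈ J) (hz : z ∈ J) (i j) :
    cubicD₃ x y z i j ∈ J := by
  fin_cases i <;> fin_cases j <;> simp [cubicD₃, hx, hy, hz]

theorem cubicH₁_mem (hx : x ∈ J) (hy : y ∈ J) (hz : z ∈ J) (k i j) :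
    cubicH₁ x y z k i j ∈ J := by
  fin_cases k <;> fin_cases i <;> fin_cases j <;> simp [cubicH₁, hx, hy, hz]

theorem squareD₂_mem (hx : x ∈ J) (hy : y ∈ J) (hz : z ∈ J) (i j) :
    squareD₂ x y z i j ∈ J := by
  fin_cases i <;> fin_cases j <;> simp [squareD₂, hx, hy, hz]

theorem squareD₃_mem (hx : x ∈ J) (hy : y ∈ J) (hz : z ∈ J) (i j) :
    squareD₃ x y z i j ∈ J := by
  fin_cases i <;> fin_cases j <;> simp [squareD₃, hx, hy, hz]

theorem squareH₁_mem (hx : x ∈ J) (hy : y ∈ J) (hz : z ∈ J) (k i j) :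
    squareH₁ x y z k i j ∈ J := by
  fin_cases k <;> fin_cases i <;> fin_cases j <;> simp [squareH₁, hx, hy, hz]

end Entries

variable {Q : Type*} [CommRing Q] [IsLocalRing Q] [IsNoetherianRing Q] {x y z : Q}

theorem RegularTriple.hasAdaptedResolution_cubic (h : RegularTriple x y z)
    (hx : x ∈ maximalIdeal Q) (hy : y ∈ maximalIdeal Q) (hz : z ∈ maximalIdeal Q) :
    HasAdaptedResolution (Ideal.span (Set.range (cubicGens x y z))) 2 5 :=
  (nullHomotopies_cubic x y z).hasAdaptedResolution hz
    (by
      simpa [cubicGens] using h.pow hx hy hz (i := 3) (j := 3) (l := 1) (by simp) (by simp) le_rfl)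
    (N := 3) (by simp) rfl rfl
    (fun i => Ideal.pow_le_self (by simp) (cubicGens_mem_cube hx hy hz i))
    (fun i j => Ideal.pow_le_self (by simp) (cubicD₂_mem_sq hx hy hz i j))
    (cubicD₃_mem hx hy hz) (cubicH₁_mem hx hy hz)

theorem RegularTriple.hasAdaptedResolution_square (h : RegularTriple x y z)
    (hx : x ∈ maximalIdeal Q) (hy : y ∈ maximalIdeal Q) (hz : z ∈ maximalIdeal Q) :
    HasAdaptedResolution (Ideal.span (Set.range (squareGens x y z))) 3 3 :=
  (nullHomotopies_square x y z).hasAdaptedResolution hz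
    (by
      simpa [squareGens] using h.pow hx hy hz (i := 2) (j := 2) (l := 1) (by simp) (by simp) le_rfl)
    (N := 2) (by simp) rfl rfl
    (fun i => Ideal.pow_le_self (by simp) (squareGens_mem_sq hx hy hz i))
    (squareD₂_mem hx hy hz) (squareD₃_mem hx hy hz) (squareH₁_mem hx hy hz)

end BaseIdealFormats

section Socle

open IsLocalRing

variable {Q : Type*} [CommRing Q] {x y z a b c s t : Q}

/-- The middle differential of the Koszul complex of `a, b, c`. -/
def koszulD₂ (a b c : Q) : (Fin 3 → Q) →ₗ[Q] (Fin 3 → Q) :=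
  Matrix.mulVecLin !![b, c, 0; -a, 0, c; 0, -a, -b]

theorem koszulD₂_apply (v : Fin 3 → Q) :
    koszulD₂ a b c v = ![b * v 0 + c * v 1, -a * v 0 + c * v 2, -a * v 1 - b * v 2] := by
  ext i
  fin_cases i <;> simp [koszulD₂, Matrix.mulVec, dotProduct, Fin.sum_univ_three, sub_eq_add_neg]

theorem linearCombination_koszulD₂ (v : Fin 3 → Q) :
    Fintype.linearCombination Q ![a, b, c] (koszulD₂ a b c v) = 0 := by
  simp only [koszulD₂_apply, Fintype.linearCombination_apply, Fin.sum_univ_three, smul_eq_mul,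
    Matrix.cons_val]
  ring

theorem koszulD₂_koszulD₃ : koszulD₂ a b c ![c, -b, a] = 0 := by
  rw [koszulD₂_apply]
  ext i
  fin_cases i <;> simp <;> ring

theorem mem_span_triple_iff_exists_linearCombination :
    s ∈ Ideal.span {a, b, c} ↔ ∃ v, Fintype.linearCombination Q ![a, b, c] v = s := by
  rw [← LinearMap.mem_range, Fintype.range_linearCombination, Matrix.range_cons,
    Matrix.range_cons_cons_empty]
  rfl

theorem RegularTriple.exists_koszulD₂_eq (h : RegularTriple a b c) {v : Fin 3 → Q}
    (hv : Fintype.linearCombination Q ![a, b, c] v = 0) : ∃ w, koszulD₂ a b c w = v := by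
  simp only [Fintype.linearCombination_apply, Fin.sum_univ_three, smul_eq_mul,
    Matrix.cons_val] at hv
  obtain ⟨p, q, r, h₀, h₁, h₂⟩ := h.exists_koszul_of_syzygy (u := v 0) (v := v 1) (w := v 2)
    (by linear_combination hv)
  refine ⟨![p, q, r], ?_⟩
  rw [koszulD₂_apply]
  ext i
  fin_cases i <;> simp [h₀, h₁, h₂]

theorem RegularTriple.exists_eq_smul_koszulD₃ (h : RegularTriple a b c) {v : Fin 3 → Q}
    (hv : koszulD₂ a b c v = 0) : ∃ t : Q, v = t • ![c, -b, a] := by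
  rw [koszulD₂_apply] at hv
  obtain ⟨t, h₀, h₁, h₂⟩ := h.exists_koszul_of_secondSyzygy (p := v 0) (q := v 1) (r := v 2)
    (congrFun hv 1) (congrFun hv 2)
  refine ⟨t, ?_⟩
  ext i
  fin_cases i <;> simp [h₀, h₁, h₂, mul_comm]

/-- Multiplication by `s` lifts to a morphism from the Koszul complex of `x, y, z` to that of
`a, b, c`, given in degree one by `u, v, w`, in degree two by `p, q, r` and in degree three by
multiplication by `t`. -/
def IsKoszulLiftOfMul (x y z a b c s t : Q) : Prop :=
  ∃ u v w p q r : Fin 3 → Q,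
    Fintype.linearCombination Q ![a, b, c] u = x * s ∧
    Fintype.linearCombination Q ![a, b, c] v = y * s ∧
    Fintype.linearCombination Q ![a, b, c] w = z * s ∧
    koszulD₂ a b c p = y • u - x • v ∧
    koszulD₂ a b c q = z • u - x • w ∧
    koszulD₂ a b c r = z • v - y • w ∧
    x • r - y • q + z • p = t • ![c, -b, a]

namespace IsKoszulLiftOfMul

theorem sub_mul {s' t' : Q} (h : IsKoszulLiftOfMul x y z a b c s t)
    (h' : IsKoszulLiftOfMul x y z a b c s' t') (e : Q) :
    IsKoszulLiftOfMul x y z a b c (s - e * s') (t - e * t') := by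
  obtain ⟨u, v, w, p, q, r, hu, hv, hw, hp, hq, hr, ht⟩ := h
  obtain ⟨u', v', w', p', q', r', hu', hv', hw', hp', hq', hr', ht'⟩ := h'
  refine ⟨u - e • u', v - e • v', w - e • w', p - e • p', q - e • q', r - e • r', ?_, ?_, ?_,
    ?_, ?_, ?_, by linear_combination (norm := module) ht - e • ht'⟩ <;>
    simp only [map_sub, map_smul, hu, hu', hv, hv', hw, hw', hp, hp', hq, hq', hr, hr',
      smul_eq_mul]
  · ring
  · ring
  · ring
  · module
  · module
  · module

theorem mem_span_of_mem_span (h : IsKoszulLiftOfMul x y z a b c s t) (hx : RegularTriple x y z)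
    (ht : t ∈ Ideal.span {x, y, z}) : s ∈ Ideal.span {a, b, c} := by
  obtain ⟨u, v, w, p, q, r, hu, -, -, hp, -, -, hpqr⟩ := h
  obtain ⟨t₁, t₂, t₃, rfl⟩ := mem_span_triple_iff.1 ht
  set κ : Fin 3 → Q := ![c, -b, a]
  have hκ : koszulD₂ a b c κ = 0 := koszulD₂_koszulD₃
  obtain ⟨i, j, k, -, -, hijk⟩ := hx.exists_koszul_of_smul_syzygy
    (u := r - t₁ • κ) (v := -(q + t₂ • κ)) (w := p - t₃ • κ)
    (by linear_combination (norm := module) hpqr)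
  have hpijk : koszulD₂ a b c p = -x • koszulD₂ a b c j - y • koszulD₂ a b c k := by
    simpa only [map_sub, map_smul, hκ, smul_zero, sub_zero] using congrArg (koszulD₂ a b c) hijk
  obtain ⟨g, hg⟩ := hx.exists_eq_smul (v := u + koszulD₂ a b c k) (w := v - koszulD₂ a b c j)
    (by linear_combination (norm := module) hpijk - hp)
  refine mem_span_triple_iff_exists_linearCombination.2 ⟨g, hx.eq_of_mul_eq_mul ?_⟩
  have := congrArg (Fintype.linearCombination Q ![a, b, c]) hg
  rw [map_add, linearCombination_koszulD₂, hu, map_smul, smul_eq_mul] at this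
  linear_combination -this

end IsKoszulLiftOfMul

theorem RegularTriple.exists_isKoszulLiftOfMul (h : RegularTriple a b c)
    (hx : x * s ∈ Ideal.span {a, b, c}) (hy : y * s ∈ Ideal.span {a, b, c})
    (hz : z * s ∈ Ideal.span {a, b, c}) : ∃ t, IsKoszulLiftOfMul x y z a b c s t := by
  rw [mem_span_triple_iff_exists_linearCombination] at hx hy hz
  obtain ⟨u, hu⟩ := hx
  obtain ⟨v, hv⟩ := hy
  obtain ⟨w, hw⟩ := hz
  obtain ⟨p, hp⟩ := h.exists_koszulD₂_eq (v := y • u - x • v)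
    (by simp only [map_sub, map_smul, hu, hv, smul_eq_mul]; ring)
  obtain ⟨q, hq⟩ := h.exists_koszulD₂_eq (v := z • u - x • w)
    (by simp only [map_sub, map_smul, hu, hw, smul_eq_mul]; ring)
  obtain ⟨r, hr⟩ := h.exists_koszulD₂_eq (v := z • v - y • w)
    (by simp only [map_sub, map_smul, hv, hw, smul_eq_mul]; ring)
  obtain ⟨t, ht⟩ := h.exists_eq_smul_koszulD₃ (v := x • r - y • q + z • p)
    (by simp only [map_sub, map_add, map_smul, hp, hq, hr]; module)
  exact ⟨t, u, v, w, p, q, r, hu, hv, hw, hp, hq, hr, ht⟩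

variable [IsLocalRing Q]

/-- The socle of `A` is at most one-dimensional over the residue field of `Q`. -/
def SocleLeOne (Q A : Type*) [CommRing Q] [IsLocalRing Q] [AddCommGroup A] [Module Q A] : Prop :=
  ∀ s s' : A, (∀ m ∈ maximalIdeal Q, m • s = 0) → (∀ m ∈ maximalIdeal Q, m • s' = 0) →
    s ≠ 0 → ∃ e : Q, s' = e • s

theorem RegularTriple.socleLeOne_quotient (h : RegularTriple a b c) (hx : RegularTriple x y z)
    (hmax : maximalIdeal Q = Ideal.span {x, y, z}) :
    SocleLeOne Q (Q ⧸ Ideal.span {a, b, c}) := by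
  have exists_lift (s : Q)
      (hs : ∀ m ∈ maximalIdeal Q, m • Ideal.Quotient.mk (.span {a, b, c}) s = 0) :
      ∃ t, IsKoszulLiftOfMul x y z a b c s t := by
    have mul_mem : ∀ m ∈ ({x, y, z} : Set Q), m * s ∈ Ideal.span {a, b, c} := fun m hm =>
      Ideal.Quotient.eq_zero_iff_mem.1 (hs m (hmax ▸ Ideal.subset_span hm))
    exact h.exists_isKoszulLiftOfMul (mul_mem x (by simp)) (mul_mem y (by simp))
      (mul_mem z (by simp))
  intro s s' hs hs' hs₀
  obtain ⟨s, rfl⟩ := Ideal.Quotient.mk_surjective s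
  obtain ⟨s', rfl⟩ := Ideal.Quotient.mk_surjective s'
  obtain ⟨t, ht⟩ := exists_lift s hs
  obtain ⟨t', ht'⟩ := exists_lift s' hs'
  have ht_unit : IsUnit t := by
    by_contra hu
    exact hs₀ (Ideal.Quotient.eq_zero_iff_mem.2
      (ht.mem_span_of_mem_span hx (hmax ▸ (mem_maximalIdeal _).2 hu)))
  obtain ⟨e, he⟩ := ht_unit.exists_left_inv
  refine ⟨t' * e, Ideal.Quotient.eq.2 ((ht'.sub_mul ht (t' * e)).mem_span_of_mem_span hx ?_)⟩
  rw [mul_assoc, he, mul_one, sub_self]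
  exact zero_mem _

end Socle

section Length

open IsLocalRing Module

variable {Q : Type*} [CommRing Q] {A M N : Type*} [AddCommGroup A] [Module Q A]
  [AddCommGroup M] [Module Q M] [AddCommGroup N] [Module Q N]

theorem length_le_one_of_forall_exists_eq_smul
    (h : ∀ v w : M, v ≠ 0 → ∃ r : Q, w = r • v) : length Q M ≤ 1 := by
  cases subsingleton_or_nontrivial M
  · simp
  · have : IsSimpleModule Q M := isSimpleModule_iff_toSpanSingleton_surjective.2
      ⟨inferInstance, fun v hv w => (h v w hv).imp fun r hr => by simp [hr]⟩
    exact (length_eq_one Q M).le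

theorem length_eq_length_add_length_quotient (N : Submodule Q M) :
    length Q M = length Q N + length Q (M ⧸ N) :=
  length_eq_add_of_exact N.subtype N.mkQ N.subtype_injective N.mkQ_surjective
    (LinearMap.exact_subtype_mkQ N)

theorem length_eq_length_ker_add_length_range (f : M →ₗ[Q] N) :
    length Q M = length Q (LinearMap.ker f) + length Q (LinearMap.range f) := by
  rw [length_eq_length_add_length_quotient (LinearMap.ker f), f.quotKerEquivRange.length_eq]

theorem SocleLeOne.length_ker_lcomp_le_one [IsLocalRing Q] (hA : SocleLeOne Q A)
    (N : Submodule Q M) [IsSimpleModule Q (M ⧸ N)] :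
    length Q (LinearMap.ker (LinearMap.lcomp Q A N.subtype)) ≤ 1 := by
  have := IsSimpleModule.nontrivial Q (M ⧸ N)
  obtain ⟨q, hq⟩ := exists_ne (0 : M ⧸ N)
  obtain ⟨e, rfl⟩ := N.mkQ_surjective q
  have hgen (v : M) : ∃ r : Q, v - r • e ∈ N := by
    obtain ⟨r, hr⟩ := IsSimpleModule.toSpanSingleton_surjective Q hq (N.mkQ v)
    exact ⟨r, (Submodule.Quotient.eq N).1 hr.symm⟩
  have hann (m : Q) (hm : m ∈ maximalIdeal Q) : m • e ∈ N := by
    rw [← eq_maximalIdeal (IsSimpleModule.annihilator_isMaximal (R := Q) (M := M ⧸ N)),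
      Module.mem_annihilator] at hm
    exact (Submodule.Quotient.mk_eq_zero N).1 (hm (N.mkQ e))
  have hN (f : LinearMap.ker (LinearMap.lcomp Q A N.subtype)) (v : M) (hv : v ∈ N) : f.1 v = 0 :=
    LinearMap.congr_fun f.2 ⟨v, hv⟩
  have hval (f : LinearMap.ker (LinearMap.lcomp Q A N.subtype)) {v : M} {r : Q}
      (hv : v - r • e ∈ N) : f.1 v = r • f.1 e := by
    simpa only [map_sub, map_smul, sub_eq_zero] using hN f _ hv
  have hsocle (f : LinearMap.ker (LinearMap.lcomp Q A N.subtype)) (m : Q)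
      (hm : m ∈ maximalIdeal Q) : m • f.1 e = 0 := by
    rw [← map_smul, hN f _ (hann m hm)]
  refine length_le_one_of_forall_exists_eq_smul fun f g hf => ?_
  have hfe : f.1 e ≠ 0 := fun hfe => hf <| Subtype.ext <| LinearMap.ext fun v => by
    obtain ⟨r, hr⟩ := hgen v
    simp [hval f hr, hfe]
  obtain ⟨r, hr⟩ := hA _ _ (hsocle f) (hsocle g) hfe
  refine ⟨r, Subtype.ext <| LinearMap.ext fun v => ?_⟩
  obtain ⟨t, ht⟩ := hgen v
  rw [hval g ht, hr, Submodule.coe_smul, LinearMap.smul_apply, hval f ht, smul_comm]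

theorem SocleLeOne.length_linearMap_le [IsLocalRing Q] (hA : SocleLeOne Q A)
    (hM : IsFiniteLength Q M) : length Q (M →ₗ[Q] A) ≤ length Q M := by
  induction hM with
  | of_subsingleton => simp
  | @of_simple_quotient M _ _ N _ _ ih =>
    rw [length_eq_length_ker_add_length_range (LinearMap.lcomp Q A N.subtype),
      length_eq_length_add_length_quotient N, length_eq_one Q (M ⧸ N), add_comm]
    exact add_le_add ((length_le_of_injective _ (Submodule.subtype_injective _)).trans ih)
      (hA.length_ker_lcomp_le_one N)

theorem RegularTriple.length_quotient_ne_top [IsLocalRing Q] [IsNoetherianRing Q]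
    {x y z a b c : Q} (h : RegularTriple a b c) (ha : a ∈ maximalIdeal Q)
    (hb : b ∈ maximalIdeal Q) (hc : c ∈ maximalIdeal Q) (hx : RegularTriple x y z)
    (hmax : maximalIdeal Q = Ideal.span {x, y, z}) :
    length Q (Q ⧸ Ideal.span {a, b, c}) ≠ ⊤ := by
  have mem_max : ∀ m ∈ ({x, y, z} : Set Q), m ∈ maximalIdeal Q := fun m hm =>
    hmax ▸ Ideal.subset_span hm
  have hdimx := ringKrullDim_add_length_eq_ringKrullDim_of_isRegular [x, y, z]
    ((regularTriple_iff_isRegular (mem_max x (by simp)) (mem_max y (by simp))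
      (mem_max z (by simp))).1 hx)
  have hdima := ringKrullDim_add_length_eq_ringKrullDim_of_isRegular [a, b, c]
    ((regularTriple_iff_isRegular ha hb hc).1 h)
  have ofList_eq (a b c : Q) : Ideal.ofList [a, b, c] = Ideal.span {a, b, c} := by
    simp only [Ideal.ofList_cons, Ideal.ofList_nil, sup_bot_eq, Ideal.span_insert]
  have hdim : ringKrullDim (Q ⧸ Ideal.span {a, b, c}) = 0 := by
    rw [← hdimx, ofList_eq, ofList_eq, ← hmax, show ringKrullDim (Q ⧸ maximalIdeal Q) = 0 from
      ringKrullDim_eq_zero_of_field (ResidueField Q)] at hdima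
    exact ENat.WithBot.add_natCast_cancel.1 hdima
  have : Ring.KrullDimLE 0 (Q ⧸ Ideal.span {a, b, c}) := Ring.krullDimLE_iff.2 hdim.le
  have : IsArtinianRing (Q ⧸ Ideal.span {a, b, c}) :=
    isArtinianRing_iff_isNoetherianRing_krullDimLE_zero.2 ⟨inferInstance, this⟩
  rw [length_eq_of_surjective (R := Q ⧸ Ideal.span {a, b, c}) Ideal.Quotient.mk_surjective]
  exact length_ne_top

end Length

section ArtinGorenstein

open IsLocalRing Module

variable {Q : Type*} [CommRing Q] {A M N P : Type*} [AddCommGroup A] [Module Q A]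
  [AddCommGroup M] [Module Q M] [AddCommGroup N] [Module Q N] [AddCommGroup P] [Module Q P]

theorem exists_comp_rangeRestrict_eq (f : M →ₗ[Q] N) {φ : M →ₗ[Q] P}
    (hφ : LinearMap.ker f ≤ LinearMap.ker φ) :
    ∃ g : LinearMap.range f →ₗ[Q] P, ∀ v, g (f.rangeRestrict v) = φ v :=
  ⟨(LinearMap.ker f).liftQ φ hφ ∘ₗ f.quotKerEquivRange.symm, fun v => by
    have : f.quotKerEquivRange.symm (f.rangeRestrict v) = Submodule.Quotient.mk v :=
      f.quotKerEquivRange.injective (by ext; simp)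
    simp [this]⟩

theorem length_submodule_le (N : Submodule Q M) : length Q N ≤ length Q M :=
  length_le_of_injective _ N.subtype_injective

theorem length_quotient_le (N : Submodule Q M) : length Q (M ⧸ N) ≤ length Q M :=
  length_le_of_surjective _ N.mkQ_surjective

theorem eq_top_of_length_le {N : Submodule Q M} (hM : length Q M ≠ ⊤)
    (h : length Q M ≤ length Q N) : N = ⊤ := by
  obtain ⟨_, _⟩ := isFiniteLength_iff_isNoetherian_isArtinian.1 (length_ne_top_iff.1 hM)
  by_contra hN
  exact (Submodule.length_lt hN).not_ge h

theorem length_ker_lcomp_subtype_le (N : Submodule Q M) :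
    length Q (LinearMap.ker (LinearMap.lcomp Q P N.subtype)) ≤ length Q (M ⧸ N →ₗ[Q] P) := by
  rw [(LinearMap.exact_lcomp_of_exact_of_surjective P (LinearMap.exact_subtype_mkQ N)
    N.mkQ_surjective).linearMap_ker_eq]
  exact length_le_of_surjective _ (LinearMap.surjective_rangeRestrict _)

-- `Hom(-, A)` does not increase lengths, so counting lengths in
-- `0 → Hom(A ⧸ N, A) → Hom(A, A) → Hom(N, A)` leaves no room for a cokernel.
theorem SocleLeOne.surjective_lcomp_subtype [IsLocalRing Q] (hA : SocleLeOne Q A)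
    (hfin : length Q A ≠ ⊤) (hend : length Q A ≤ length Q (A →ₗ[Q] A)) (N : Submodule Q A) :
    Function.Surjective (LinearMap.lcomp Q A N.subtype) ∧
      length Q (N →ₗ[Q] A) = length Q N := by
  have finN := ne_top_of_le_ne_top hfin (length_submodule_le N)
  have finAN := ne_top_of_le_ne_top hfin (length_quotient_le N)
  have hN := hA.length_linearMap_le (length_ne_top_iff.1 finN)
  have hAN := hA.length_linearMap_le (length_ne_top_iff.1 finAN)
  have hrange : length Q N ≤ length Q (LinearMap.range (LinearMap.lcomp Q A N.subtype)) := by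
    rw [length_eq_length_ker_add_length_range (LinearMap.lcomp Q A N.subtype),
      length_eq_length_add_length_quotient N, add_comm] at hend
    exact (ENat.add_le_add_iff_left finAN).1
      (hend.trans (by gcongr; exact (length_ker_lcomp_subtype_le N).trans hAN))
  exact ⟨LinearMap.range_eq_top.1 (eq_top_of_length_le (ne_top_of_le_ne_top finN hN)
    (hN.trans hrange)), hN.antisymm (hrange.trans (length_submodule_le _))⟩

theorem length_quotient_le_length_end (α : Ideal Q) :
    length Q (Q ⧸ α) ≤ length Q (Q ⧸ α →ₗ[Q] Q ⧸ α) :=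
  length_le_of_injective (LinearMap.mul Q (Q ⧸ α)) fun s t hst => by
    simpa using LinearMap.congr_fun hst 1

theorem linearMap_quotient_apply {α : Ideal Q} (f : Q ⧸ α →ₗ[Q] M) (r : Q) :
    f (Submodule.Quotient.mk r) = r • f (Submodule.Quotient.mk 1) := by
  rw [← map_smul, ← Submodule.Quotient.mk_smul, smul_eq_mul, mul_one]

/-- The image of `I` in `Q ⧸ α`. -/
abbrev imageQuotient (α I : Ideal Q) : Submodule Q (Q ⧸ α) :=
  LinearMap.range (α.mkQ ∘ₗ I.subtype)

theorem length_imageQuotient_add {α I : Ideal Q} (hI : α ≤ I) :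
    length Q (imageQuotient α I) + length Q (Q ⧸ I) = length Q (Q ⧸ α) := by
  have hker : LinearMap.ker (Submodule.factor hI) = imageQuotient α I := by
    rw [imageQuotient, LinearMap.range_comp, Submodule.range_subtype, Submodule.factor,
      Submodule.ker_mapQ, Submodule.comap_id]
  rw [length_eq_length_ker_add_length_range (Submodule.factor hI), hker,
    LinearMap.range_eq_top.2 (Submodule.factor_surjective hI), length_top]

theorem eq_of_le_of_length_quotient_le {α I : Ideal Q} (hI : α ≤ I)
    (hfin : length Q (Q ⧸ I) ≠ ⊤) (h : length Q (Q ⧸ α) ≤ length Q (Q ⧸ I)) : α = I := by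
  rw [← length_imageQuotient_add hI] at h
  have hlen : length Q (imageQuotient α I) ≤ 0 :=
    (ENat.add_le_add_iff_right hfin).1 (by rwa [zero_add])
  have hbot : imageQuotient α I = ⊥ :=
    Submodule.subsingleton_iff_eq_bot.1 (length_eq_zero_iff.1 (nonpos_iff_eq_zero.1 hlen))
  exact hI.antisymm fun i hi => (Submodule.Quotient.mk_eq_zero α).1
    (LinearMap.congr_fun (LinearMap.range_eq_bot.1 hbot) ⟨i, hi⟩)

/-- The quotient `Q ⧸ α` is an Artinian ring whose socle is at most one-dimensional, that is, it
is zero or Gorenstein. -/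
structure IsArtinGorenstein [IsLocalRing Q] (α : Ideal Q) : Prop where
  socleLeOne : SocleLeOne Q (Q ⧸ α)
  length_ne_top : length Q (Q ⧸ α) ≠ ⊤

namespace IsArtinGorenstein

variable [IsLocalRing Q] {α I : Ideal Q}

theorem exists_forall_eq_smul (h : IsArtinGorenstein α) {N : Submodule Q (Q ⧸ α)}
    (g : N →ₗ[Q] Q ⧸ α) : ∃ s : Q, ∀ v : N, g v = s • v.1 := by
  obtain ⟨f, rfl⟩ := (h.socleLeOne.surjective_lcomp_subtype h.length_ne_top
    (length_quotient_le_length_end α) N).1 g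
  obtain ⟨s, hs⟩ := α.mkQ_surjective (f (Submodule.Quotient.mk 1))
  refine ⟨s, fun ⟨v, hv⟩ => ?_⟩
  obtain ⟨r, rfl⟩ := Submodule.Quotient.mk_surjective _ v
  rw [LinearMap.lcomp_apply, Submodule.subtype_apply, linearMap_quotient_apply, ← hs,
    Submodule.mkQ_apply, ← Submodule.Quotient.mk_smul, ← Submodule.Quotient.mk_smul, smul_eq_mul,
    smul_eq_mul, mul_comm]

theorem exists_eq_mul (h : IsArtinGorenstein α) {φ : I →ₗ[Q] Q ⧸ α}
    (hφ : ∀ i : I, i.1 ∈ α → φ i = 0) :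
    ∃ s : Q, ∀ i : I, φ i = Submodule.Quotient.mk (i.1 * s) := by
  obtain ⟨g, hg⟩ := exists_comp_rangeRestrict_eq (α.mkQ ∘ₗ I.subtype) (φ := φ)
    fun i hi => hφ i ((Submodule.Quotient.mk_eq_zero α).1 hi)
  obtain ⟨s, hs⟩ := h.exists_forall_eq_smul g
  exact ⟨s, fun i => by rw [← hg, hs, mul_comm]; rfl⟩

theorem length_add_length_colon (h : IsArtinGorenstein α) (hI : α ≤ I) :
    length Q (Q ⧸ I) + length Q (Q ⧸ Submodule.colon α I) = length Q (Q ⧸ α) := by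
  let N := imageQuotient α I
  let μ : Q →ₗ[Q] (N →ₗ[Q] Q ⧸ α) := LinearMap.toSpanSingleton Q _ N.subtype
  have hμ : Function.Surjective μ := fun g => by
    obtain ⟨s, hs⟩ := h.exists_forall_eq_smul g
    exact ⟨s, LinearMap.ext fun v => (hs v).symm⟩
  have hker : LinearMap.ker μ = Submodule.colon α I := by
    ext s
    rw [Submodule.mem_colon, LinearMap.mem_ker]
    refine ⟨fun hs i hi => (Submodule.Quotient.mk_eq_zero α).1
      (LinearMap.congr_fun hs ⟨_, ⟨i, hi⟩, rfl⟩), fun hs => LinearMap.ext ?_⟩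
    rintro ⟨_, i, rfl⟩
    exact (Submodule.Quotient.mk_eq_zero α).2 (hs i i.2)
  rw [← hker, (μ.quotKerEquivOfSurjective hμ).length_eq, (h.socleLeOne.surjective_lcomp_subtype
    h.length_ne_top (length_quotient_le_length_end α) N).2, add_comm, length_imageQuotient_add hI]

theorem colon_colon (h : IsArtinGorenstein α) (hI : α ≤ I) :
    Submodule.colon α (Submodule.colon α I : Ideal Q) = I := by
  set J : Ideal Q := Submodule.colon α I
  have hJ : α ≤ J := fun r hr => Submodule.mem_colon.2 fun _ _ => α.mul_mem_right _ hr
  have hIJ := h.length_add_length_colon hI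
  have hJJ := h.length_add_length_colon hJ
  have hle : I ≤ Submodule.colon α J := fun i hi =>
    Submodule.mem_colon.2 fun j hj => by
      rw [smul_eq_mul, mul_comm]
      exact Submodule.mem_colon.1 hj i hi
  have finJ : length Q (Q ⧸ J) ≠ ⊤ :=
    ne_top_of_le_ne_top h.length_ne_top (hJJ ▸ le_self_add)
  refine (eq_of_le_of_length_quotient_le hle
    (ne_top_of_le_ne_top h.length_ne_top (hJJ ▸ le_add_self)) ?_).symm
  exact (ENat.add_le_add_iff_right finJ).1 (by rw [hIJ, add_comm, hJJ])

end IsArtinGorenstein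

end ArtinGorenstein

section CompatiblePairs

open IsLocalRing Module

variable {Q : Type*} [CommRing Q] {α I J : Ideal Q}

theorem exists_lift_of_injective {M N P : Type*} [AddCommMonoid M] [Module Q M] [AddCommMonoid N]
    [Module Q N] [AddCommMonoid P] [Module Q P] {f : N →ₗ[Q] P} (hf : Function.Injective f)
    {g : M →ₗ[Q] P} (hg : ∀ v, g v ∈ LinearMap.range f) : ∃ l : M →ₗ[Q] N, f ∘ₗ l = g :=
  ⟨(LinearEquiv.ofInjective f hf).symm ∘ₗ g.codRestrict _ hg, LinearMap.ext fun v =>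
    congrArg Subtype.val ((LinearEquiv.ofInjective f hf).apply_symm_apply ⟨g v, hg v⟩)⟩

/-- The product `J × I → α` of two ideals whose product lies in `α`. -/
def mulIdeal (h : J * I ≤ α) : J →ₗ[Q] I →ₗ[Q] α :=
  LinearMap.mk₂ Q (fun j i => ⟨j.1 * i.1, h (Ideal.mul_mem_mul j.2 i.2)⟩)
    (fun _ _ _ => Subtype.ext (add_mul _ _ _)) (fun _ _ _ => Subtype.ext (mul_assoc _ _ _))
    (fun _ _ _ => Subtype.ext (mul_add _ _ _)) (fun _ _ _ => Subtype.ext (mul_left_comm _ _ _))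

/-- The action `J × Q ⧸ I → Q ⧸ α` of an ideal `J` with `J * I ≤ α`. -/
def mulQuotient (h : J * I ≤ α) : J →ₗ[Q] (Q ⧸ I) →ₗ[Q] (Q ⧸ α) where
  toFun j := Submodule.mapQ I α (LinearMap.mulLeft Q j.1)
    fun _ hi => h (Ideal.mul_mem_mul j.2 hi)
  map_add' _ _ := LinearMap.ext fun u => u.inductionOn fun _ =>
    congrArg Submodule.Quotient.mk (add_mul _ _ _)
  map_smul' _ _ := LinearMap.ext fun u => u.inductionOn fun _ =>
    congrArg Submodule.Quotient.mk (mul_assoc _ _ _)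

theorem mulQuotient_factor (h : J * I ≤ α) (hI : α ≤ I) (j : J) (u : Q ⧸ α) :
    mulQuotient h j (Submodule.factor hI u) = j.1 • u := by
  obtain ⟨r, rfl⟩ := Submodule.Quotient.mk_surjective _ u
  rfl

theorem mulQuotient_of_mem (h : J * I ≤ α) {j : J} (hj : j.1 ∈ α) (u : Q ⧸ I) :
    mulQuotient h j u = 0 := by
  obtain ⟨r, rfl⟩ := Submodule.Quotient.mk_surjective _ u
  exact (Submodule.Quotient.mk_eq_zero α).2 (α.mul_mem_right _ hj)

theorem injective_flip_mulQuotient (h : J * I ≤ α) (hI : Submodule.colon α J ≤ I) :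
    Function.Injective (mulQuotient h).flip := by
  rw [injective_iff_map_eq_zero]
  intro u hu
  obtain ⟨r, rfl⟩ := Submodule.Quotient.mk_surjective _ u
  refine (Submodule.Quotient.mk_eq_zero I).2 (hI (Submodule.mem_colon.2 fun j hj => ?_))
  rw [smul_eq_mul, mul_comm]
  exact (Submodule.Quotient.mk_eq_zero α).1 (LinearMap.congr_fun hu ⟨j, hj⟩)

/-- First-order deformations of the flag `α ≤ I`: pairs of maps `α → Q ⧸ α` and `I → Q ⧸ I` that
agree as maps `α → Q ⧸ I`. -/
def compatiblePairs (hI : α ≤ I) : Submodule Q ((α →ₗ[Q] Q ⧸ α) × (I →ₗ[Q] Q ⧸ I)) :=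
  LinearMap.ker ((LinearMap.compRight Q (Submodule.factor hI)).coprod
    (-LinearMap.lcomp Q (Q ⧸ I) (Submodule.inclusion hI)))

theorem mem_compatiblePairs {hI : α ≤ I} {p : (α →ₗ[Q] Q ⧸ α) × (I →ₗ[Q] Q ⧸ I)} :
    p ∈ compatiblePairs hI ↔ ∀ a : α, Submodule.factor hI (p.1 a) = p.2 ⟨a.1, hI a.2⟩ := by
  simp only [compatiblePairs, LinearMap.mem_ker, LinearMap.ext_iff, LinearMap.coprod_apply,
    LinearMap.neg_apply, ← sub_eq_add_neg, sub_eq_zero]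
  rfl

/-- The map `(j, i) ↦ f (j i) - j g(i)`. When `J` is linked to `I` by `α` and `(f, g)` is a
compatible pair, this is `i h(j)` for a unique `h : J → Q ⧸ J`. -/
def leibnizDefect (h : J * I ≤ α) :
    ((α →ₗ[Q] Q ⧸ α) × (I →ₗ[Q] Q ⧸ I)) →ₗ[Q] J →ₗ[Q] I →ₗ[Q] Q ⧸ α where
  toFun p := (mulIdeal h).compr₂ p.1 - (mulQuotient h).compl₂ p.2
  map_add' p q := by ext j i; simp; abel
  map_smul' r p := by ext j i; simp [smul_sub]

theorem leibnizDefect_apply (h : J * I ≤ α) (p : (α →ₗ[Q] Q ⧸ α) × (I →ₗ[Q] Q ⧸ I)) (j : J)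
    (i : I) : leibnizDefect h p j i = p.1 (mulIdeal h j i) - mulQuotient h j (p.2 i) := rfl

theorem leibnizDefect_of_mem_right (h : J * I ≤ α) {hI : α ≤ I}
    {p : (α →ₗ[Q] Q ⧸ α) × (I →ₗ[Q] Q ⧸ I)} (hp : p ∈ compatiblePairs hI) (j : J) {i : I}
    (hi : i.1 ∈ α) : leibnizDefect h p j i = 0 := by
  have hji : mulIdeal h j i = j.1 • ⟨i.1, hi⟩ := rfl
  rw [leibnizDefect_apply, hji, map_smul, ← mem_compatiblePairs.1 hp ⟨i.1, hi⟩,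
    mulQuotient_factor, sub_self]

theorem leibnizDefect_of_mem_left (h : J * I ≤ α) (p : (α →ₗ[Q] Q ⧸ α) × (I →ₗ[Q] Q ⧸ I))
    {j : J} (hj : j.1 ∈ α) (i : I) : leibnizDefect h p j i = i.1 • p.1 ⟨j.1, hj⟩ := by
  have hji : mulIdeal h j i = i.1 • ⟨j.1, hj⟩ := Subtype.ext (mul_comm _ _)
  rw [leibnizDefect_apply, mulQuotient_of_mem h hj, sub_zero, hji, map_smul]

variable [IsLocalRing Q]

namespace IsArtinGorenstein

theorem exists_mulQuotient_eq_leibnizDefect (hα : IsArtinGorenstein α) (hI : α ≤ I)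
    (h : J * I ≤ α) (h' : I * J ≤ α) (hJ : Submodule.colon α I ≤ J) :
    ∃ T : compatiblePairs hI →ₗ[Q] J →ₗ[Q] Q ⧸ J,
      ∀ p j i, mulQuotient h' i (T p j) = leibnizDefect h p.1 j i := by
  have hinj := injective_flip_mulQuotient h' hJ
  have hrange (p : compatiblePairs hI) (j : J) :
      leibnizDefect h p.1 j ∈ LinearMap.range (mulQuotient h').flip := by
    obtain ⟨s, hs⟩ := hα.exists_eq_mul (φ := leibnizDefect h p.1 j)
      fun i hi => leibnizDefect_of_mem_right h p.2 j hi
    exact ⟨Submodule.Quotient.mk s, LinearMap.ext fun i => (hs i).symm⟩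
  let postcomp : (J →ₗ[Q] Q ⧸ J) →ₗ[Q] (J →ₗ[Q] I →ₗ[Q] Q ⧸ α) :=
    LinearMap.compRight Q (mulQuotient h').flip
  have hpostcomp : Function.Injective postcomp := fun _ _ hlm =>
    LinearMap.ext fun j => hinj (LinearMap.congr_fun hlm j)
  have hlift (p) : (leibnizDefect h).domRestrict (compatiblePairs hI) p ∈
      LinearMap.range postcomp := exists_lift_of_injective hinj (hrange p)
  obtain ⟨T, hT⟩ := exists_lift_of_injective hpostcomp hlift
  exact ⟨T, fun p j i => LinearMap.congr_fun (LinearMap.congr_fun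
    (LinearMap.congr_fun hT p) j) i⟩

theorem length_compatiblePairs_le (hα : IsArtinGorenstein α) (hI : α ≤ I) (hJ : α ≤ J)
    (hJI : J = Submodule.colon α I) (hIJ : I = Submodule.colon α J) :
    length Q (compatiblePairs hI) ≤ length Q (compatiblePairs hJ) := by
  have h : J * I ≤ α := by
    conv_lhs => rw [hJI]
    exact Ideal.mul_le.2 fun j hj i hi => Submodule.mem_colon.1 hj i hi
  have h' : I * J ≤ α := mul_comm J I ▸ h
  obtain ⟨T, hT⟩ := hα.exists_mulQuotient_eq_leibnizDefect hI h h' hJI.ge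
  have hmem (p : compatiblePairs hI) : (p.1.1, T p) ∈ compatiblePairs hJ := by
    refine mem_compatiblePairs.2 fun a => injective_flip_mulQuotient h' hJI.ge ?_
    ext i
    rw [LinearMap.flip_apply, LinearMap.flip_apply, hT, leibnizDefect_of_mem_left h _ a.2,
      mulQuotient_factor]
  refine length_le_of_injective (LinearMap.codRestrict (compatiblePairs hJ)
    (((LinearMap.fst Q _ _) ∘ₗ (compatiblePairs hI).subtype).prod T) hmem) ?_
  rw [injective_iff_map_eq_zero]
  intro p hp
  have hf : p.1.1 = 0 := congrArg (Prod.fst ∘ Subtype.val) hp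
  have hTp : T p = 0 := congrArg (Prod.snd ∘ Subtype.val) hp
  have hg : p.1.2 = 0 := LinearMap.ext fun i => injective_flip_mulQuotient h hIJ.ge <|
    LinearMap.ext fun j => by
      have := hT p j i
      rw [hTp, leibnizDefect_apply, hf] at this
      simpa using this.symm
  exact Subtype.ext (Prod.ext hf hg)

theorem length_compatiblePairs_colon (hα : IsArtinGorenstein α) (hI : α ≤ I) (hJ : α ≤ J)
    (hJI : J = Submodule.colon α I) :
    length Q (compatiblePairs hI) = length Q (compatiblePairs hJ) := by
  have hIJ : I = Submodule.colon α J := by rw [hJI, hα.colon_colon hI]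
  exact (hα.length_compatiblePairs_le hI hJ hJI hIJ).antisymm
    (hα.length_compatiblePairs_le hJ hI hIJ hJI)

end IsArtinGorenstein

end CompatiblePairs

section Syzygies

open Module

variable {Q : Type*} [CommRing Q] {ι : Type*} {g : ι → Q} {α I J : Ideal Q}
  {M N : Type*} [AddCommGroup M] [Module Q M] [AddCommGroup N] [Module Q N]

/-- All coefficients of all syzygies of the family `g` lie in `J`. -/
def SyzygiesIn [Fintype ι] (g : ι → Q) (J : Ideal Q) : Prop :=
  ∀ v : ι → Q, Fintype.linearCombination Q g v = 0 → ∀ i, v i ∈ J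

theorem RegularTriple.syzygiesIn {a b c : Q} (h : RegularTriple a b c) :
    SyzygiesIn ![a, b, c] (Ideal.span {a, b, c}) := by
  intro v hv
  obtain ⟨p, q, r, h0, h1, h2⟩ := h.exists_koszul_of_syzygy (u := v 0) (v := v 1) (w := v 2) <| by
    simpa [Fintype.linearCombination_apply, Fin.sum_univ_three, mul_comm] using hv
  intro i
  rw [mem_span_triple_iff]
  match i with
  | 0 => exact ⟨0, p, q, by linear_combination h0⟩
  | 1 => exact ⟨-p, 0, r, by linear_combination h1⟩
  | 2 => exact ⟨-q, -r, 0, by linear_combination h2⟩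

theorem span_triple_eq_span_range (a b c : Q) :
    Ideal.span {a, b, c} = Ideal.span (Set.range ![a, b, c]) := by
  rw [Matrix.range_cons, Matrix.range_cons_cons_empty]
  rfl

theorem smul_quotient_eq_zero {j : Q} (hj : j ∈ I) (v : Q ⧸ I) : j • v = 0 :=
  v.inductionOn fun r => (Submodule.Quotient.mk_eq_zero I).2 (I.mul_mem_right r hj)

/-- A map out of the ideal generated by `g`, recorded by its values on the generators. -/
def evalGens (hI : I = Ideal.span (Set.range g)) (N : Type*) [AddCommGroup N] [Module Q N] :
    (I →ₗ[Q] N) →ₗ[Q] ι → N :=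
  LinearMap.pi fun i => LinearMap.applyₗ ⟨g i, hI ▸ Ideal.subset_span ⟨i, rfl⟩⟩

theorem injective_evalGens (hI : I = Ideal.span (Set.range g)) :
    Function.Injective (evalGens hI N) := fun f f' hff' =>
  (Submodule.linearMap_eq_iff_of_eq_span f f' hI).2 <| by
    rintro ⟨_, i, rfl⟩
    exact congrFun hff' i

variable [Fintype ι]

theorem mem_mul_span_range_iff {r : Q} : r ∈ J * Ideal.span (Set.range g) ↔
    ∃ v : ι → Q, (∀ i, v i ∈ J) ∧ Fintype.linearCombination Q g v = r := by
  refine (Submodule.mem_ideal_smul_span_iff_exists_sum J g r).trans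
    ⟨fun ⟨v, hv, h⟩ => ⟨v, hv, ?_⟩, fun ⟨v, hv, h⟩ => ⟨Finsupp.equivFunOnFinite.symm v, hv, ?_⟩⟩
  · rw [← h, Finsupp.sum_fintype _ _ fun i => zero_smul Q (g i), Fintype.linearCombination_apply]
  · rw [← h, Finsupp.sum_fintype _ _ fun i => zero_smul Q (g i), Fintype.linearCombination_apply]
    rfl

namespace SyzygiesIn

theorem exists_evalGens_eq (h : SyzygiesIn g J) (hI : I = Ideal.span (Set.range g)) {n : ι → N}
    (hn : ∀ j ∈ J, ∀ i, j • n i = 0) : ∃ f, evalGens hI N f = n := by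
  classical
  obtain ⟨f, hf⟩ := exists_comp_rangeRestrict_eq (Fintype.linearCombination Q g)
    (φ := Fintype.linearCombination Q n) fun v hv => Finset.sum_eq_zero fun i _ =>
      hn _ (h v hv i) i
  have hrange : I = LinearMap.range (Fintype.linearCombination Q g) := by
    rw [hI, Fintype.range_linearCombination]
  subst hrange
  refine ⟨f, funext fun i => Eq.trans (congrArg f ?_) ((hf (Pi.single i 1)).trans ?_)⟩
  · exact Subtype.ext (by simp)
  · simp

theorem length_linearMap (h : SyzygiesIn g J) (hI : I = Ideal.span (Set.range g))
    (hN : ∀ j ∈ J, ∀ v : N, j • v = 0) :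
    length Q (I →ₗ[Q] N) = Fintype.card ι * length Q N := by
  have hbij : Function.Bijective (evalGens hI N) :=
    ⟨injective_evalGens hI, fun n => h.exists_evalGens_eq hI fun j hj i => hN j hj (n i)⟩
  rw [(LinearEquiv.ofBijective _ hbij).length_eq, length_pi, ENat.card_eq_coe_fintype_card]

theorem card_mul_length_le (h : SyzygiesIn g J) (hI : I = Ideal.span (Set.range g))
    {N : Submodule Q M} (hN : ∀ j ∈ J, ∀ v ∈ N, j • v = 0) :
    Fintype.card ι * length Q N ≤ length Q (I →ₗ[Q] M) := by
  rw [← h.length_linearMap hI (N := N) fun j hj v => Subtype.ext (hN j hj v v.2)]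
  refine length_le_of_injective (LinearMap.compRight Q N.subtype) fun f f' hff' => ?_
  exact LinearMap.ext fun v => Subtype.ext (LinearMap.congr_fun hff' v)

theorem length_quotient_mul (h : SyzygiesIn g J) (hI : I = Ideal.span (Set.range g)) :
    length Q (Q ⧸ J * I) = Fintype.card ι * length Q (Q ⧸ J) + length Q (Q ⧸ I) := by
  classical
  let f : (ι → Q) →ₗ[Q] Q ⧸ J * I := (J * I).mkQ ∘ₗ Fintype.linearCombination Q g
  have hrange : LinearMap.range f = imageQuotient (J * I) I := by
    rw [LinearMap.range_comp, imageQuotient, LinearMap.range_comp, Submodule.range_subtype,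
      Fintype.range_linearCombination, hI]
  have hker : LinearMap.ker f = Submodule.pi Set.univ fun _ => J := by
    ext v
    rw [LinearMap.mem_ker, LinearMap.comp_apply, Submodule.mkQ_apply,
      Submodule.Quotient.mk_eq_zero, hI, mem_mul_span_range_iff, Submodule.mem_pi]
    refine ⟨fun ⟨w, hw, hwv⟩ i _ => ?_, fun hv => ⟨v, fun i => hv i trivial, rfl⟩⟩
    exact (J.sub_mem_iff_left (hw i)).1 (h (v - w) (by rw [map_sub, hwv, sub_self]) i)
  rw [← length_imageQuotient_add (Ideal.mul_le_right (I := J) (J := I)), ← hrange,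
    ← f.quotKerEquivRange.length_eq, hker, (Submodule.quotientPi _).length_eq, length_pi,
    ENat.card_eq_coe_fintype_card]

theorem length_compatiblePairs (h : SyzygiesIn g α) (hα : α = Ideal.span (Set.range g))
    (hI : α ≤ I) :
    Fintype.card ι * length Q (Q ⧸ α) + length Q (I →ₗ[Q] Q ⧸ I) =
      length Q (compatiblePairs hI) + Fintype.card ι * length Q (Q ⧸ I) := by
  let D : ((α →ₗ[Q] Q ⧸ α) × (I →ₗ[Q] Q ⧸ I)) →ₗ[Q] (α →ₗ[Q] Q ⧸ I) :=
    (LinearMap.compRight Q (Submodule.factor hI)).coprod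
      (-LinearMap.lcomp Q (Q ⧸ I) (Submodule.inclusion hI))
  have hD : LinearMap.range D = ⊤ := LinearMap.range_eq_top.2 fun φ => by
    choose n hn using fun i => Submodule.factor_surjective hI (evalGens hα _ φ i)
    obtain ⟨f, rfl⟩ := h.exists_evalGens_eq hα fun j hj i => smul_quotient_eq_zero hj (n i)
    refine ⟨(f, 0), ?_⟩
    rw [LinearMap.coprod_apply, map_zero, add_zero]
    exact injective_evalGens hα (funext hn)
  rw [← h.length_linearMap hα fun j hj v => smul_quotient_eq_zero hj v,
    ← h.length_linearMap hα fun j hj v => smul_quotient_eq_zero (hI hj) v, ← length_prod,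
    length_eq_length_ker_add_length_range D, hD, length_top]
  rfl

end SyzygiesIn

end Syzygies

section ExpectedTangentLength

open IsLocalRing Module

variable {Q : Type*} [CommRing Q] {a b c x y z : Q} {I : Ideal Q}

/-- The tangent space `Hom(I, Q ⧸ I)` of the punctual Hilbert scheme at `I` has the length it has
for a complete intersection in dimension three. -/
def HasExpectedTangentLength (I : Ideal Q) : Prop :=
  length Q (Q ⧸ I) ≠ ⊤ ∧ length Q (I →ₗ[Q] Q ⧸ I) = 3 * length Q (Q ⧸ I)

theorem hasExpectedTangentLength_top : HasExpectedTangentLength (⊤ : Ideal Q) := by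
  have : Subsingleton (Q ⧸ (⊤ : Ideal Q)) := Submodule.Quotient.subsingleton_iff.2 rfl
  simp [HasExpectedTangentLength]

variable [IsLocalRing Q] [IsNoetherianRing Q]

namespace RegularTriple

theorem isArtinGorenstein (h : RegularTriple a b c) (ha : a ∈ maximalIdeal Q)
    (hb : b ∈ maximalIdeal Q) (hc : c ∈ maximalIdeal Q) (hx : RegularTriple x y z)
    (hmax : maximalIdeal Q = Ideal.span {x, y, z}) : IsArtinGorenstein (Ideal.span {a, b, c}) :=
  ⟨h.socleLeOne_quotient hx hmax, h.length_quotient_ne_top ha hb hc hx hmax⟩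

theorem hasExpectedTangentLength_span (h : RegularTriple a b c) (ha : a ∈ maximalIdeal Q)
    (hb : b ∈ maximalIdeal Q) (hc : c ∈ maximalIdeal Q) (hx : RegularTriple x y z)
    (hmax : maximalIdeal Q = Ideal.span {x, y, z}) :
    HasExpectedTangentLength (Ideal.span {a, b, c}) :=
  ⟨h.length_quotient_ne_top ha hb hc hx hmax, h.syzygiesIn.length_linearMap
    (span_triple_eq_span_range a b c) fun _ hj v => smul_quotient_eq_zero hj v⟩

theorem hasExpectedTangentLength_of_colon (h : RegularTriple a b c) (ha : a ∈ maximalIdeal Q)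
    (hb : b ∈ maximalIdeal Q) (hc : c ∈ maximalIdeal Q) (hx : RegularTriple x y z)
    (hmax : maximalIdeal Q = Ideal.span {x, y, z}) (hI : Ideal.span {a, b, c} ≤ I)
    (hJ : HasExpectedTangentLength (Submodule.colon (Ideal.span {a, b, c}) I : Ideal Q)) :
    HasExpectedTangentLength I := by
  set J : Ideal Q := Submodule.colon (Ideal.span {a, b, c}) I with hJI
  have hG := h.isArtinGorenstein ha hb hc hx hmax
  have hαJ : Ideal.span {a, b, c} ≤ J := span_triple_le_colon
  have hα := span_triple_eq_span_range a b c
  have hIpairs := h.syzygiesIn.length_compatiblePairs hα hI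
  have hJpairs := h.syzygiesIn.length_compatiblePairs hα hαJ
  rw [hG.length_compatiblePairs_colon hI hαJ hJI] at hIpairs
  simp only [Fintype.card_fin] at hIpairs hJpairs
  have h3 {l : ℕ∞} (hl : l ≠ ⊤) : 3 * l ≠ ⊤ := WithTop.mul_ne_top (ENat.natCast_ne_top 3) hl
  rw [hJ.2] at hJpairs
  rw [← (ENat.add_left_injective_of_ne_top (h3 hJ.1)) hJpairs] at hIpairs
  exact ⟨ne_top_of_le_ne_top hG.length_ne_top (length_le_of_surjective _
      (Submodule.factor_surjective hI)),
    ENat.add_right_injective_of_ne_top (h3 hG.length_ne_top) hIpairs⟩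

end RegularTriple

end ExpectedTangentLength

section BaseIdealLengths

open IsLocalRing Module

variable {Q : Type*} [CommRing Q] {x y z : Q} {α I J : Ideal Q}

theorem smul_imageQuotient_eq_zero (h : J * I ≤ α) {j : Q} (hj : j ∈ J) {v : Q ⧸ α}
    (hv : v ∈ imageQuotient α I) : j • v = 0 := by
  obtain ⟨i, rfl⟩ := hv
  exact (Submodule.Quotient.mk_eq_zero α).2 (h (Ideal.mul_mem_mul hj i.2))

theorem NullHomotopies.syzygiesIn {m n l : ℕ} {g : Fin m → Q} {D₂ : Matrix (Fin m) (Fin n) Q}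
    {D₃ : Matrix (Fin n) (Fin l) Q} {s : Fin 3 → Fin m} {H₁ : Fin 3 → Matrix (Fin n) (Fin m) Q}
    {H₂ : Fin 3 → Matrix (Fin l) (Fin n) Q} (h : NullHomotopies g D₂ D₃ s H₁ H₂)
    (hr : RegularTriple (g (s 0)) (g (s 1)) (g (s 2))) (hD₂ : ∀ i j, D₂ i j ∈ J) :
    SyzygiesIn g J := by
  intro v hv i
  obtain ⟨w, rfl⟩ := (h.exact_linearCombination hr v).1 hv
  exact J.sum_mem (t := Finset.univ) fun j _ => J.mul_mem_right (w j) (hD₂ i j)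

theorem map_cubicGens {R : Type*} [CommRing R] (f : Q →+* R) (i : Fin 5) :
    f (cubicGens x y z i) = cubicGens (f x) (f y) (f z) i := by
  fin_cases i <;> simp [cubicGens]

theorem map_squareGens {R : Type*} [CommRing R] (f : Q →+* R) (i : Fin 6) :
    f (squareGens x y z i) = squareGens (f x) (f y) (f z) i := by
  fin_cases i <;> simp [squareGens]

theorem span_range_squareGens (x y z : Q) :
    Ideal.span {x, y, z} ^ 2 = Ideal.span (Set.range (squareGens x y z)) := by
  have hmem (i) : squareGens x y z i ∈ Ideal.span (Set.range (squareGens x y z)) :=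
    Ideal.subset_span ⟨i, rfl⟩
  apply le_antisymm
  · rw [pow_two, Ideal.span_mul_span', Ideal.span_le]
    rintro _ ⟨a, ha | ha | ha, b, hb | hb | hb, rfl⟩ <;> subst a b
    all_goals simp only [SetLike.mem_coe]
    · simpa [squareGens, pow_two] using hmem 0
    · simpa [squareGens, pow_two] using hmem 3
    · simpa [squareGens, pow_two] using hmem 4
    · simpa [squareGens, pow_two, mul_comm] using hmem 3
    · simpa [squareGens, pow_two] using hmem 1
    · simpa [squareGens, pow_two] using hmem 5
    · simpa [squareGens, pow_two, mul_comm] using hmem 4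
    · simpa [squareGens, pow_two, mul_comm] using hmem 5
    · simpa [squareGens, pow_two] using hmem 2
  · rw [Ideal.span_le]
    rintro _ ⟨i, rfl⟩
    exact squareGens_mem_sq (Ideal.subset_span (by simp)) (Ideal.subset_span (by simp))
      (Ideal.subset_span (by simp)) i

theorem squareGens_mul_squareGens_eq_zero (h : ∀ i, cubicGens x y z i = 0) (i j : Fin 6) :
    squareGens x y z i * squareGens x y z j = 0 := by
  have hx : x ^ 3 = 0 := h 0
  have hy : y ^ 3 = 0 := h 1
  have hz : z ^ 3 = 0 := h 2
  have hxyz : x * y * z = 0 := h 3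
  have hq : x ^ 2 * y + x * z ^ 2 + y ^ 2 * z = 0 := h 4
  have hxy : x ^ 2 * y ^ 2 = 0 := by linear_combination y * hq - z * hxyz - z * hy
  have hxz : x ^ 2 * z ^ 2 = 0 := by linear_combination x * hq - y * hxyz - y * hx
  have hyz : y ^ 2 * z ^ 2 = 0 := by linear_combination z * hq - x * hxyz - x * hz
  clear h hq
  fin_cases i <;> fin_cases j <;> simp [squareGens] <;> grind

theorem sq_mul_sq_le_span_cubicGens (x y z : Q) : Ideal.span {x, y, z} ^ 2 *
    Ideal.span {x, y, z} ^ 2 ≤ Ideal.span (Set.range (cubicGens x y z)) := by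
  let π := Ideal.Quotient.mk (Ideal.span (Set.range (cubicGens x y z)))
  have hπ (i) : cubicGens (π x) (π y) (π z) i = 0 := by
    rw [← map_cubicGens]
    exact Ideal.Quotient.eq_zero_iff_mem.2 (Ideal.subset_span ⟨i, rfl⟩)
  rw [span_range_squareGens, Ideal.span_mul_span', Ideal.span_le]
  rintro _ ⟨_, ⟨i, rfl⟩, _, ⟨j, rfl⟩, rfl⟩
  refine Ideal.Quotient.eq_zero_iff_mem.1 ?_
  rw [map_mul, map_squareGens, map_squareGens, squareGens_mul_squareGens_eq_zero hπ]

variable [IsLocalRing Q]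

theorem length_quotient_maximalIdeal : length Q (Q ⧸ maximalIdeal Q) = 1 := by
  have : IsSimpleModule Q (Q ⧸ maximalIdeal Q) :=
    isSimpleModule_iff_isCoatom.2 (maximalIdeal.isMaximal Q).out
  exact length_eq_one Q _

namespace RegularTriple

theorem length_quotient_sq (h : RegularTriple x y z)
    (hmax : maximalIdeal Q = Ideal.span {x, y, z}) : length Q (Q ⧸ maximalIdeal Q ^ 2) = 4 := by
  have hlen := h.syzygiesIn.length_quotient_mul (span_triple_eq_span_range x y z)
  rw [← hmax, length_quotient_maximalIdeal, ← pow_two] at hlen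
  rw [hlen]
  norm_num

variable [IsNoetherianRing Q]

theorem syzygiesIn_squareGens (h : RegularTriple x y z)
    (hmax : maximalIdeal Q = Ideal.span {x, y, z}) :
    SyzygiesIn (squareGens x y z) (maximalIdeal Q) := by
  have hx : x ∈ maximalIdeal Q := hmax ▸ Ideal.subset_span (by simp)
  have hy : y ∈ maximalIdeal Q := hmax ▸ Ideal.subset_span (by simp)
  have hz : z ∈ maximalIdeal Q := hmax ▸ Ideal.subset_span (by simp)
  exact (nullHomotopies_square x y z).syzygiesIn
    (h.pow hx hy hz one_le_two one_le_two one_le_two) (squareD₂_mem hx hy hz)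

theorem syzygiesIn_cubicGens (h : RegularTriple x y z)
    (hmax : maximalIdeal Q = Ideal.span {x, y, z}) :
    SyzygiesIn (cubicGens x y z) (maximalIdeal Q ^ 2) := by
  have hx : x ∈ maximalIdeal Q := hmax ▸ Ideal.subset_span (by simp)
  have hy : y ∈ maximalIdeal Q := hmax ▸ Ideal.subset_span (by simp)
  have hz : z ∈ maximalIdeal Q := hmax ▸ Ideal.subset_span (by simp)
  exact (nullHomotopies_cubic x y z).syzygiesIn
    (h.pow hx hy hz (by simp) (by simp) (by simp)) (cubicD₂_mem_sq hx hy hz)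

theorem length_quotient_cube (h : RegularTriple x y z)
    (hmax : maximalIdeal Q = Ideal.span {x, y, z}) : length Q (Q ⧸ maximalIdeal Q ^ 3) = 10 := by
  have hlen := (h.syzygiesIn_squareGens hmax).length_quotient_mul rfl
  rw [← span_range_squareGens, ← hmax, length_quotient_maximalIdeal, h.length_quotient_sq hmax,
    ← pow_succ'] at hlen
  rw [hlen]
  norm_num

-- If `x ^ 2 * y` were a combination of the generators, the coefficient `v 4` of the last one
-- would be `1` modulo the maximal ideal (compare `x ^ 2 * y`) and also `0` (compare `y ^ 2 * z`).
theorem sq_mul_notMem_span_cubicGens (h : RegularTriple x y z)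
    (hx : x ∈ maximalIdeal Q) (hy : y ∈ maximalIdeal Q) (hz : z ∈ maximalIdeal Q) :
    x ^ 2 * y ∉ Ideal.span (Set.range (cubicGens x y z)) := by
  intro hmem
  obtain ⟨v, hv⟩ := (Ideal.mem_span_range_iff_exists_fun).1 hmem
  simp only [cubicGens, Fin.sum_univ_five, Matrix.cons_val] at hv
  have hyzx := h.rotate hx hy hz
  have hzxy := hyzx.rotate hy hz hx
  have hone_sub : 1 - v 4 ∈ maximalIdeal Q := by
    have hreg := hyzx.pow hy hz hx (i := 3) (j := 1) (l := 2) (by simp) le_rfl (by simp)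
    obtain ⟨u₁, u₂, hu⟩ := hreg.exists_eq_add (y * (1 - v 4) - x * v 0) (v 1)
      (z ^ 2 * v 2 + x * y * v 3 + (x * z + y ^ 2) * v 4) (by linear_combination -hv)
    obtain ⟨u₃, u₄, hu'⟩ := hzxy.exists_eq_add (1 - v 4 - y ^ 2 * u₁) u₂ (v 0)
      (by linear_combination hu)
    rw [show 1 - v 4 = y * (y * u₁) + (z * u₃ + x * u₄) by linear_combination hu']
    exact add_mem (Ideal.mul_mem_right _ _ hy)
      (add_mem (Ideal.mul_mem_right _ _ hz) (Ideal.mul_mem_right _ _ hx))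
  have hv4 : v 4 ∈ maximalIdeal Q := by
    have hreg := hzxy.pow hz hx hy (i := 3) (j := 1) (l := 2) (by simp) le_rfl (by simp)
    obtain ⟨u₁, u₂, hu⟩ := hreg.exists_eq_add (z * v 4 + y * v 1) (-v 2)
      (x * y * (1 - v 4) - x ^ 2 * v 0 - y * z * v 3 - z ^ 2 * v 4) (by linear_combination hv)
    obtain ⟨u₃, u₄, hu'⟩ := h.exists_eq_add (v 4 - z ^ 2 * u₁) u₂ (-v 1)
      (by linear_combination hu)
    rw [show v 4 = z * (z * u₁) + (x * u₃ + y * u₄) by linear_combination hu']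
    exact add_mem (Ideal.mul_mem_right _ _ hz)
      (add_mem (Ideal.mul_mem_right _ _ hx) (Ideal.mul_mem_right _ _ hy))
  exact (Ideal.ne_top_iff_one _).1 (maximalIdeal.isMaximal Q).ne_top
    (sub_add_cancel 1 (v 4) ▸ add_mem hone_sub hv4)

theorem not_hasExpectedTangentLength_square (h : RegularTriple x y z)
    (hmax : maximalIdeal Q = Ideal.span {x, y, z}) :
    ¬ HasExpectedTangentLength (Ideal.span (Set.range (squareGens x y z))) := by
  rw [← span_range_squareGens, ← hmax]
  rintro ⟨-, htangent⟩
  have hlen := length_imageQuotient_add (Ideal.pow_le_self (I := maximalIdeal Q) two_ne_zero)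
  have hbound := (h.syzygiesIn_squareGens hmax).card_mul_length_le
    (I := maximalIdeal Q ^ 2) (hmax ▸ span_range_squareGens x y z)
    (N := imageQuotient (maximalIdeal Q ^ 2) (maximalIdeal Q))
    fun _ hj _ hv => smul_imageQuotient_eq_zero (pow_two (maximalIdeal Q)).ge hj hv
  rw [length_quotient_maximalIdeal, h.length_quotient_sq hmax] at hlen
  rw [htangent, h.length_quotient_sq hmax] at hbound
  generalize length Q (imageQuotient (maximalIdeal Q ^ 2) _) = s at hlen hbound
  lift s to ℕ using by rintro rfl; simp at hlen
  simp only [Fintype.card_fin] at hbound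
  norm_cast at hlen hbound
  lia

theorem not_hasExpectedTangentLength_cubic (h : RegularTriple x y z)
    (hmax : maximalIdeal Q = Ideal.span {x, y, z}) :
    ¬ HasExpectedTangentLength (Ideal.span (Set.range (cubicGens x y z))) := by
  have hx : x ∈ maximalIdeal Q := hmax ▸ Ideal.subset_span (by simp)
  have hy : y ∈ maximalIdeal Q := hmax ▸ Ideal.subset_span (by simp)
  have hz : z ∈ maximalIdeal Q := hmax ▸ Ideal.subset_span (by simp)
  set A := Ideal.span (Set.range (cubicGens x y z)) with hA
  rintro ⟨hfin, htangent⟩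
  have hcube : A ≤ maximalIdeal Q ^ 3 := by
    rw [hA, Ideal.span_le]
    rintro _ ⟨i, rfl⟩
    exact cubicGens_mem_cube hx hy hz i
  have hsq_mul_sq : maximalIdeal Q ^ 2 * maximalIdeal Q ^ 2 ≤ A :=
    hmax ▸ sq_mul_sq_le_span_cubicGens x y z
  have hlen := length_imageQuotient_add (hcube.trans (Ideal.pow_le_pow_right (by simp : 2 ≤ 3)))
  have hbound := (h.syzygiesIn_cubicGens hmax).card_mul_length_le hA
    (N := imageQuotient A (maximalIdeal Q ^ 2))
    fun _ hj _ hv => smul_imageQuotient_eq_zero hsq_mul_sq hj hv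
  have hle : length Q (Q ⧸ A) ≤ length Q (Q ⧸ maximalIdeal Q ^ 3) := by
    rw [h.length_quotient_cube hmax]
    rw [htangent, ← hlen, h.length_quotient_sq hmax] at hbound
    rw [← hlen, h.length_quotient_sq hmax] at hfin ⊢
    generalize length Q (imageQuotient A _) = s at hfin hbound ⊢
    lift s to ℕ using by rintro rfl; simp at hfin
    simp only [Fintype.card_fin] at hbound
    norm_cast at hbound ⊢
    lia
  have heq : A = maximalIdeal Q ^ 3 := eq_of_le_of_length_quotient_le hcube
    (by simp [h.length_quotient_cube hmax]) hle
  refine h.sq_mul_notMem_span_cubicGens hx hy hz ?_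
  rw [← hA, heq, pow_succ]
  exact Ideal.mul_mem_mul (Ideal.pow_mem_pow hx 2) hy

end RegularTriple

end BaseIdealLengths

section Localization

open IsLocalRing

variable {Q B : Type*} [CommRing Q] [CommRing B] {I α : Ideal Q}

theorem map_span_triple (f : Q →+* B) (a b c : Q) :
    (Ideal.span {a, b, c}).map f = Ideal.span {f a, f b, f c} := by
  rw [Ideal.map_span, Set.image_insert_eq, Set.image_pair]

theorem map_span_range_cubicGens (f : Q →+* B) (x y z : Q) :
    (Ideal.span (Set.range (cubicGens x y z))).map f =
      Ideal.span (Set.range (cubicGens (f x) (f y) (f z))) := by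
  rw [Ideal.map_span, ← Set.range_comp]
  exact congrArg (fun g => Ideal.span (Set.range g)) (funext (map_cubicGens f))

theorem map_span_range_squareGens (f : Q →+* B) (x y z : Q) :
    (Ideal.span (Set.range (squareGens x y z))).map f =
      Ideal.span (Set.range (squareGens (f x) (f y) (f z))) := by
  rw [Ideal.map_span, ← Set.range_comp]
  exact congrArg (fun g => Ideal.span (Set.range g)) (funext (map_squareGens f))

theorem map_colon_le (f : Q →+* B) :
    Ideal.map f (Submodule.colon α I) ≤ Submodule.colon (α.map f) (I.map f) := by
  refine fun r hr => Submodule.mem_colon.2 fun i hi => ?_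
  have hri := Ideal.mul_mem_mul hr hi
  rw [← Ideal.map_mul] at hri
  exact Ideal.map_mono (Ideal.mul_le.2 fun r hr i hi => Submodule.mem_colon.1 hr i hi) hri

variable [Algebra Q B]

theorem RegularTriple.of_isLocalization {a b c : Q} (h : RegularTriple a b c)
    (M : Submonoid Q) [IsLocalization M B] :
    RegularTriple (algebraMap Q B a) (algebraMap Q B b) (algebraMap Q B c) :=
  regularTriple_iff_isWeaklyRegular.2 <|
    (regularTriple_iff_isWeaklyRegular.1 h).of_isLocalization B M

theorem map_colon_of_isLocalization (M : Submonoid Q) [IsLocalization M B] (hI : I.FG) :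
    Ideal.map (algebraMap Q B) (Submodule.colon α I) =
      Submodule.colon (α.map (algebraMap Q B)) (I.map (algebraMap Q B)) := by
  refine (map_colon_le _).antisymm fun r hr => ?_
  obtain ⟨⟨a, s⟩, hs : r * algebraMap Q B s = algebraMap Q B a⟩ := IsLocalization.surj M r
  obtain ⟨S, rfl⟩ := hI
  have hdenom (i : Q) (hi : i ∈ S) : ∃ t ∈ M, t * (a * i) ∈ α := by
    refine (IsLocalization.algebraMap_mem_map_algebraMap_iff M B α _).1 ?_
    have hri := Submodule.mem_colon.1 hr _ (Ideal.mem_map_of_mem _ (Ideal.subset_span hi))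
    convert Ideal.mul_mem_left _ (algebraMap Q B s) hri using 1
    rw [map_mul, ← hs, smul_eq_mul]
    ring
  choose! t htM ht using hdenom
  have hcolon : (∏ i ∈ S, t i) * a ∈ Submodule.colon α (Ideal.span (S : Set Q)) := by
    rw [Ideal.colon_span, Submodule.mem_colon]
    intro i hi
    obtain ⟨u, hu⟩ := Finset.dvd_prod_of_mem t hi
    convert Ideal.mul_mem_left _ u (ht i hi) using 1
    rw [hu, smul_eq_mul]
    ring
  have ha : algebraMap Q B a ∈
      Ideal.map (algebraMap Q B) (Submodule.colon α (Ideal.span (S : Set Q))) :=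
    (IsLocalization.algebraMap_mem_map_algebraMap_iff M B _ _).2 ⟨_, M.prod_mem htM, hcolon⟩
  rw [← hs] at ha
  exact (Ideal.mul_unit_mem_iff_mem _ (IsLocalization.map_units B s)).1 ha

end Localization

section NotLicci

open IsLocalRing

theorem span_triple_eq_top_or_mem_maximalIdeal {B : Type*} [CommRing B] [IsLocalRing B]
    (a b c : B) : Ideal.span {a, b, c} = ⊤ ∨
      a ∈ maximalIdeal B ∧ b ∈ maximalIdeal B ∧ c ∈ maximalIdeal B := by
  refine or_iff_not_imp_left.2 fun h => ?_
  have hle := le_maximalIdeal h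
  exact ⟨hle (Ideal.subset_span (by simp)), hle (Ideal.subset_span (by simp)),
    hle (Ideal.subset_span (by simp))⟩

variable {Q : Type*} [CommRing Q] {I J : Ideal Q}

theorem Licci.of_linked (h : Linked I J) : Licci J → Licci I := fun ⟨C, hC, hreg⟩ =>
  ⟨C, Relation.ReflTransGen.trans h hC, hreg⟩

variable [IsNoetherianRing Q]

section Map

variable {B : Type*} [CommRing B] [Algebra Q B] [IsLocalRing B] [IsNoetherianRing B] {x y z : B}

theorem DirectlyLinked.hasExpectedTangentLength_map (h : DirectlyLinked I J) (M : Submonoid Q)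
    [IsLocalization M B] (hx : RegularTriple x y z) (hmax : maximalIdeal B = Ideal.span {x, y, z})
    (hJ : HasExpectedTangentLength (J.map (algebraMap Q B))) :
    HasExpectedTangentLength (I.map (algebraMap Q B)) := by
  obtain ⟨a, b, c, ha, hb, hc, hreg, rfl⟩ := h
  have hloc := (regularTriple_iff_isWeaklyRegular.2 hreg.toIsWeaklyRegular).of_isLocalization
    (B := B) M
  have hle : Ideal.span {a, b, c} ≤ I := Ideal.span_le.2 (by simp [Set.insert_subset_iff, *])
  have hle' := Ideal.map_mono (f := algebraMap Q B) hle
  rw [map_colon_of_isLocalization M (IsNoetherian.noetherian I), map_span_triple] at hJ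
  rw [map_span_triple] at hle'
  obtain htop | ⟨ha, hb, hc⟩ := span_triple_eq_top_or_mem_maximalIdeal (algebraMap Q B a)
    (algebraMap Q B b) (algebraMap Q B c)
  · rw [htop, top_le_iff] at hle'
    exact hle' ▸ hasExpectedTangentLength_top
  · exact hloc.hasExpectedTangentLength_of_colon ha hb hc hx hmax hle' hJ

theorem Licci.hasExpectedTangentLength_map (h : Licci I) (M : Submonoid Q) [IsLocalization M B]
    (hx : RegularTriple x y z) (hmax : maximalIdeal B = Ideal.span {x, y, z}) :
    HasExpectedTangentLength (I.map (algebraMap Q B)) := by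
  obtain ⟨_, hlinked, a, b, c, hreg, rfl⟩ := h
  induction hlinked using Relation.ReflTransGen.head_induction_on with
  | refl =>
    rw [map_span_triple]
    obtain htop | ⟨ha, hb, hc⟩ := span_triple_eq_top_or_mem_maximalIdeal (algebraMap Q B a)
      (algebraMap Q B b) (algebraMap Q B c)
    · exact htop ▸ hasExpectedTangentLength_top
    · exact ((regularTriple_iff_isWeaklyRegular.2 hreg.toIsWeaklyRegular).of_isLocalization
        M).hasExpectedTangentLength_span ha hb hc hx hmax
  | head hdirect _ ih => exact hdirect.hasExpectedTangentLength_map M hx hmax ih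

end Map

namespace RegularTriple

variable {x y z : Q} [(Ideal.span {x, y, z}).IsPrime]

theorem not_licci_square (h : RegularTriple x y z) :
    ¬ Licci (Ideal.span (Set.range (squareGens x y z))) := by
  intro hlicci
  have hmax := Localization.AtPrime.map_eq_maximalIdeal (I := Ideal.span {x, y, z})
  have hloc := h.of_isLocalization (Ideal.span {x, y, z}).primeCompl
    (B := Localization.AtPrime (Ideal.span {x, y, z}))
  rw [map_span_triple] at hmax
  have htangent := hlicci.hasExpectedTangentLength_map (Ideal.span {x, y, z}).primeCompl hloc
    hmax.symm
  rw [map_span_range_squareGens] at htangent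
  exact hloc.not_hasExpectedTangentLength_square hmax.symm htangent

theorem not_licci_cubic (h : RegularTriple x y z) :
    ¬ Licci (Ideal.span (Set.range (cubicGens x y z))) := by
  intro hlicci
  have hmax := Localization.AtPrime.map_eq_maximalIdeal (I := Ideal.span {x, y, z})
  have hloc := h.of_isLocalization (Ideal.span {x, y, z}).primeCompl
    (B := Localization.AtPrime (Ideal.span {x, y, z}))
  rw [map_span_triple] at hmax
  have htangent := hlicci.hasExpectedTangentLength_map (Ideal.span {x, y, z}).primeCompl hloc
    hmax.symm
  rw [map_span_range_cubicGens] at htangent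
  exact hloc.not_hasExpectedTangentLength_cubic hmax.symm htangent

end RegularTriple

end NotLicci

section Variables

open MvPolynomial

variable {R σ : Type*} [CommRing R]

theorem ker_killCompl_subtypeVal (s : Set σ) :
    RingHom.ker (killCompl (R := R) (Subtype.val_injective (p := (· ∉ s)))) =
      Ideal.span (X '' s) := by
  apply le_antisymm
  · intro p hp
    have hcomp : (Ideal.Quotient.mkₐ R (Ideal.span (X '' s : Set (MvPolynomial σ R)))).comp
        ((rename Subtype.val).comp (killCompl (Subtype.val_injective (p := (· ∉ s))))) =
          Ideal.Quotient.mkₐ R _ := by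
      ext i
      by_cases hi : i ∈ s
      · have hX := Ideal.Quotient.eq_zero_iff_mem.2
          (Ideal.subset_span (Set.mem_image_of_mem (X (R := R)) hi))
        simp [killCompl, hi, hX]
      · have hX := killCompl_rename_app (R := R) (Subtype.val_injective (p := (· ∉ s))) (X ⟨i, hi⟩)
        rw [rename_X] at hX
        simp [hX]
    have hp' := AlgHom.congr_fun hcomp p
    rw [AlgHom.comp_apply, AlgHom.comp_apply, RingHom.mem_ker.1 hp, map_zero, map_zero] at hp'
    exact Ideal.Quotient.eq_zero_iff_mem.1 hp'.symm
  · rw [Ideal.span_le]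
    rintro _ ⟨i, hi, rfl⟩
    simp [killCompl, hi]

theorem isPrime_span_X_image [IsDomain R] (s : Set σ) :
    (Ideal.span (X '' s : Set (MvPolynomial σ R))).IsPrime := by
  rw [← ker_killCompl_subtypeVal]
  exact RingHom.ker_isPrime _

theorem X_notMem_span_X_image [Nontrivial R] {s : Set σ} {i : σ} (hi : i ∉ s) :
    (X i : MvPolynomial σ R) ∉ Ideal.span (X '' s) := by
  simp only [mem_ideal_span_X_image, support_X, Finset.mem_singleton, forall_eq, not_exists,
    not_and, not_not]
  exact fun j hj => Finsupp.single_eq_of_ne fun hji => hi (hji ▸ hj)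

theorem regularTriple_X [IsDomain R] {a b c : σ} (hab : a ≠ b) (hac : a ≠ c) (hbc : b ≠ c) :
    RegularTriple (X a : MvPolynomial σ R) (X b) (X c) where
  eq_zero_of_mul_eq_zero r hr := (mul_eq_zero.1 hr).resolve_left (X_ne_zero a)
  exists_eq_mul r s hrs := by
    have hb := X_notMem_span_X_image (R := R) (s := {a}) (i := b) (by simpa using hab.symm)
    have hmem := ((isPrime_span_X_image {a}).mem_or_mem (x := X b) (y := r) (by
      rw [hrs, Set.image_singleton]
      exact Ideal.mul_mem_right _ _ (Ideal.mem_span_singleton_self _))).resolve_left hb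
    rwa [Set.image_singleton, Ideal.mem_span_singleton] at hmem
  exists_eq_add r s t hrst := by
    have hc := X_notMem_span_X_image (R := R) (s := {a, b}) (i := c)
      (by simp [hac.symm, hbc.symm])
    have hmem := ((isPrime_span_X_image {a, b}).mem_or_mem (x := X c) (y := r) (by
      rw [hrst, Set.image_pair]
      exact Ideal.mem_span_pair.2 ⟨s, t, by ring⟩)).resolve_left hc
    rw [Set.image_pair] at hmem
    obtain ⟨u, v, huv⟩ := Ideal.mem_span_pair.1 hmem
    exact ⟨u, v, by rw [← huv]; ring⟩

end Variables

section Formats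

open IsLocalRing

variable {Q : Type*} [CommRing Q] [IsLocalRing Q]

theorem HasAdaptedResolution.isGrade3PerfectOfFormat {I : Ideal Q} {p n : ℕ}
    (h : HasAdaptedResolution I p n) (hn : 1 ≤ n) : IsGrade3PerfectOfFormat I (p + 3) n := by
  obtain ⟨R, h, hR⟩ := h
  refine ⟨⟨_, _, _, R.d₁_mem _, R.d₁_mem _, R.d₁_mem _, (regularTriple_iff_isRegular
    (R.d₁_mem_maximalIdeal _) (R.d₁_mem_maximalIdeal _) (R.d₁_mem_maximalIdeal _)).1
    hR.regularTriple_d₁⟩, Nat.le_add_left 3 p, hn, ?_⟩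
  let R' := R.congr (.ofFinrankEq _ (Fin (p + 3) → Q) (by simp; lia))
    (.ofFinrankEq _ (Fin (p + 3 + n - 1) → Q) (by simp; lia)) (.refl Q (Fin n → Q))
  exact ⟨R'.d₁, R'.d₂, R'.d₃, R'.range_d₁, R'.exact₁.linearMap_ker_eq.symm,
    R'.exact₂.linearMap_ker_eq.symm, LinearMap.ker_eq_bot.2 R'.injective_d₃, R'.le_maximalIdeal,
    LinearMap.range_le_iff_comap.2 (eq_top_iff.2 fun w _ => R'.d₂_mem w),
    LinearMap.range_le_iff_comap.2 (eq_top_iff.2 fun w _ => R'.d₃_mem w)⟩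

/-- `Q` has a nonlicci ideal with an adapted resolution of format `(1, p + 3, p + n + 2, n)`. In
these coordinates the format is Dynkin exactly when `(p - 1) * (n - 1) < 4`, and a direct link
exchanges `p` and `n`. -/
def HasNonlicciFormat (Q : Type*) [CommRing Q] [IsLocalRing Q] (p n : ℕ) : Prop :=
  ∃ I : Ideal Q, HasAdaptedResolution I p n ∧ ¬ Licci I

variable {p p' n n' : ℕ}

namespace HasNonlicciFormat

theorem swap (h : HasNonlicciFormat Q p n) (hp : 1 ≤ p) : HasNonlicciFormat Q n p := by
  obtain ⟨I, hI, hlicci⟩ := h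
  obtain ⟨I', hI', hlinked⟩ := hI.exists_linked_swap hp
  exact ⟨I', hI', fun h => hlicci (h.of_linked hlinked)⟩

variable [IsNoetherianRing Q]

theorem succ_right (h : HasNonlicciFormat Q p n) (hp : 2 ≤ p) : HasNonlicciFormat Q p (n + 1) := by
  obtain ⟨I, hI, hlicci⟩ := h
  obtain ⟨I', hI', hlinked⟩ := hI.exists_linked_succ hp
  exact ⟨I', hI', fun h => hlicci (h.of_linked hlinked)⟩

theorem mono_right (h : HasNonlicciFormat Q p n) (hp : 2 ≤ p) (hn : n ≤ n') :
    HasNonlicciFormat Q p n' := by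
  induction n', hn using Nat.le_induction with
  | base => exact h
  | succ _ _ ih => exact ih.succ_right hp

theorem mono (h : HasNonlicciFormat Q p n) (hp : 2 ≤ p) (hpp' : p ≤ p') (hn : 2 ≤ n)
    (hnn' : n ≤ n') : HasNonlicciFormat Q p' n' :=
  (((h.mono_right hp hnn').swap (by lia)).mono_right (hn.trans hnn') hpp').swap (by lia)

theorem of_cubic_of_square (hcubic : HasNonlicciFormat Q 2 5) (hsquare : HasNonlicciFormat Q 3 3)
    (h : p + n + 3 ≤ p * n) : HasNonlicciFormat Q p n := by
  have hcases : 2 ≤ p ∧ 5 ≤ n ∨ 3 ≤ p ∧ 3 ≤ n ∨ 5 ≤ p ∧ 2 ≤ n := by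
    by_contra! hsmall
    obtain hp | hp := lt_or_ge p 2
    · interval_cases p <;> lia
    obtain hn | hn := lt_or_ge n 2
    · interval_cases n <;> lia
    obtain rfl | hp := hp.eq_or_lt
    · lia
    obtain rfl | hn := hn.eq_or_lt
    · lia
    · lia
  obtain ⟨hp, hn⟩ | ⟨hp, hn⟩ | ⟨hp, hn⟩ := hcases
  · exact hcubic.mono le_rfl hp (by simp) hn
  · exact hsquare.mono (by simp) hp (by simp) hn
  · exact (hcubic.swap one_le_two).mono (by simp) hp le_rfl hn

end HasNonlicciFormat

theorem RegularTriple.hasNonlicciFormat [IsNoetherianRing Q] {x y z : Q} (h : RegularTriple x y z)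
    (hx : x ∈ maximalIdeal Q) (hy : y ∈ maximalIdeal Q) (hz : z ∈ maximalIdeal Q)
    [(Ideal.span {x, y, z}).IsPrime] (hpn : p + n + 3 ≤ p * n) : HasNonlicciFormat Q p n :=
  .of_cubic_of_square ⟨_, h.hasAdaptedResolution_cubic hx hy hz, h.not_licci_cubic⟩
    ⟨_, h.hasAdaptedResolution_square hx hy hz, h.not_licci_square⟩ hpn

end Formats

theorem stmt_7_general {Q : Type*} [CommRing Q] [IsLocalRing Q] [IsNoetherianRing Q] {x y z : Q}
    (h : RingTheory.Sequence.IsRegular Q [x, y, z]) [(Ideal.span {x, y, z}).IsPrime] {m n : ℕ}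
    (hm : 3 ≤ m) (hn : 1 ≤ n) (hnotDynkin : 2 * (m + n - 1) ≤ (m - 2) * (n + 1)) :
    ∃ I : Ideal Q, IsGrade3PerfectOfFormat I m n ∧ ¬ Licci I := by
  obtain ⟨p, rfl⟩ := Nat.exists_eq_add_of_le' hm
  have hpn : p + n + 3 ≤ p * n := by
    rw [show p + 3 + n - 1 = p + n + 2 by lia, show p + 3 - 2 = p + 1 by lia] at hnotDynkin
    linarith
  obtain ⟨I, hI, hlicci⟩ :=
    (regularTriple_iff_isWeaklyRegular.2 h.toIsWeaklyRegular).hasNonlicciFormat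
      (mem_maximalIdeal_of_isRegular h (by simp)) (mem_maximalIdeal_of_isRegular h (by simp))
      (mem_maximalIdeal_of_isRegular h (by simp)) hpn
  exact ⟨I, hI.isGrade3PerfectOfFormat hn, hlicci⟩

section LocalizedPolynomialRing

open MvPolynomial

theorem exists_isRegular_isPrime_localization {R σ : Type*} [CommRing R] [IsDomain R] {a b c : σ}
    (hab : a ≠ b) (hac : a ≠ c) (hbc : b ≠ c) (𝔪 : Ideal (MvPolynomial σ R)) [𝔪.IsPrime]
    (h𝔪 : ∀ i, X i ∈ 𝔪) :
    ∃ x y z : Localization.AtPrime 𝔪, RingTheory.Sequence.IsRegular (Localization.AtPrime 𝔪)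
      [x, y, z] ∧ (Ideal.span {x, y, z}).IsPrime := by
  let B := Localization.AtPrime 𝔪
  have hmem (i) : algebraMap _ B (X i) ∈ IsLocalRing.maximalIdeal B :=
    (IsLocalization.AtPrime.to_map_mem_maximal_iff B 𝔪 _).2 (h𝔪 i)
  refine ⟨_, _, _, (regularTriple_iff_isRegular (hmem a) (hmem b) (hmem c)).1
    ((regularTriple_X hab hac hbc).of_isLocalization 𝔪.primeCompl), ?_⟩
  have hprime := isPrime_span_X_image (R := R) {a, b, c}
  rw [Set.image_insert_eq, Set.image_pair] at hprime
  rw [← map_span_triple]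
  refine IsLocalization.isPrime_of_isPrime_disjoint 𝔪.primeCompl B _ hprime ?_
  refine Set.disjoint_left.2 fun r hr hr' => hr (?_ : r ∈ 𝔪)
  exact Ideal.span_le.2 (by simp [Set.insert_subset_iff, h𝔪]) hr'

end LocalizedPolynomialRing

/-- **Theorem 2.1.** Let `k` be a field, `e ≥ 3`, and `Q` the localization of the
polynomial ring `k[X₁, …, X_e]` at the maximal ideal `𝔪 = (X₁, …, X_e)`.  For every
resolution format `(1, m, m+n-1, n)` with `m ≥ 3` and `n ≥ 1` that is not Dynkin, i.e.
with `2(m+n-1) ≤ (m-2)(n+1)`, there exists a grade `3` perfect ideal in `Q` of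
resolution format `(1, m, m+n-1, n)` that is not licci.
(The hypothesis `𝔪.IsPrime` is a consequence of `h𝔪` and is recorded only so that the
localization `Localization.AtPrime 𝔪` makes sense.) -/
theorem stmt_7 (k : Type*) [Field k] (e : ℕ) (he : 3 ≤ e)
    (𝔪 : Ideal (MvPolynomial (Fin e) k))
    (h𝔪 : 𝔪 = Ideal.span (Set.range MvPolynomial.X)) [𝔪.IsPrime]
    (m n : ℕ) (hm : 3 ≤ m) (hn : 1 ≤ n)
    (hnotDynkin : 2 * (m + n - 1) ≤ (m - 2) * (n + 1)) :
    ∃ I : Ideal (Localization.AtPrime 𝔪),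
      IsGrade3PerfectOfFormat I m n ∧ ¬ Licci I := by
  obtain ⟨x, y, z, hreg, _⟩ := exists_isRegular_isPrime_localization
    (a := (⟨0, by lia⟩ : Fin e)) (b := ⟨1, by lia⟩) (c := ⟨2, by lia⟩) (by simp) (by simp)
    (by simp) 𝔪 fun i => h𝔪 ▸ Ideal.subset_span ⟨i, rfl⟩
  exact stmt_7_general hreg hm hn hnotDynkin
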